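/- Let t_0 be a fixed real number. There exists a unique probability measure μ = μ(t_0) on [0, ∞) such that for every positive integer k, the averages (1/(p−1)) · Σ'_{χ mod p} |L'(1+it_0, χ)/L(1+it_0, χ)|^{2k} converge, as p → ∞ through prime numbers, to ∫_0^∞ v^k dμ(v); here Σ' denotes summation over all Dirichlet characters χ modulo the prime p, omitting the principal character in the case t_0 = 0. -/

import Mathlib

open Complex MeasureTheory Filter


namespace LD

/-- truncated Dirichlet series -/
noncomputable def P {q : ℕ} (χ : DirichletCharacter ℂ q) (X : ℕ) (s : ℂ) : ℂ :=
  ∑ n ∈ Finset.Icc 1 X, χ n * (n : ℂ) ^ (-s)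

noncomputable def S {q : ℕ} (χ : DirichletCharacter ℂ q) (X : ℕ) : ℂ :=
  ∑ n ∈ Finset.Icc 1 X, χ n

lemma S_eq {q : ℕ} (hq : q ≠ 1) (χ : DirichletCharacter ℂ q) (X : ℕ) :
    S χ X = ∑ n ∈ Finset.range (X + 1), χ n := by
  unfold S
  rw [Finset.sum_range_succ']
  have h0 : χ ((0 : ℕ) : ZMod q) = 0 := by
    simp only [Nat.cast_zero]; exact χ.map_zero' hq
  rw [h0, add_zero, Finset.range_eq_Ico, Finset.sum_Ico_add' (fun n : ℕ => χ (n : ZMod q)) 0 X 1]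
  rfl

lemma sum_period {q : ℕ} [NeZero q] (χ : DirichletCharacter ℂ q) (hχ : χ ≠ 1) (m : ℕ) :
    ∑ n ∈ Finset.range q, χ ((m + n : ℕ) : ZMod q) = 0 := by
  rw [← χ.sum_eq_zero_of_ne_one hχ]
  rw [← Equiv.sum_comp (Equiv.addLeft (m : ZMod q)) χ]
  refine Finset.sum_nbij (fun n => (n : ZMod q)) (by simp) ?_ ?_ ?_
  · intro a ha b hb hab
    simp only [Finset.coe_range, Set.mem_Iio] at ha hb
    have := (ZMod.natCast_eq_natCast_iff a b q).1 hab
    exact Nat.ModEq.eq_of_lt_of_lt this ha hb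
  · intro x _
    exact ⟨x.val, by simp [ZMod.val_lt], by simp⟩
  · intro a _; simp

lemma norm_S_le {q : ℕ} [NeZero q] (χ : DirichletCharacter ℂ q) (hχ : χ ≠ 1) (X : ℕ) :
    ‖S χ X‖ ≤ q := by
  have hq : q ≠ 1 := by rintro rfl; exact hχ (DirichletCharacter.level_one χ)
  rw [S_eq hq]
  generalize X + 1 = Y
  induction Y using Nat.strong_induction_on with
  | _ Y ih =>
    rcases lt_or_ge Y q with h | h
    · calc _ ≤ ∑ n ∈ Finset.range Y, ‖χ n‖ := norm_sum_le _ _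
        _ ≤ ∑ n ∈ Finset.range Y, (1:ℝ) := Finset.sum_le_sum fun n _ => χ.norm_le_one _
        _ = Y := by simp
        _ ≤ q := by exact_mod_cast h.le
    · obtain ⟨m, rfl⟩ := Nat.exists_eq_add_of_le' h
      rw [Finset.sum_range_add, sum_period χ hχ m, add_zero]
      exact ih m (by have := NeZero.pos q; omega)

lemma abel {q : ℕ} (χ : DirichletCharacter ℂ q) (X : ℕ) (s : ℂ) :
    P χ X s = S χ X * ((X + 1 : ℕ) : ℂ) ^ (-s) +
      ∑ n ∈ Finset.range X, S χ (n + 1) * (((n + 1 : ℕ) : ℂ) ^ (-s) - ((n + 2 : ℕ) : ℂ) ^ (-s)) := by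
  induction X with
  | zero => simp [P, S]
  | succ X ih =>
    have h1 : P χ (X + 1) s = P χ X s + χ ((X + 1 : ℕ) : ZMod q) * ((X + 1 : ℕ) : ℂ) ^ (-s) := by
      simp only [P]; rw [Finset.sum_Icc_succ_top (by omega)]
    have h2 : S χ (X + 1) = S χ X + χ ((X + 1 : ℕ) : ZMod q) := by
      simp only [S]; rw [Finset.sum_Icc_succ_top (by omega)]
    rw [h1, ih, Finset.sum_range_succ, h2]
    ring

lemma diff_bound {s : ℂ} (hs : 0 < s.re) (n : ℕ) (hn : 0 < n) :
    ‖(n : ℂ) ^ (-s) - ((n + 1 : ℕ) : ℂ) ^ (-s)‖ ≤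
      ‖s‖ / s.re * ((n : ℝ) ^ (-s.re) - ((n + 1 : ℕ) : ℝ) ^ (-s.re)) := by
  have hn' : (0 : ℝ) < n := by exact_mod_cast hn
  have hs0 : s ≠ 0 := by rintro rfl; simp at hs
  have h0 : (0 : ℝ) ∉ Set.uIcc (n : ℝ) ((n + 1 : ℕ) : ℝ) := by
    rw [Set.uIcc_of_le (by push_cast; linarith)]
    simp only [Set.mem_Icc, not_and, not_le]; intro h; linarith
  have e1 := integral_cpow (a := n) (b := ((n + 1 : ℕ) : ℝ)) (r := -s - 1)
    (Or.inr ⟨by intro h; apply hs0; linear_combination -h, h0⟩)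
  have e2 := integral_rpow (a := n) (b := ((n + 1 : ℕ) : ℝ)) (r := -s.re - 1)
    (Or.inr ⟨by intro h; linarith, h0⟩)
  simp only [sub_add_cancel] at e1 e2
  have e3 : (n : ℂ) ^ (-s) - ((n + 1 : ℕ) : ℂ) ^ (-s) =
      s * ∫ x : ℝ in (n:ℝ)..((n + 1 : ℕ) : ℝ), (x : ℂ) ^ (-s - 1) := by
    rw [e1]; simp only [ofReal_natCast]; field_simp; ring
  have e4 : ((n : ℝ) ^ (-s.re) - ((n + 1 : ℕ) : ℝ) ^ (-s.re)) =
      s.re * ∫ x : ℝ in (n:ℝ)..((n + 1 : ℕ) : ℝ), x ^ (-s.re - 1) := by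
    rw [e2]; field_simp; ring
  rw [e3, e4, norm_mul, ← mul_assoc, div_mul_cancel₀ _ hs.ne']
  gcongr
  apply intervalIntegral.norm_integral_le_of_norm_le (by push_cast; linarith)
  · refine Filter.Eventually.of_forall fun x hx => ?_
    rw [Complex.norm_cpow_eq_rpow_re_of_pos (hn'.trans hx.1)]
    simp
  · apply intervalIntegral.intervalIntegrable_rpow
    exact Or.inr h0

lemma diff_bound' {s : ℂ} (hs : 0 < s.re) (n : ℕ) (hn : 0 < n) :
    ‖(n : ℂ) ^ (-s) - ((n + 1 : ℕ) : ℂ) ^ (-s)‖ ≤ ‖s‖ * (n : ℝ) ^ (-s.re - 1) := by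
  have hn' : (0 : ℝ) < n := by exact_mod_cast hn
  refine (diff_bound hs n hn).trans ?_
  rw [div_mul_eq_mul_div, mul_div_assoc]
  gcongr
  rw [div_le_iff₀ hs]
  have h0 : (0 : ℝ) ∉ Set.uIcc (n : ℝ) ((n + 1 : ℕ) : ℝ) := by
    rw [Set.uIcc_of_le (by push_cast; linarith)]
    simp only [Set.mem_Icc, not_and, not_le]; intro h; linarith
  have e2 := integral_rpow (a := n) (b := ((n + 1 : ℕ) : ℝ)) (r := -s.re - 1)
    (Or.inr ⟨by intro h; linarith, h0⟩)
  simp only [sub_add_cancel] at e2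
  have e4 : ((n : ℝ) ^ (-s.re) - ((n + 1 : ℕ) : ℝ) ^ (-s.re)) =
      (∫ x : ℝ in (n:ℝ)..((n + 1 : ℕ) : ℝ), x ^ (-s.re - 1)) * s.re := by
    rw [e2]; field_simp; ring
  rw [e4]
  gcongr
  have : (n:ℝ) ^ (-s.re - 1) = ∫ x : ℝ in (n:ℝ)..((n + 1 : ℕ) : ℝ), (n:ℝ) ^ (-s.re - 1) := by
    simp
  rw [this]
  apply intervalIntegral.integral_mono_on (by push_cast; linarith)
  · apply intervalIntegral.intervalIntegrable_rpow
    exact Or.inr h0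
  · simp
  · intro x hx
    exact Real.rpow_le_rpow_of_nonpos hn' hx.1 (by linarith)

lemma norm_P_sub_le {q : ℕ} [NeZero q] (χ : DirichletCharacter ℂ q) (hχ : χ ≠ 1) {X Y : ℕ}
    (hXY : X ≤ Y) {s : ℂ} (hs : 0 < s.re) :
    ‖P χ Y s - P χ X s‖ ≤ 3 * q * (‖s‖ / s.re) * ((X + 1 : ℕ) : ℝ) ^ (-s.re) := by
  have hr : 1 ≤ ‖s‖ / s.re := by
    rw [le_div_iff₀ hs, one_mul]; exact (Complex.re_le_norm s)
  rw [abel, abel]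
  have key : ‖∑ n ∈ Finset.range Y, S χ (n + 1) * (((n + 1 : ℕ) : ℂ) ^ (-s) - ((n + 2 : ℕ) : ℂ) ^ (-s)) -
      ∑ n ∈ Finset.range X, S χ (n + 1) * (((n + 1 : ℕ) : ℂ) ^ (-s) - ((n + 2 : ℕ) : ℂ) ^ (-s))‖
      ≤ q * (‖s‖ / s.re) * (((X + 1 : ℕ) : ℝ) ^ (-s.re) - ((Y + 1 : ℕ) : ℝ) ^ (-s.re)) := by
    rw [← Finset.sum_Ico_eq_sub _ hXY]
    refine (norm_sum_le _ _).trans ?_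
    calc _ ≤ ∑ n ∈ Finset.Ico X Y, q * (‖s‖ / s.re) *
          (((n + 1 : ℕ) : ℝ) ^ (-s.re) - ((n + 1 + 1 : ℕ) : ℝ) ^ (-s.re)) := by
          refine Finset.sum_le_sum fun n _ => ?_
          rw [norm_mul, mul_assoc]
          gcongr
          · exact norm_S_le χ hχ _
          · exact diff_bound hs (n + 1) (by omega)
      _ = _ := by
          rw [← Finset.mul_sum]
          congr 1
          rw [Finset.sum_Ico_eq_sub _ hXY]
          rw [Finset.sum_range_sub' (fun n => ((n + 1 : ℕ) : ℝ) ^ (-s.re)),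
            Finset.sum_range_sub' (fun n => ((n + 1 : ℕ) : ℝ) ^ (-s.re))]
          ring
  have hb : ∀ Z : ℕ, ‖S χ Z * ((Z + 1 : ℕ) : ℂ) ^ (-s)‖ ≤ q * ((Z + 1 : ℕ) : ℝ) ^ (-s.re) := by
    intro Z
    rw [norm_mul]
    have : ‖((Z + 1 : ℕ) : ℂ) ^ (-s)‖ = ((Z + 1 : ℕ) : ℝ) ^ (-s.re) := by
      rw [Complex.norm_natCast_cpow_of_pos (by omega)]; simp
    rw [this]
    gcongr
    exact norm_S_le χ hχ _
  have hpos : 0 ≤ ((Y + 1 : ℕ) : ℝ) ^ (-s.re) := by positivity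
  have hposX : 0 ≤ ((X + 1 : ℕ) : ℝ) ^ (-s.re) := by positivity
  calc _ = ‖S χ Y * ((Y + 1 : ℕ) : ℂ) ^ (-s) - S χ X * ((X + 1 : ℕ) : ℂ) ^ (-s) +
      (∑ n ∈ Finset.range Y, S χ (n + 1) * (((n + 1 : ℕ) : ℂ) ^ (-s) - ((n + 2 : ℕ) : ℂ) ^ (-s)) -
      ∑ n ∈ Finset.range X, S χ (n + 1) * (((n + 1 : ℕ) : ℂ) ^ (-s) - ((n + 2 : ℕ) : ℂ) ^ (-s)))‖ := by
        congr 1; ring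
    _ ≤ (q * ((Y + 1 : ℕ) : ℝ) ^ (-s.re) + q * ((X + 1 : ℕ) : ℝ) ^ (-s.re)) +
        q * (‖s‖ / s.re) * (((X + 1 : ℕ) : ℝ) ^ (-s.re) - ((Y + 1 : ℕ) : ℝ) ^ (-s.re)) := by
        refine (norm_add_le _ _).trans (add_le_add ((norm_sub_le _ _).trans (add_le_add (hb _) (hb _))) key)
    _ ≤ _ := by
        have h1 : 0 ≤ (q:ℝ) * ((Y + 1 : ℕ) : ℝ) ^ (-s.re) := by positivity
        have h2 : 0 ≤ (q:ℝ) * ((X + 1 : ℕ) : ℝ) ^ (-s.re) := by positivity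
        nlinarith [mul_le_mul_of_nonneg_left hr h1, mul_le_mul_of_nonneg_left hr h2]

noncomputable def H {q : ℕ} (χ : DirichletCharacter ℂ q) (s : ℂ) : ℂ :=
  ∑' n : ℕ, S χ (n + 1) * (((n + 1 : ℕ) : ℂ) ^ (-s) - ((n + 2 : ℕ) : ℂ) ^ (-s))

lemma term_le {q : ℕ} [NeZero q] (χ : DirichletCharacter ℂ q) (hχ : χ ≠ 1) {B δ : ℝ} (hδ : 0 < δ)
    {s : ℂ} (hs : δ < s.re) (hB : ‖s‖ < B) (n : ℕ) :
    ‖S χ (n + 1) * (((n + 1 : ℕ) : ℂ) ^ (-s) - ((n + 2 : ℕ) : ℂ) ^ (-s))‖ ≤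
      q * B * ((n + 1 : ℕ) : ℝ) ^ (-δ - 1) := by
  rw [norm_mul, mul_assoc]
  gcongr
  · exact norm_S_le χ hχ _
  · refine (diff_bound' (hδ.trans hs) (n + 1) (by omega)).trans ?_
    refine mul_le_mul hB.le ?_ (by positivity) ((norm_nonneg s).trans hB.le)
    apply Real.rpow_le_rpow_of_exponent_le
    · exact_mod_cast (by omega : 1 ≤ n + 1)
    · linarith

lemma summable_bound (C δ : ℝ) (hδ : 0 < δ) :
    Summable fun n : ℕ => C * ((n + 1 : ℕ) : ℝ) ^ (-δ - 1) := by
  apply Summable.mul_left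
  exact (summable_nat_add_iff 1).2 (Real.summable_nat_rpow.2 (by linarith))

lemma tendsto_P_H {q : ℕ} [NeZero q] (χ : DirichletCharacter ℂ q) (hχ : χ ≠ 1) {s : ℂ}
    (hs : 0 < s.re) : Tendsto (fun X => P χ X s) atTop (nhds (H χ s)) := by
  simp_rw [abel]
  rw [← zero_add (H χ s)]
  apply Tendsto.add
  · apply squeeze_zero_norm (a := fun X : ℕ => q * ((X + 1 : ℕ) : ℝ) ^ (-s.re))
    · intro Z
      rw [norm_mul]
      have : ‖((Z + 1 : ℕ) : ℂ) ^ (-s)‖ = ((Z + 1 : ℕ) : ℝ) ^ (-s.re) := by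
        rw [Complex.norm_natCast_cpow_of_pos (by omega)]; simp
      rw [this]
      gcongr
      exact norm_S_le χ hχ _
    · rw [← mul_zero (q : ℝ)]
      apply Tendsto.const_mul
      exact (tendsto_rpow_neg_atTop hs).comp
        (tendsto_natCast_atTop_atTop.comp (tendsto_add_atTop_nat 1))
  · apply HasSum.tendsto_sum_nat
    apply Summable.hasSum
    refine Summable.of_norm_bounded (summable_bound (q * (‖s‖ + 1)) (s.re / 2) (by linarith)) ?_
    intro n
    exact term_le χ hχ (by linarith) (by linarith) (by linarith) n

lemma H_eq_of_one_lt {q : ℕ} [NeZero q] (χ : DirichletCharacter ℂ q) (hχ : χ ≠ 1) {s : ℂ}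
    (hs : 1 < s.re) : H χ s = DirichletCharacter.LFunction χ s := by
  refine tendsto_nhds_unique (tendsto_P_H χ hχ (by linarith)) ?_
  rw [DirichletCharacter.LFunction_eq_LSeries χ hs]
  have h := (DirichletCharacter.LSeriesSummable_of_one_lt_re χ hs).hasSum.tendsto_sum_nat
  refine (h.comp (tendsto_add_atTop_nat 1)).congr fun X => ?_
  simp only [Function.comp, P]
  rw [Finset.sum_range_succ', LSeries.term_zero, add_zero]
  rw [Finset.range_eq_Ico, Finset.sum_Ico_add' (fun n : ℕ => LSeries.term (fun n => χ n) s n) 0 X 1]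
  refine Finset.sum_congr rfl fun n hn => ?_
  rw [LSeries.term_of_ne_zero (by simp at hn; omega), Complex.cpow_neg, div_eq_mul_inv]

lemma H_eq {q : ℕ} [NeZero q] (χ : DirichletCharacter ℂ q) (hχ : χ ≠ 1) {s : ℂ}
    (hs : 0 < s.re) : H χ s = DirichletCharacter.LFunction χ s := by
  set U : Set ℂ := {z | s.re / 2 < z.re} ∩ Metric.ball 0 (‖s‖ + 3) with hU
  have hUo : IsOpen U := (isOpen_lt continuous_const continuous_re).inter Metric.isOpen_ball
  have hUc : Convex ℝ U := (convex_halfSpace_re_gt _).inter (convex_ball _ _)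
  have hd : DifferentiableOn ℂ (H χ) U := by
    apply differentiableOn_tsum_of_summable_norm
      (summable_bound (q * (‖s‖ + 3)) (s.re / 2) (by linarith))
    · intro n z hz
      have h1 : ((n + 1 : ℕ) : ℂ) ≠ 0 := by exact_mod_cast Nat.succ_ne_zero n
      have h2 : ((n + 2 : ℕ) : ℂ) ≠ 0 := by exact_mod_cast Nat.succ_ne_zero (n+1)
      apply DifferentiableAt.differentiableWithinAt
      apply DifferentiableAt.const_mul
      apply DifferentiableAt.sub
      · exact (differentiableAt_id.neg).const_cpow (Or.inl h1)
      · exact (differentiableAt_id.neg).const_cpow (Or.inl h2)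
    · exact hUo
    · intro n z hz
      exact term_le χ hχ (by linarith) hz.1 (by simpa using hz.2) n
  have hL : DifferentiableOn ℂ (DirichletCharacter.LFunction χ) U :=
    (DirichletCharacter.differentiable_LFunction hχ).differentiableOn
  have hmem : (s + 2) ∈ U := by
    refine ⟨by simp; linarith, ?_⟩
    simp only [Metric.mem_ball, dist_zero_right]
    refine (norm_add_le _ _).trans_lt ?_
    simp
    norm_num
  refine (hd.analyticOnNhd hUo).eqOn_of_preconnected_of_eventuallyEq (hL.analyticOnNhd hUo)
    hUc.isPreconnected hmem ?_ ⟨by simp; linarith, by simp⟩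
  have : {z : ℂ | 1 < z.re} ∈ nhds (s + 2) :=
    (isOpen_lt continuous_const continuous_re).mem_nhds (by simp; linarith)
  filter_upwards [this] with z hz
  exact H_eq_of_one_lt χ hχ hz

lemma tendsto_P {q : ℕ} [NeZero q] (χ : DirichletCharacter ℂ q) (hχ : χ ≠ 1) {s : ℂ}
    (hs : 0 < s.re) :
    Tendsto (fun X => P χ X s) atTop (nhds (DirichletCharacter.LFunction χ s)) := by
  rw [← H_eq χ hχ hs]; exact tendsto_P_H χ hχ hs

theorem approx {q : ℕ} [NeZero q] (χ : DirichletCharacter ℂ q) (hχ : χ ≠ 1) (X : ℕ) {s : ℂ}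
    (hs : 0 < s.re) :
    ‖DirichletCharacter.LFunction χ s - P χ X s‖ ≤
      3 * q * (‖s‖ / s.re) * ((X + 1 : ℕ) : ℝ) ^ (-s.re) := by
  have h : Tendsto (fun Y => ‖P χ Y s - P χ X s‖) atTop
      (nhds ‖DirichletCharacter.LFunction χ s - P χ X s‖) :=
    ((tendsto_P χ hχ hs).sub_const _).norm
  refine le_of_tendsto h ?_
  filter_upwards [eventually_ge_atTop X] with Y hY
  exact norm_P_sub_le χ hχ hY hs

end LD


namespace LD

open DirichletCharacter

lemma differentiable_P {q : ℕ} (χ : DirichletCharacter ℂ q) (X : ℕ) : Differentiable ℂ (P χ X) := by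
  unfold P
  apply Differentiable.fun_sum
  intro n hn
  have h1 : (n : ℂ) ≠ 0 := by simp at hn; exact_mod_cast (by omega : n ≠ 0)
  intro s
  apply DifferentiableAt.const_mul
  exact (differentiableAt_id.neg).const_cpow (Or.inl h1)

lemma deriv_P {q : ℕ} (χ : DirichletCharacter ℂ q) (X : ℕ) (s : ℂ) :
    deriv (P χ X) s = ∑ n ∈ Finset.Icc 1 X, -(Real.log n : ℂ) * χ n * (n : ℂ) ^ (-s) := by
  apply HasDerivAt.deriv
  unfold P
  apply HasDerivAt.fun_sum
  intro n hn
  have h1 : (n : ℂ) ≠ 0 := by simp at hn; exact_mod_cast (by omega : n ≠ 0)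
  have := ((hasDerivAt_id s).neg.const_cpow (c := (n : ℂ)) (Or.inl h1)).const_mul (χ n)
  convert! this using 1
  simp only [Pi.neg_apply, id, ofReal_log (Nat.cast_nonneg n), ofReal_natCast]
  ring

lemma sum_inv_le (X : ℕ) : ∑ n ∈ Finset.Icc 1 X, (n : ℝ)⁻¹ ≤ 1 + Real.log X := by
  have := harmonic_le_one_add_log X
  rw [harmonic_eq_sum_Icc] at this
  push_cast at this
  exact this

lemma norm_cpow_le {n : ℕ} (hn : 1 ≤ n) {s : ℂ} (hs : 1 ≤ s.re) : ‖(n : ℂ) ^ (-s)‖ ≤ (n : ℝ)⁻¹ := by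
  rw [Complex.norm_natCast_cpow_of_pos (by omega), ← Real.rpow_neg_one]
  apply Real.rpow_le_rpow_of_exponent_le (by exact_mod_cast hn)
  simp; exact hs

lemma norm_P_le {q : ℕ} (χ : DirichletCharacter ℂ q) (X : ℕ) {s : ℂ} (hs : 1 ≤ s.re) :
    ‖P χ X s‖ ≤ 1 + Real.log X := by
  refine (norm_sum_le _ _).trans (le_trans ?_ (sum_inv_le X))
  refine Finset.sum_le_sum fun n hn => ?_
  rw [norm_mul]
  simp only [Finset.mem_Icc] at hn
  calc _ ≤ 1 * (n:ℝ)⁻¹ := mul_le_mul (χ.norm_le_one _) (norm_cpow_le hn.1 hs) (norm_nonneg _) zero_le_one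
    _ = _ := one_mul _

lemma norm_deriv_P_le {q : ℕ} (χ : DirichletCharacter ℂ q) (X : ℕ) {s : ℂ} (hs : 1 ≤ s.re) :
    ‖deriv (P χ X) s‖ ≤ Real.log X * (1 + Real.log X) := by
  rw [deriv_P]
  refine (norm_sum_le _ _).trans (le_trans ?_ (mul_le_mul_of_nonneg_left (sum_inv_le X)
    (Real.log_natCast_nonneg X)))
  rw [Finset.mul_sum]
  refine Finset.sum_le_sum fun n hn => ?_
  simp only [Finset.mem_Icc] at hn
  rw [norm_mul, norm_mul, norm_neg, norm_real, Real.norm_of_nonneg (Real.log_natCast_nonneg n)]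
  have h1 : Real.log n ≤ Real.log X :=
    Real.log_le_log (by exact_mod_cast hn.1) (by exact_mod_cast hn.2)
  have h2 : Real.log n * ‖χ n‖ ≤ Real.log X := by
    calc _ ≤ Real.log X * 1 := mul_le_mul h1 (χ.norm_le_one _) (norm_nonneg _) (Real.log_natCast_nonneg X)
      _ = _ := mul_one _
  exact mul_le_mul h2 (norm_cpow_le hn.1 hs) (norm_nonneg _) (Real.log_natCast_nonneg X)

lemma approx4 {q : ℕ} [NeZero q] (χ : DirichletCharacter ℂ q) (hχ : χ ≠ 1) {s : ℂ}
    (hs : 1 / 2 ≤ s.re) : ‖LFunction χ s - P χ (q ^ 4) s‖ ≤ 6 * ‖s‖ / q := by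
  refine (approx χ hχ (q ^ 4) (by linarith)).trans ?_
  have hq : (1 : ℝ) ≤ q := by exact_mod_cast NeZero.pos q
  have h1 : ‖s‖ / s.re ≤ 2 * ‖s‖ := by
    rw [div_le_iff₀ (by linarith)]
    nlinarith [norm_nonneg s]
  have h2 : ((q ^ 4 + 1 : ℕ) : ℝ) ^ (-s.re) ≤ ((q:ℝ) ^ 2)⁻¹ := by
    calc ((q ^ 4 + 1 : ℕ) : ℝ) ^ (-s.re) ≤ ((q : ℝ) ^ 4) ^ (-s.re) := by
          apply Real.rpow_le_rpow_of_nonpos (by positivity) (by push_cast; linarith) (by linarith)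
      _ ≤ ((q : ℝ) ^ 4) ^ (-(1/2) : ℝ) :=
          Real.rpow_le_rpow_of_exponent_le (one_le_pow₀ hq) (by linarith)
      _ = _ := by
          rw [Real.rpow_neg (by positivity), ← Real.sqrt_eq_rpow]
          congr 1
          rw [show (q:ℝ)^4 = (q^2)^2 by ring, Real.sqrt_sq (by positivity)]
  calc _ ≤ 3 * q * (2 * ‖s‖) * ((q:ℝ) ^ 2)⁻¹ := by gcongr
    _ = _ := by field_simp; ring

lemma approx4' {q : ℕ} [NeZero q] (χ : DirichletCharacter ℂ q) (hχ : χ ≠ 1) {s : ℂ}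
    (hs : 1 ≤ s.re) : ‖deriv (LFunction χ) s - deriv (P χ (q ^ 4)) s‖ ≤ 12 * (‖s‖ + 1) / q := by
  have hd : Differentiable ℂ (fun z => LFunction χ z - P χ (q ^ 4) z) :=
    (differentiable_LFunction hχ).sub (differentiable_P χ _)
  rw [← deriv_fun_sub ((differentiable_LFunction hχ) s) ((differentiable_P χ _) s)]
  have hq : (1 : ℝ) ≤ q := by exact_mod_cast NeZero.pos q
  have := Complex.norm_deriv_le_of_forall_mem_sphere_norm_le (c := s) (R := 1/2)
    (C := 6 * (‖s‖ + 1) / q) (by norm_num) hd.diffContOnCl (fun z hz => ?_)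
  · refine this.trans (le_of_eq (by ring))
  · simp only [mem_sphere_iff_norm] at hz
    have h1 : 1 / 2 ≤ z.re := by
      have := Complex.abs_re_le_norm (z - s)
      rw [hz, sub_re, abs_le] at this
      linarith
    refine (approx4 χ hχ h1).trans ?_
    have : ‖z‖ ≤ ‖s‖ + 1 := by
      calc ‖z‖ = ‖(z - s) + s‖ := by simp
        _ ≤ _ := norm_add_le _ _
        _ ≤ _ := by rw [hz]; linarith
    gcongr

lemma norm_L_le {q : ℕ} [NeZero q] (χ : DirichletCharacter ℂ q) (hχ : χ ≠ 1) {s : ℂ}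
    (hs : 1 ≤ s.re) : ‖LFunction χ s‖ ≤ (1 + 4 * Real.log q) + 6 * ‖s‖ := by
  have hq : (1 : ℝ) ≤ q := by exact_mod_cast NeZero.pos q
  have h1 := approx4 χ hχ (s := s) (by linarith)
  have h2 := norm_P_le χ (q ^ 4) hs
  have h3 : 6 * ‖s‖ / q ≤ 6 * ‖s‖ := div_le_self (by positivity) hq
  push_cast at h2
  rw [Real.log_pow] at h2
  push_cast at h2
  have := norm_sub_norm_le (LFunction χ s) (P χ (q ^ 4) s)
  linarith

lemma norm_L'_le {q : ℕ} [NeZero q] (χ : DirichletCharacter ℂ q) (hχ : χ ≠ 1) {s : ℂ}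
    (hs : 1 ≤ s.re) :
    ‖deriv (LFunction χ) s‖ ≤ (1 + 4 * Real.log q) ^ 2 + 12 * (‖s‖ + 1) := by
  have hq : (1 : ℝ) ≤ q := by exact_mod_cast NeZero.pos q
  have h1 := approx4' χ hχ (s := s) (by linarith)
  have h2 := norm_deriv_P_le χ (q ^ 4) hs
  have h3 : 12 * (‖s‖ + 1) / q ≤ 12 * (‖s‖ + 1) := div_le_self (by positivity) hq
  push_cast at h2
  rw [Real.log_pow] at h2
  push_cast at h2
  have := norm_sub_norm_le (deriv (LFunction χ) s) (deriv (P χ (q ^ 4)) s)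
  have h5 : 0 ≤ Real.log q := Real.log_nonneg hq
  nlinarith

lemma log_eps (ε : ℝ) (hε : 0 < ε) : ∃ C : ℝ, 1 ≤ C ∧ ∀ q : ℕ, 1 ≤ q →
    1 + 4 * Real.log q ≤ C * (q : ℝ) ^ ε := by
  refine ⟨1 + 4 / ε, by have := div_pos (zero_lt_four' ℝ) hε; linarith, fun q hq => ?_⟩
  have h1 := Real.log_natCast_le_rpow_div q hε
  have h2 : (1:ℝ) ≤ (q:ℝ) ^ ε := Real.one_le_rpow (by exact_mod_cast hq) hε.le
  calc 1 + 4 * Real.log q ≤ (q:ℝ)^ε + 4 * ((q:ℝ)^ε / ε) := by linarith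
    _ = _ := by ring

/-- uniform upper bounds in the strip `1 ≤ re s ≤ 2`. -/
lemma upper (T ε : ℝ) (hε : 0 < ε) : ∃ C : ℝ, 1 ≤ C ∧ ∀ (q : ℕ) [NeZero q]
    (χ : DirichletCharacter ℂ q), χ ≠ 1 → ∀ s : ℂ, 1 ≤ s.re → ‖s‖ ≤ T →
    ‖LFunction χ s‖ ≤ C * (q : ℝ) ^ ε ∧ ‖deriv (LFunction χ) s‖ ≤ C * (q : ℝ) ^ ε := by
  obtain ⟨C, hC, h⟩ := log_eps (ε / 2) (by linarith)
  refine ⟨C ^ 2 + 12 * (|T| + 1), by nlinarith [abs_nonneg T], fun q _ χ hχ s hs hT => ?_⟩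
  have hq : 1 ≤ q := NeZero.pos q
  have hq' : (1:ℝ) ≤ q := by exact_mod_cast hq
  have h1 := h q hq
  have h2 : (1:ℝ) ≤ (q:ℝ) ^ (ε/2) := Real.one_le_rpow hq' (by linarith)
  have h3 : (q:ℝ) ^ ε = (q:ℝ) ^ (ε/2) * (q:ℝ) ^ (ε/2) := by
    rw [← Real.rpow_add (by linarith)]; congr 1; ring
  have h4 : 0 ≤ Real.log q := Real.log_nonneg hq'
  have h5 : (1 + 4 * Real.log q) ^ 2 ≤ C ^ 2 * (q:ℝ) ^ ε := by
    rw [h3]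
    calc (1 + 4 * Real.log q) ^ 2 ≤ (C * (q:ℝ) ^ (ε/2)) ^ 2 := by gcongr
      _ = _ := by ring
  have h6 : (1:ℝ) ≤ (q:ℝ) ^ ε := Real.one_le_rpow hq' (by linarith)
  have hT' : ‖s‖ ≤ |T| := hT.trans (le_abs_self T)
  have h7 : 12 * (‖s‖ + 1) ≤ 12 * (|T| + 1) * (q:ℝ)^ε := by
    nlinarith [norm_nonneg s, abs_nonneg T]
  have h8 := norm_L_le χ hχ hs
  have h9 := norm_L'_le χ hχ hs
  have h10 : (1 + 4 * Real.log q) ≤ (1 + 4 * Real.log q) ^ 2 := by nlinarith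
  constructor
  · nlinarith [norm_nonneg s]
  · nlinarith

lemma zeta_bound : ∃ C : ℝ, 1 ≤ C ∧ ∀ x : ℝ, 0 < x → x ≤ 1 → ‖riemannZeta (1 + x)‖ ≤ C / x := by
  have hc : ContinuousOn (LFunctionTrivChar₁ 1) (Metric.closedBall 1 1) :=
    (differentiable_LFunctionTrivChar₁ 1).continuous.continuousOn
  obtain ⟨C, hC⟩ := (isCompact_closedBall (1:ℂ) 1).exists_bound_of_continuousOn hc
  refine ⟨max C 1, le_max_right _ _, fun x hx hx1 => ?_⟩
  have h := hC (1 + x) (by simp [abs_of_pos hx, hx1])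
  have hne : (1 + (x:ℂ)) ≠ 1 := by simpa using hx.ne'
  rw [LFunctionTrivChar₁, Function.update_of_ne hne, LFunctionTrivChar_eq_mul_riemannZeta hne] at h
  simp only [Nat.primeFactors_one, Finset.prod_empty, one_mul, add_sub_cancel_left, norm_mul, norm_real,
    Real.norm_of_nonneg hx.le] at h
  rw [le_div_iff₀ hx]
  refine le_trans ?_ (h.trans (le_max_left _ _))
  rw [mul_comm]

lemma triv_le {p : ℕ} (hp : p.Prime) {s : ℂ} (hs : 0 ≤ s.re) (hs1 : s ≠ 1) :
    haveI : NeZero p := ⟨hp.pos.ne'⟩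
    ‖LFunction (1 : DirichletCharacter ℂ p) s‖ ≤ 2 * ‖riemannZeta s‖ := by
  haveI : NeZero p := ⟨hp.pos.ne'⟩
  have := LFunctionTrivChar_eq_mul_riemannZeta (N := p) hs1
  rw [LFunctionTrivChar] at this
  rw [this, norm_mul]
  gcongr
  rw [hp.primeFactors, Finset.prod_singleton]
  refine (norm_sub_le _ _).trans ?_
  have : ‖(p : ℂ) ^ (-s)‖ ≤ 1 := by
    rw [Complex.norm_natCast_cpow_of_pos hp.pos]
    apply Real.rpow_le_one_of_one_le_of_nonpos (by exact_mod_cast hp.one_le)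
    simpa using hs
  simp only [norm_one]; linarith

/-- ζ is bounded on vertical-ish segments away from 1 -/
lemma zeta_seg (t : ℝ) (ht : t ≠ 0) : ∃ C : ℝ, 1 ≤ C ∧ ∀ x : ℝ, 0 ≤ x → x ≤ 1 →
    ‖riemannZeta (1 + x + I * t)‖ ≤ C := by
  have hc : ContinuousOn (fun x : ℝ => riemannZeta (1 + x + I * t)) (Set.Icc 0 1) := by
    intro x _
    apply ContinuousAt.continuousWithinAt
    have : (1 + (x:ℂ) + I * t) ≠ 1 := by
      intro h
      have := congrArg Complex.im h
      simp at this; exact ht this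
    exact ContinuousAt.comp (f := fun x : ℝ => 1 + (x:ℂ) + I * t)
      (differentiableAt_riemannZeta this).continuousAt (by fun_prop)
  obtain ⟨C, hC⟩ := isCompact_Icc.exists_bound_of_continuousOn hc
  exact ⟨max C 1, le_max_right _ _, fun x h0 h1 => (hC x ⟨h0, h1⟩).trans (le_max_left _ _)⟩

/-- Quantitative non-vanishing on the line `re s = 1`, non-exceptional case. -/
theorem lower_nonexc (t : ℝ) (ε : ℝ) (hε : 0 < ε) : ∃ c : ℝ, 0 < c ∧ ∀ (p : ℕ) (hp : p.Prime),
    haveI : NeZero p := ⟨hp.pos.ne'⟩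
    ∀ χ : DirichletCharacter ℂ p, χ ≠ 1 → (t ≠ 0 ∨ χ ^ 2 ≠ 1) →
    c * (p : ℝ) ^ (-ε) ≤ ‖LFunction χ (1 + t * I)‖ := by
  obtain ⟨C1, hC1, h1⟩ := upper (2 + 2 * |t|) (ε / 7) (by linarith)
  obtain ⟨C2, hC2, h2⟩ := zeta_bound
  obtain ⟨C3, hC3, h3⟩ : ∃ C : ℝ, 1 ≤ C ∧ (t ≠ 0 → ∀ x : ℝ, 0 ≤ x → x ≤ 1 →
      ‖riemannZeta (1 + x + I * (2 * t : ℝ))‖ ≤ C) := by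
    by_cases ht : t = 0
    · exact ⟨1, le_rfl, fun h => absurd ht h⟩
    · obtain ⟨C, hC, h⟩ := zeta_seg (2 * t) (by simpa using ht)
      exact ⟨C, hC, fun _ => h⟩
  set C := C1 + 2 * C2 + 2 * C3 with hCdef
  have hCpos : 0 < C := by linarith
  refine ⟨1 / (16 * C ^ 7), by positivity, fun p hp => ?_⟩
  haveI : NeZero p := ⟨hp.pos.ne'⟩
  intro χ hχ hcase
  have hp1 : (1:ℝ) ≤ p := by exact_mod_cast hp.one_le
  set w := (p : ℝ) ^ (ε / 7) with hw
  have hw1 : 1 ≤ w := Real.one_le_rpow hp1 (by linarith)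
  set B := C * w with hB
  have hB1 : 1 ≤ B := by nlinarith
  have hBC1 : C1 * w ≤ B := by rw [hB, hCdef]; nlinarith
  have hBC2 : 2 * C2 ≤ B := by rw [hB, hCdef]; nlinarith
  have hBC3 : 2 * C3 ≤ B := by rw [hB, hCdef]; nlinarith
  have hpw : (p : ℝ) ^ (-ε) = (w ^ 7)⁻¹ := by
    rw [Real.rpow_neg (by linarith), hw, ← Real.rpow_natCast, ← Real.rpow_mul (by linarith)]
    congr 2; norm_num
  have hgoal : 1 / (16 * C ^ 7) * (p : ℝ) ^ (-ε) = 1 / (16 * B ^ 7) := by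
    rw [hpw, hB, mul_pow]; field_simp
  rw [hgoal]
  set y := 1 / (2 * B ^ 2) with hy
  have hy0 : 0 < y := by positivity
  have hy1 : y ≤ 1 := by
    rw [hy, div_le_one (by positivity)]; nlinarith
  set x := y ^ 4 with hx
  have hx0 : 0 < x := by positivity
  have hx1 : x ≤ 1 := pow_le_one₀ hy0.le hy1
  have hprod := norm_LFunction_product_ge_one χ hx0 t
  rw [norm_mul, norm_mul, norm_pow, norm_pow] at hprod
  set A := ‖LFunction χ (1 + x + I * t)‖ with hA
  have hx1' : (1 + (x:ℂ)) ≠ 1 := by simpa using hx0.ne'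
  have b1 : ‖LFunctionTrivChar p (1 + x)‖ ≤ B / x := by
    refine (triv_le hp (s := 1 + x) (by simp; linarith) hx1').trans ?_
    have := h2 x hx0 hx1
    calc _ ≤ 2 * (C2 / x) := by linarith
      _ = (2 * C2) / x := by ring
      _ ≤ _ := by gcongr
  have nt : ∀ (u v : ℝ), 0 ≤ u → u ≤ 1 → |v| ≤ 2 * |t| → ‖(1 + (u:ℂ) + I * v)‖ ≤ 2 + 2 * |t| := by
    intro u v hu hu1 hv
    refine (norm_add_le _ _).trans (add_le_add ((norm_add_le _ _).trans ?_) ?_)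
    · simp [abs_of_nonneg hu]; linarith
    · simpa using hv
  have b2 : ‖LFunction (χ ^ 2) (1 + x + 2 * I * t)‖ ≤ B := by
    have e : (1 + (x:ℂ) + 2 * I * t) = 1 + x + I * ((2 * t : ℝ) : ℂ) := by push_cast; ring
    rw [e]
    by_cases hχ2 : χ ^ 2 = 1
    · have ht : t ≠ 0 := by tauto
      rw [hχ2]
      refine (triv_le hp (by simp; linarith) ?_).trans ?_
      · intro h
        have := congrArg Complex.im h
        simp at this; exact ht this
      · have := h3 ht x hx0.le hx1
        linarith
    · exact (h1 p (χ ^ 2) hχ2 _ (by simp; linarith) (nt _ _ hx0.le hx1 (by rw [abs_mul]; simp))).1.trans hBC1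
  have hx2 : 0 ≤ A := norm_nonneg _
  have key : 1 ≤ (B / x) ^ 3 * A ^ 4 * B := by
    refine le_trans hprod ?_
    gcongr
  have key2 : y ^ 3 / B ≤ A := by
    have : (y ^ 3 / B) ^ 4 ≤ A ^ 4 := by
      have e : (B / x) ^ 3 * A ^ 4 * B = A ^ 4 / ((y ^ 3 / B) ^ 4) := by
        rw [hx]; field_simp
      rw [e, le_div_iff₀ (by positivity)] at key
      linarith
    exact (pow_le_pow_iff_left₀ (by positivity) hx2 (by norm_num)).1 this
  have key3 : ‖LFunction χ (1 + x + I * t) - LFunction χ (1 + t * I)‖ ≤ B * x := by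
    have hconv : Convex ℝ (segment ℝ (1 + (t:ℂ) * I) (1 + x + I * t)) := convex_segment _ _
    have := hconv.norm_image_sub_le_of_norm_deriv_le (f := LFunction χ) (C := B)
      (fun z _ => (differentiable_LFunction hχ) z) (fun z hz => ?_)
      (left_mem_segment ℝ _ _) (right_mem_segment ℝ _ _)
    · refine this.trans (le_of_eq ?_)
      congr 1
      rw [show (1 + (x:ℂ) + I * t - (1 + t * I)) = x by ring, norm_real, Real.norm_of_nonneg hx0.le]
    · rw [segment_eq_image'] at hz
      obtain ⟨θ, hθ, rfl⟩ := hz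
      have e : (1 + (t:ℂ) * I + θ • (1 + (x:ℂ) + I * t - (1 + t * I))) =
          1 + ((θ * x : ℝ) : ℂ) + I * t := by
        rw [real_smul]; push_cast; ring
      simp only [e]
      have t0 : 0 ≤ θ * x := mul_nonneg hθ.1 hx0.le
      have t1 : θ * x ≤ 1 := mul_le_one₀ hθ.2 hx0.le hx1
      exact (h1 p χ hχ _ (by simp; nlinarith [hθ.1]) (nt _ _ t0 t1
        (by linarith [abs_nonneg t]))).2.trans hBC1
  have key4 := norm_sub_norm_le (LFunction χ (1 + x + I * t)) (LFunction χ (1 + t * I))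
  have e : y ^ 3 / B - B * x = 1 / (16 * B ^ 7) := by
    rw [hx, hy]; field_simp; ring
  rw [← hA] at key4
  linarith

end LD


namespace LD

open DirichletCharacter

section Estermann
open scoped ComplexOrder

lemma one_le_LSeries_two {a : ℕ → ℂ} (ha : 0 ≤ a) (ha1 : a 1 = 1)
    (hab : LSeries.abscissaOfAbsConv a ≤ 1) : 1 ≤ (LSeries a 2).re := by
  have hs : LSeriesSummable a 2 := LSeriesSummable_of_abscissaOfAbsConv_lt_re
    (hab.trans_lt (by rw [Complex.re_ofNat]; exact_mod_cast (by norm_num : (1:ℝ) < 2)))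
  have h := hs.le_tsum 1 (fun n _ => by
    have := LSeries.term_nonneg (ha n) (2:ℝ)
    simpa using this)
  rw [LSeries.term_of_ne_zero one_ne_zero, ha1] at h
  have h2 : (1:ℂ) ≤ LSeries a 2 := by simpa [LSeries] using h
  simpa using (Complex.le_def.1 h2).1

lemma coeff_bound {a : ℕ → ℂ} (ha : 0 ≤ a)
    (hab : LSeries.abscissaOfAbsConv a ≤ 1) {G : ℂ → ℂ} (hG : Differentiable ℂ G) {l : ℂ}
    (hF : ∀ s : ℂ, 1 < s.re → LSeries a s = G s + l * (s - 1)⁻¹) (n : ℕ) :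
    -‖l‖ ≤ ((n.factorial : ℂ)⁻¹ * ((-1) ^ n * iteratedDeriv n G 2)).re := by
  have ho : IsOpen {s : ℂ | 1 < s.re} := isOpen_lt continuous_const continuous_re
  have h2 : (2:ℂ) ∈ {s : ℂ | 1 < s.re} := by simp
  have e : Set.EqOn (LSeries a) (G + fun s => l * (s - 1)⁻¹) {s : ℂ | 1 < s.re} :=
    fun s hs => hF s hs
  have e1 := e.iteratedDeriv_of_isOpen ho n h2
  have hi : ContDiffAt ℂ n (fun s : ℂ => (s - 1)⁻¹) 2 := by
    apply ContDiffAt.inv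
    · exact contDiffAt_id.sub contDiffAt_const
    · norm_num
  rw [iteratedDeriv_add hG.contDiff.contDiffAt (contDiffAt_const.mul hi)] at e1
  have e2 : iteratedDeriv n (fun s : ℂ => l * (s - 1)⁻¹) 2 = l * ((-1) ^ n * n.factorial) := by
    rw [iteratedDeriv_const_mul_field]
    congr 1
    rw [iteratedDeriv_eq_iterate]
    have := iter_deriv_inv_linear_sub (𝕜 := ℂ) n 1 1
    simp only [one_mul] at this
    rw [this]
    norm_num
  rw [e2] at e1
  have pos := LSeries.iteratedDeriv_alternating ha (x := 2) (hab.trans_lt (by exact_mod_cast (by norm_num : (1:ℝ) < 2))) n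
  simp only [ofReal_ofNat] at pos
  rw [e1] at pos
  have e3 : ((-1:ℂ)) ^ n * (-1) ^ n = 1 := by rw [← mul_pow]; simp
  have hfac : (n.factorial : ℂ) ≠ 0 := by exact_mod_cast n.factorial_ne_zero
  have e4 : (n.factorial : ℂ)⁻¹ * ((-1) ^ n * iteratedDeriv n G 2) + l =
      (n.factorial : ℂ)⁻¹ * ((-1) ^ n * (iteratedDeriv n G 2 + l * ((-1) ^ n * n.factorial))) := by
    field_simp
    linear_combination (-l * n.factorial) * e3
  have pos2 : 0 ≤ (n.factorial : ℂ)⁻¹ * ((-1) ^ n * (iteratedDeriv n G 2 + l * ((-1) ^ n * n.factorial))) :=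
    mul_nonneg (by rw [inv_nonneg]; exact_mod_cast n.factorial.zero_le) pos
  rw [← e4] at pos2
  have := (Complex.le_def.1 pos2).1
  simp only [zero_re, add_re] at this
  linarith [Complex.re_le_norm l]

theorem estermann0 {a : ℕ → ℂ} (ha : 0 ≤ a) (ha1 : a 1 = 1)
    (hab : LSeries.abscissaOfAbsConv a ≤ 1) {G : ℂ → ℂ} (hG : Differentiable ℂ G) {l : ℂ}
    (hF : ∀ s : ℂ, 1 < s.re → LSeries a s = G s + l * (s - 1)⁻¹) {Q : ℝ} (hQ : 1 ≤ Q)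
    (hGQ : ∀ z ∈ Metric.sphere (2:ℂ) (4/3), ‖G z‖ ≤ Q) {β : ℝ} (hβ : 9 / 10 ≤ β) (hβ1 : β < 1)
    (hneg : (G β + l * ((β:ℂ) - 1)⁻¹).re ≤ 0) :
    (1 - β) / (2 * Real.exp 1) * (12 * Q) ^ (-(6 * (1 - β))) ≤ ‖l‖ := by
  set g : ℕ → ℝ := fun n => ((n.factorial : ℂ)⁻¹ * ((-1) ^ n * iteratedDeriv n G 2)).re with hg
  set y := 2 - β with hy
  have hy1 : 1 < y := by rw [hy]; linarith
  have hy2 : y ≤ 11 / 10 := by rw [hy]; linarith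
  have hsum : HasSum (fun n => g n * y ^ n) (G β).re := by
    have := Complex.hasSum_re (Complex.hasSum_taylorSeries_of_entire hG 2 β)
    convert! this using 2 with n
    rw [hg]
    have : ((β:ℂ) - 2) ^ n = (-1) ^ n * ((y ^ n : ℝ) : ℂ) := by
      rw [hy]; push_cast; rw [← mul_pow]; congr 1; ring
    simp only [smul_eq_mul, this]
    rw [← re_mul_ofReal]
    congr 1; ring
  have hgb : ∀ n, |g n| ≤ Q * (3 / 4) ^ n := by
    intro n
    refine (Complex.abs_re_le_norm _).trans ?_
    have := Complex.norm_iteratedDeriv_le_of_forall_mem_sphere_norm_le n (by norm_num : (0:ℝ) < 4/3)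
      (hG.diffContOnCl) hGQ
    rw [norm_mul, norm_mul, norm_pow, norm_neg, norm_one, one_pow, one_mul, norm_inv,
      Complex.norm_natCast]
    have hfac : (0:ℝ) < n.factorial := by exact_mod_cast n.factorial_pos
    rw [inv_mul_le_iff₀ hfac]
    refine this.trans (le_of_eq ?_)
    rw [mul_div_assoc, div_eq_mul_inv Q, ← inv_pow]
    norm_num
  have hgl : ∀ n, -‖l‖ ≤ g n := fun n => coeff_bound ha hab hG hF n
  have hg0 : 1 - ‖l‖ ≤ g 0 := by
    have h1 := one_le_LSeries_two ha ha1 hab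
    rw [hF 2 (by simp)] at h1
    simp only [hg, Nat.factorial_zero, Nat.cast_one, inv_one, pow_zero, one_mul, iteratedDeriv_zero]
    have : ((2:ℂ) - 1)⁻¹ = 1 := by norm_num
    rw [this, mul_one, add_re] at h1
    linarith [Complex.re_le_norm l]
  set M := ⌈6 * Real.log (12 * Q)⌉₊ with hM
  have hlog : 0 < Real.log (12 * Q) := Real.log_pos (by linarith)
  have hM1 : 6 * Real.log (12 * Q) ≤ M := Nat.le_ceil _
  have hM2 : (M : ℝ) < 6 * Real.log (12 * Q) + 1 := Nat.ceil_lt_add_one (by positivity)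
  have hMpos : 0 < M := by
    have : (0:ℝ) < M := by linarith
    exact_mod_cast this
  -- head
  have head : 1 - ‖l‖ * ∑ n ∈ Finset.range M, y ^ n ≤ ∑ n ∈ Finset.range M, g n * y ^ n := by
    obtain ⟨m, hm⟩ : ∃ m, M = m + 1 := ⟨M - 1, by omega⟩
    rw [hm, Finset.sum_range_succ', Finset.sum_range_succ', mul_add, Finset.mul_sum]
    have : ∑ i ∈ Finset.range m, -(‖l‖ * y ^ (i + 1)) ≤ ∑ i ∈ Finset.range m, g (i + 1) * y ^ (i + 1) := by
      refine Finset.sum_le_sum fun i _ => ?_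
      have hp : 0 ≤ y ^ (i + 1) := by positivity
      nlinarith [hgl (i + 1)]
    rw [Finset.sum_neg_distrib] at this
    simp only [pow_zero, mul_one]
    linarith
  -- tail
  have hr : 3 / 4 * y ≤ 33 / 40 := by linarith
  have hr0 : 0 ≤ 3 / 4 * y := by linarith
  have htail_sum : HasSum (fun n => g (n + M) * y ^ (n + M))
      ((G β).re - ∑ n ∈ Finset.range M, g n * y ^ n) := (hasSum_nat_add_iff' M).2 hsum
  have hexp : (33 / 40 : ℝ) ^ M ≤ 1 / (12 * Q) := by
    have h1 : (33 / 40 : ℝ) ≤ Real.exp (-(1/6)) := by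
      have := Real.add_one_le_exp (-(1/6) : ℝ)
      linarith
    calc (33 / 40 : ℝ) ^ M ≤ (Real.exp (-(1/6))) ^ M := by gcongr
      _ = Real.exp (-(M / 6)) := by rw [← Real.exp_nat_mul]; congr 1; ring
      _ ≤ Real.exp (-Real.log (12 * Q)) := by apply Real.exp_le_exp.2; linarith
      _ = _ := by rw [Real.exp_neg, Real.exp_log (by linarith), one_div]
  have tail : -(1/2) ≤ (G β).re - ∑ n ∈ Finset.range M, g n * y ^ n := by
    have hgeo : HasSum (fun n : ℕ => -(Q * (33 / 40) ^ M * (33 / 40) ^ n))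
        (-(Q * (33 / 40) ^ M * (1 - 33 / 40)⁻¹)) :=
      ((hasSum_geometric_of_lt_one (by norm_num) (by norm_num)).mul_left _).neg
    have hle := hasSum_le (fun n => ?_) hgeo htail_sum
    · refine le_trans ?_ hle
      have : Q * (33 / 40) ^ M ≤ 1 / 12 := by
        calc Q * (33 / 40) ^ M ≤ Q * (1 / (12 * Q)) := by gcongr
          _ = 1 / 12 := by field_simp
      have e : (1 - 33 / 40 : ℝ)⁻¹ = 40 / 7 := by norm_num
      rw [e]; linarith
    · have h1 := (abs_le.1 (hgb (n + M))).1
      have h2 : (3 / 4 * y) ^ (n + M) ≤ (33 / 40) ^ (n + M) := by gcongr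
      have h3 : 0 ≤ y ^ (n + M) := by positivity
      have h4 : -(Q * (3 / 4 * y) ^ (n + M)) ≤ g (n + M) * y ^ (n + M) := by
        rw [mul_pow]; nlinarith
      have h5 : Q * (33 / 40) ^ M * (33 / 40) ^ n = Q * (33 / 40) ^ (n + M) := by
        rw [pow_add]; ring
      simp only [h5]
      nlinarith
  have hgeom : ∑ n ∈ Finset.range M, y ^ n = (y ^ M - 1) / (1 - β) := by
    rw [geom_sum_eq hy1.ne']; congr 1; rw [hy]; ring
  have hl : -(‖l‖ / (1 - β)) ≤ (l * ((β:ℂ) - 1)⁻¹).re := by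
    have h1 := (abs_le.1 (Complex.abs_re_le_norm (l * ((β:ℂ) - 1)⁻¹))).1
    have h2 : ‖((β:ℂ) - 1)⁻¹‖ = (1 - β)⁻¹ := by
      rw [norm_inv]
      have : ((β:ℂ) - 1) = ((β - 1 : ℝ) : ℂ) := by push_cast; ring
      rw [this, norm_real, Real.norm_of_nonpos (by linarith)]; congr 1; ring
    rw [norm_mul, h2, ← div_eq_mul_inv] at h1
    exact h1
  rw [add_re] at hneg
  have hb0 : 0 < 1 - β := by linarith
  have main : 1 / 2 ≤ ‖l‖ * (y ^ M / (1 - β)) := by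
    have : ‖l‖ * (y ^ M / (1 - β)) = ‖l‖ * ((y ^ M - 1) / (1 - β)) + ‖l‖ / (1 - β) := by
      field_simp; ring
    rw [this]; rw [hgeom] at head; linarith
  have hyM : y ^ M ≤ Real.exp 1 * (12 * Q) ^ (6 * (1 - β)) := by
    have h1 : y ≤ Real.exp (1 - β) := by
      have := Real.add_one_le_exp (1 - β); rw [hy]; linarith
    calc y ^ M ≤ (Real.exp (1 - β)) ^ M := by gcongr
      _ = Real.exp (M * (1 - β)) := by rw [← Real.exp_nat_mul]
      _ ≤ Real.exp (1 + Real.log (12 * Q) * (6 * (1 - β))) := by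
          apply Real.exp_le_exp.2; nlinarith
      _ = _ := by rw [Real.exp_add, Real.rpow_def_of_pos (by linarith)]
  have hpos : 0 < (12 * Q) ^ (6 * (1 - β)) := by positivity
  rw [Real.rpow_neg (by positivity)]
  have h3 : ‖l‖ * (y ^ M / (1 - β)) ≤ ‖l‖ * ((Real.exp 1 * (12 * Q) ^ (6 * (1 - β))) / (1 - β)) := by
    gcongr
  have h4 := main.trans h3
  rw [← div_eq_mul_inv, div_div, div_le_iff₀ (by positivity)]
  rw [mul_div_assoc', le_div_iff₀ hb0] at h4
  linarith

theorem estermann {a : ℕ → ℂ} (ha : 0 ≤ a) (ha1 : a 1 = 1)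
    (hab : LSeries.abscissaOfAbsConv a ≤ 1) {K : ℂ → ℂ} (hK : Differentiable ℂ K)
    (hF : ∀ s : ℂ, 1 < s.re → LSeries a s = K s * (s - 1)⁻¹) {Q : ℝ} (hQ : 1 ≤ Q)
    (hKQ : ∀ z ∈ Metric.closedBall (2:ℂ) (4/3), ‖K z‖ ≤ Q) {β : ℝ} (hβ : 9 / 10 ≤ β) (hβ1 : β < 1)
    (hneg : (K β * ((β:ℂ) - 1)⁻¹).re ≤ 0) :
    (1 - β) / (2 * Real.exp 1) * (72 * Q) ^ (-(6 * (1 - β))) ≤ ‖K 1‖ := by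
  have hG : Differentiable ℂ (dslope K 1) := by
    rw [← differentiableOn_univ, Complex.differentiableOn_dslope Filter.univ_mem]
    exact hK.differentiableOn
  have hval : ∀ s : ℂ, s ≠ 1 → dslope K 1 s = (K s - K 1) * (s - 1)⁻¹ := by
    intro s hs
    rw [dslope_of_ne _ hs, slope_def_field, div_eq_mul_inv]
  have hval' : ∀ s : ℂ, s ≠ 1 → dslope K 1 s + K 1 * (s - 1)⁻¹ = K s * (s - 1)⁻¹ := by
    intro s hs; rw [hval s hs]; ring
  have := estermann0 (Q := 6 * Q) (l := K 1) ha ha1 hab hG (fun s hs => ?_) (by linarith)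
    (fun z hz => ?_) hβ hβ1 ?_
  · convert! this using 3; ring
  · rw [hF s hs, hval']
    rintro rfl; simp at hs
  · have hz' : ‖z - 2‖ = 4 / 3 := by simpa [dist_eq_norm] using hz
    have h1 : 1 / 3 ≤ ‖z - 1‖ := by
      have := norm_sub_norm_le (z - 2) (-1)
      rw [norm_neg, norm_one, hz'] at this
      have e : z - 2 - -1 = z - 1 := by ring
      rw [e] at this; linarith
    have hne : z ≠ 1 := by
      rintro rfl; norm_num at h1
    rw [hval z hne, norm_mul, norm_inv]
    have h2 : ‖z - 1‖⁻¹ ≤ 3 := by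
      rw [inv_le_comm₀ (by linarith) (by norm_num)]; linarith
    have h3 : ‖K z - K 1‖ ≤ 2 * Q := by
      refine (norm_sub_le _ _).trans ?_
      have := hKQ z (Metric.sphere_subset_closedBall hz)
      have := hKQ 1 (by simp [dist_eq_norm]; norm_num)
      linarith
    calc _ ≤ 2 * Q * 3 := by gcongr
      _ = _ := by ring
  · rw [hval']
    · exact hneg
    · intro h
      have : β = 1 := by exact_mod_cast h
      linarith

end Estermann
end LD


namespace LD

open DirichletCharacter

section Siegel
open scoped ComplexOrder ArithmeticFunction.vonMangoldt ArithmeticFunction.zeta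

/-- log-multiplication on arithmetic functions -/
noncomputable def Dl (f : ArithmeticFunction ℂ) : ArithmeticFunction ℂ :=
  ⟨fun n => (Real.log n : ℂ) * f n, by simp⟩

lemma Dl_apply (f : ArithmeticFunction ℂ) (n : ℕ) : Dl f n = (Real.log n : ℂ) * f n := rfl

lemma Dl_mul (f g : ArithmeticFunction ℂ) : Dl (f * g) = Dl f * g + f * Dl g := by
  ext n
  rw [Dl_apply, ArithmeticFunction.add_apply, ArithmeticFunction.mul_apply,
    ArithmeticFunction.mul_apply, ArithmeticFunction.mul_apply, Finset.mul_sum,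
    ← Finset.sum_add_distrib]
  refine Finset.sum_congr rfl fun x hx => ?_
  have h := Nat.mem_divisorsAntidiagonal.1 hx
  have hx1 : x.1 ≠ 0 := by rintro h0; rw [h0, zero_mul] at h; exact h.2 h.1.symm
  have hx2 : x.2 ≠ 0 := by rintro h0; rw [h0, mul_zero] at h; exact h.2 h.1.symm
  rw [Dl_apply, Dl_apply, ← h.1, Nat.cast_mul, Real.log_mul (by exact_mod_cast hx1) (by exact_mod_cast hx2)]
  push_cast; ring

lemma nonneg_of_Dl {a w : ArithmeticFunction ℂ} (h : Dl a = a * w) (h1 : a 1 = 1)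
    (hw : ∀ n, 0 ≤ w n) (hw1 : w 1 = 0) (n : ℕ) : 0 ≤ a n := by
  induction n using Nat.strong_induction_on with
  | _ n ih =>
    rcases Nat.lt_or_ge n 2 with h2 | h2
    · interval_cases n
      · simp
      · rw [h1]; exact zero_le_one
    have e : (Real.log n : ℂ) * a n = ∑ x ∈ n.divisorsAntidiagonal, a x.1 * w x.2 := by
      rw [← Dl_apply, h, ArithmeticFunction.mul_apply]
    have hp : 0 ≤ (Real.log n : ℂ) * a n := by
      rw [e]
      refine Finset.sum_nonneg fun x hx => ?_
      have hx' := Nat.mem_divisorsAntidiagonal.1 hx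
      rcases eq_or_ne x.2 1 with h3 | h3
      · rw [h3, hw1, mul_zero]
      · refine mul_nonneg (ih _ ?_) (hw _)
        have hx2 : x.2 ≠ 0 := by rintro h0; rw [h0, mul_zero] at hx'; exact hx'.2 hx'.1.symm
        have hx1 : x.1 ≠ 0 := by rintro h0; rw [h0, zero_mul] at hx'; exact hx'.2 hx'.1.symm
        have : 2 ≤ x.2 := by omega
        nlinarith [Nat.pos_of_ne_zero hx1, hx'.1]
    have hl : 0 < Real.log n := Real.log_pos (by exact_mod_cast h2)
    have : a n = ((Real.log n)⁻¹ : ℝ) * ((Real.log n : ℂ) * a n) := by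
      rw [← mul_assoc, ← ofReal_mul, inv_mul_cancel₀ hl.ne']; simp
    rw [this]
    exact mul_nonneg (by exact_mod_cast (inv_nonneg.2 hl.le)) hp

/-- character as arithmetic function -/
noncomputable def af {q : ℕ} (χ : DirichletCharacter ℂ q) : ArithmeticFunction ℂ :=
  toArithmeticFunction (fun n => χ n)

lemma af_apply {q : ℕ} (χ : DirichletCharacter ℂ q) {n : ℕ} (hn : n ≠ 0) : af χ n = χ n := by
  simp [af, toArithmeticFunction, hn]

/-- twisted von Mangoldt -/
noncomputable def vm {q : ℕ} (χ : DirichletCharacter ℂ q) : ArithmeticFunction ℂ :=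
  toArithmeticFunction (fun n => χ n * (Λ n : ℂ))

lemma vm_apply {q : ℕ} (χ : DirichletCharacter ℂ q) {n : ℕ} : vm χ n = χ n * (Λ n : ℂ) := by
  rcases eq_or_ne n 0 with rfl | hn <;> simp [vm, toArithmeticFunction, *]

lemma Dl_af {q : ℕ} (χ : DirichletCharacter ℂ q) : Dl (af χ) = af χ * vm χ := by
  have h := DirichletCharacter.convolution_twist_vonMangoldt χ
  ext n
  rcases eq_or_ne n 0 with rfl | hn
  · simp
  have h2 := congrFun h n
  rw [mul_comm (af χ)]
  change _ = LSeries.convolution ((fun n : ℕ => χ n) * fun n : ℕ => ((Λ n : ℝ) : ℂ))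
    (fun n : ℕ => χ n) n
  rw [h2, Dl_apply, af_apply χ hn]
  simp [mul_comm]

lemma af_summable {q : ℕ} (χ : DirichletCharacter ℂ q) {s : ℂ} (hs : 1 < s.re) :
    LSeriesSummable (af χ) s := by
  refine (LSeriesSummable_congr s fun {n} hn => ?_).2 (DirichletCharacter.LSeriesSummable_of_one_lt_re χ hs)
  exact af_apply χ hn

lemma LSeries_af {q : ℕ} [NeZero q] (χ : DirichletCharacter ℂ q) {s : ℂ} (hs : 1 < s.re) :
    LSeries (af χ) s = LFunction χ s := by
  rw [LFunction_eq_LSeries χ hs]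
  exact LSeries_congr (fun {n} hn => af_apply χ hn) s

lemma af_one {q : ℕ} (χ : DirichletCharacter ℂ q) : af χ 1 = 1 := by
  rw [af_apply χ one_ne_zero]; simp

lemma mul_one_apply {f g : ArithmeticFunction ℂ} (hf : f 1 = 1) (hg : g 1 = 1) : (f * g) 1 = 1 := by
  simp [ArithmeticFunction.mul_apply, hf, hg]

/-- (s-1) zeta(s) -/
noncomputable def Z1 : ℂ → ℂ := LFunctionTrivChar₁ 1

lemma Z1_diff : Differentiable ℂ Z1 := differentiable_LFunctionTrivChar₁ 1

lemma Z1_one : Z1 1 = 1 := by simp [Z1, LFunctionTrivChar₁]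

lemma Z1_eq {s : ℂ} (hs : s ≠ 1) : Z1 s = (s - 1) * LFunction (1 : DirichletCharacter ℂ 1) s := by
  simp [Z1, LFunctionTrivChar₁, Function.update_of_ne hs, LFunctionTrivChar]

lemma quad_cases {q : ℕ} {χ : DirichletCharacter ℂ q} (hχ : χ ^ 2 = 1) (a : ZMod q) :
    χ a = 0 ∨ χ a = 1 ∨ χ a = -1 := MulChar.isQuadratic_iff_sq_eq_one.mpr hχ a

lemma P_real {q : ℕ} {χ : DirichletCharacter ℂ q} (hχ : χ ^ 2 = 1) (X : ℕ) (x : ℝ) :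
    (P χ X x).im = 0 := by
  rw [P, Complex.im_sum]
  refine Finset.sum_eq_zero fun n _ => ?_
  have : ((n:ℂ) ^ (-(x:ℂ))) = (((n:ℝ) ^ (-x) : ℝ) : ℂ) := by
    rw [Complex.ofReal_cpow (by positivity)]; simp
  rw [this]
  rcases quad_cases hχ n with h | h | h <;> rw [h] <;> simp

lemma L_real {q : ℕ} [NeZero q] {χ : DirichletCharacter ℂ q} (h1 : χ ≠ 1) (hχ : χ ^ 2 = 1) {x : ℝ}
    (hx : 0 < x) : (LFunction χ x).im = 0 := by
  have := (Complex.continuous_im.tendsto _).comp (tendsto_P χ h1 (s := (x:ℂ)) (by simpa using hx))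
  refine tendsto_nhds_unique this ?_
  have e : Complex.im ∘ (fun X => P χ X (x:ℂ)) = fun _ => 0 := by
    ext X; exact P_real hχ X x
  rw [e]; exact tendsto_const_nhds

lemma L_ball {q : ℕ} [NeZero q] {χ : DirichletCharacter ℂ q} (h1 : χ ≠ 1) {z : ℂ}
    (hz : z ∈ Metric.closedBall (2:ℂ) (4/3)) : ‖LFunction χ z‖ ≤ 15 * q := by
  have hz' : ‖z - 2‖ ≤ 4 / 3 := by simpa [dist_eq_norm] using hz
  have hre : 2 / 3 ≤ z.re := by
    have := (abs_le.1 ((Complex.abs_re_le_norm (z - 2)).trans hz')).1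
    simp at this; linarith
  have hn : ‖z‖ ≤ 10 / 3 := by
    have := norm_add_le (z - 2) 2
    simp at this; linarith
  have := approx χ h1 0 (s := z) (by linarith)
  simp [P] at this
  refine this.trans ?_
  have h5 : ‖z‖ / z.re ≤ 5 := by rw [div_le_iff₀ (by linarith)]; linarith
  have hq : (0:ℝ) ≤ q := by positivity
  nlinarith

lemma abscissa_le {a : ℕ → ℂ} (h : ∀ s : ℂ, 1 < s.re → LSeriesSummable a s) :
    LSeries.abscissaOfAbsConv a ≤ 1 := by
  refine LSeries.abscissaOfAbsConv_le_of_forall_lt_LSeriesSummable (x := 1) fun y hy => h _ (by simpa using hy)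

lemma Z1_bound : ∃ C : ℝ, 1 ≤ C ∧ ∀ z ∈ Metric.closedBall (2:ℂ) (4/3), ‖Z1 z‖ ≤ C := by
  obtain ⟨C, hC⟩ := (isCompact_closedBall (2:ℂ) (4/3)).exists_bound_of_continuousOn
    Z1_diff.continuous.continuousOn
  exact ⟨max 1 C, le_max_left _ _, fun z hz => (hC z hz).trans (le_max_right _ _)⟩

lemma LSeries_zetaMul {q : ℕ} [NeZero q] (χ : DirichletCharacter ℂ q) {s : ℂ} (hs : 1 < s.re) :
    LSeries χ.zetaMul s = riemannZeta s * LFunction χ s := by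
  have e : χ.zetaMul = af (1 : DirichletCharacter ℂ 1) * af χ := by
    have : (ArithmeticFunction.zeta : ArithmeticFunction ℂ) = af (1 : DirichletCharacter ℂ 1) := by
      ext n
      rcases eq_or_ne n 0 with rfl | hn
      · simp
      · rw [af_apply _ hn, MulChar.one_apply (isUnit_of_subsingleton _)]; simp [hn]
    rw [zetaMul, this]; rfl
  rw [e, ArithmeticFunction.LSeries_mul' (af_summable _ hs) (af_summable _ hs), LSeries_af _ hs,
    LSeries_af _ hs, LFunction_modOne_eq]

lemma L_two_pos {q : ℕ} [NeZero q] {χ : DirichletCharacter ℂ q} (h1 : χ ≠ 1) (hχ : χ ^ 2 = 1) :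
    0 < (LFunction χ (2:ℝ)).re := by
  have h := one_le_LSeries_two (a := χ.zetaMul) (fun n => zetaMul_nonneg hχ n)
    (isMultiplicative_zetaMul χ).map_one (abscissa_le fun s hs => LSeriesSummable_zetaMul χ hs)
  have e : LSeries χ.zetaMul 2 = riemannZeta (2:ℝ) * LFunction χ (2:ℝ) := by
    rw [LSeries_zetaMul χ (by simp)]; simp
  rw [e, mul_re, L_real h1 hχ (by norm_num), mul_zero, sub_zero] at h
  have hz := riemannZeta_re_pos_of_one_lt (x := 2) (by norm_num)
  by_contra hc
  push Not at hc
  nlinarith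

lemma caseA {q : ℕ} [NeZero q] {χ : DirichletCharacter ℂ q} (h1 : χ ≠ 1) (hχ : χ ^ 2 = 1)
    {C : ℝ} (hC1 : 1 ≤ C) (hC : ∀ z ∈ Metric.closedBall (2:ℂ) (4/3), ‖Z1 z‖ ≤ C) {β : ℝ}
    (hβ : 9 / 10 ≤ β) (hβ1 : β < 1) (hZ : 0 ≤ (Z1 β).re) (hL : 0 ≤ (LFunction χ β).re) :
    (1 - β) / (2 * Real.exp 1) * (72 * (C * (15 * q))) ^ (-(6 * (1 - β))) ≤ ‖LFunction χ 1‖ := by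
  have hq : (1:ℝ) ≤ q := by exact_mod_cast NeZero.pos q
  have := estermann (a := χ.zetaMul) (K := fun s => Z1 s * LFunction χ s) (Q := C * (15 * q)) (β := β)
    (fun n => zetaMul_nonneg hχ n) (isMultiplicative_zetaMul χ).map_one
    (abscissa_le fun s hs => LSeriesSummable_zetaMul χ hs)
    (Z1_diff.mul (differentiable_LFunction h1)) (fun s hs => ?_) (by nlinarith) (fun z hz => ?_) hβ hβ1 ?_
  · simpa [Z1_one] using this
  · have hs1 : s ≠ 1 := by rintro rfl; simp at hs
    have hs2 : s - 1 ≠ 0 := sub_ne_zero.2 hs1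
    rw [LSeries_zetaMul χ hs, Z1_eq hs1, LFunction_modOne_eq]
    field_simp
  · rw [norm_mul]
    exact mul_le_mul (hC z hz) (L_ball h1 hz) (norm_nonneg _) (by linarith)
  · have e : ((β:ℂ) - 1)⁻¹ = (((β - 1)⁻¹ : ℝ) : ℂ) := by push_cast; rfl
    rw [e, re_mul_ofReal, mul_re, L_real h1 hχ (by linarith), mul_zero, sub_zero]
    exact mul_nonpos_of_nonneg_of_nonpos (mul_nonneg hZ hL) (inv_nonpos.2 (by linarith))

lemma exists_zero {q : ℕ} [NeZero q] {χ : DirichletCharacter ℂ q} (h1 : χ ≠ 1) (hχ : χ ^ 2 = 1)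
    {β : ℝ} (hβ : 9 / 10 ≤ β) (hβ1 : β < 1) (hL : (LFunction χ β).re < 0) :
    ∃ β1, β < β1 ∧ β1 < 1 ∧ LFunction χ β1 = 0 := by
  have hc : Continuous fun x : ℝ => (LFunction χ x).re :=
    Complex.continuous_re.comp ((differentiable_LFunction h1).continuous.comp Complex.continuous_ofReal)
  obtain ⟨x, hx, hx0⟩ := intermediate_value_Icc (by linarith : β ≤ 2) hc.continuousOn
    (show (0:ℝ) ∈ Set.Icc _ _ from ⟨hL.le, (L_two_pos h1 hχ).le⟩)
  have hz : LFunction χ x = 0 := by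
    apply Complex.ext
    · exact hx0
    · exact L_real h1 hχ (by linarith [hx.1])
  refine ⟨x, lt_of_le_of_ne hx.1 ?_, ?_, hz⟩
  · rintro rfl; simp only at hx0; linarith
  · by_contra hx1
    push Not at hx1
    exact LFunction_ne_zero_of_one_le_re χ (s := (x:ℂ)) (Or.inl h1) (by simpa using hx1) hz

lemma caseB {q1 q2 q3 : ℕ} [NeZero q1] [NeZero q2] [NeZero q3] {χ1 : DirichletCharacter ℂ q1}
    {χ2 : DirichletCharacter ℂ q2} {χ3 : DirichletCharacter ℂ q3}
    (h1 : χ1 ≠ 1) (h2 : χ2 ≠ 1) (h3 : χ3 ≠ 1) (hq1 : χ1 ^ 2 = 1) (hq2 : χ2 ^ 2 = 1)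
    (h123 : ∀ n : ℕ, χ3 n = χ1 n * χ2 n)
    {C : ℝ} (hC1 : 1 ≤ C) (hC : ∀ z ∈ Metric.closedBall (2:ℂ) (4/3), ‖Z1 z‖ ≤ C) {β : ℝ}
    (hβ : 9 / 10 ≤ β) (hβ1 : β < 1) (hL : LFunction χ1 β = 0) :
    (1 - β) / (2 * Real.exp 1) * (72 * (C * (15 * q1) * (15 * q2) * (15 * q3))) ^ (-(6 * (1 - β))) ≤
      ‖LFunction χ1 1‖ * ‖LFunction χ2 1‖ * ‖LFunction χ3 1‖ := by
  have hq1' : (1:ℝ) ≤ q1 := by exact_mod_cast NeZero.pos q1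
  have hq2' : (1:ℝ) ≤ q2 := by exact_mod_cast NeZero.pos q2
  have hq3' : (1:ℝ) ≤ q3 := by exact_mod_cast NeZero.pos q3
  set χ0 : DirichletCharacter ℂ 1 := 1 with hχ0
  set a := af χ0 * af χ1 * af χ2 * af χ3 with ha
  have a1 : a 1 = 1 := mul_one_apply (mul_one_apply (mul_one_apply (af_one _) (af_one _)) (af_one _)) (af_one _)
  have hD : Dl a = a * (vm χ0 + vm χ1 + vm χ2 + vm χ3) := by
    rw [ha, Dl_mul, Dl_mul, Dl_mul, Dl_af, Dl_af, Dl_af, Dl_af]; ring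
  have hchi0 : ∀ n : ℕ, χ0 n = 1 := fun n => by
    rw [hχ0]; exact MulChar.one_apply (isUnit_of_subsingleton _)
  have hw : ∀ n, 0 ≤ (vm χ0 + vm χ1 + vm χ2 + vm χ3) n := by
    intro n
    simp only [ArithmeticFunction.add_apply, vm_apply, hchi0, h123]
    have hΛ : (0:ℂ) ≤ (Λ n : ℂ) := by exact_mod_cast ArithmeticFunction.vonMangoldt_nonneg
    have e : 1 * (Λ n : ℂ) + χ1 n * (Λ n : ℂ) + χ2 n * (Λ n : ℂ) + χ1 n * χ2 n * (Λ n : ℂ) =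
      (1 + χ1 n) * (1 + χ2 n) * (Λ n : ℂ) := by ring
    rw [e]
    have hx : ∀ x : ℂ, x = 0 ∨ x = 1 ∨ x = -1 → 0 ≤ 1 + x := by
      rintro x (rfl | rfl | rfl) <;> norm_num
    exact mul_nonneg (mul_nonneg (hx _ (quad_cases hq1 n)) (hx _ (quad_cases hq2 n))) hΛ
  have hw1 : (vm χ0 + vm χ1 + vm χ2 + vm χ3) 1 = 0 := by
    simp [ArithmeticFunction.add_apply, vm_apply]
  have hs01 : ∀ s : ℂ, 1 < s.re → LSeriesSummable (af χ0 * af χ1 : ArithmeticFunction ℂ) s := fun s hs =>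
    ArithmeticFunction.LSeriesSummable_mul (af_summable χ0 hs) (af_summable χ1 hs)
  have hs012 : ∀ s : ℂ, 1 < s.re → LSeriesSummable (af χ0 * af χ1 * af χ2 : ArithmeticFunction ℂ) s := fun s hs =>
    ArithmeticFunction.LSeriesSummable_mul (hs01 s hs) (af_summable χ2 hs)
  have hs0123 : ∀ s : ℂ, 1 < s.re → LSeriesSummable a s := fun s hs =>
    ArithmeticFunction.LSeriesSummable_mul (hs012 s hs) (af_summable χ3 hs)
  have := estermann (a := a) (K := fun s => Z1 s * LFunction χ1 s * LFunction χ2 s * LFunction χ3 s)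
    (Q := C * (15 * q1) * (15 * q2) * (15 * q3)) (β := β)
    (fun n => nonneg_of_Dl hD a1 hw hw1 n) a1
    (abscissa_le hs0123)
    (((Z1_diff.mul (differentiable_LFunction h1)).mul (differentiable_LFunction h2)).mul
      (differentiable_LFunction h3)) (fun s hs => ?_) ?_ (fun z hz => ?_) hβ hβ1 ?_
  · simpa [Z1_one, mul_assoc] using this
  · have hs1 : s ≠ 1 := by rintro rfl; simp at hs
    rw [ha, ArithmeticFunction.LSeries_mul' (hs012 s hs) (af_summable χ3 hs),
      ArithmeticFunction.LSeries_mul' (hs01 s hs) (af_summable χ2 hs),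
      ArithmeticFunction.LSeries_mul' (af_summable χ0 hs) (af_summable χ1 hs),
      LSeries_af χ0 hs, LSeries_af χ1 hs, LSeries_af χ2 hs, LSeries_af χ3 hs]
    have hs2 : s - 1 ≠ 0 := sub_ne_zero.2 hs1
    rw [Z1_eq hs1, ← hχ0]
    field_simp
  · have e1 : 1 ≤ 15 * (q1:ℝ) := by linarith
    have e2 : 1 ≤ 15 * (q2:ℝ) := by linarith
    have e3 : 1 ≤ 15 * (q3:ℝ) := by linarith
    exact one_le_mul_of_one_le_of_one_le (one_le_mul_of_one_le_of_one_le
      (one_le_mul_of_one_le_of_one_le hC1 e1) e2) e3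
  · rw [norm_mul, norm_mul, norm_mul]
    have := hC z hz
    have := L_ball h1 hz
    have := L_ball h2 hz
    have := L_ball h3 hz
    gcongr
  · simp [hL]

end Siegel
end LD


namespace LD

open DirichletCharacter

lemma chi3 {p1 p : ℕ} (hp1 : p1.Prime) (hp : p.Prime) (hne : p1 ≠ p) {χ1 : DirichletCharacter ℂ p1}
    (χ2 : DirichletCharacter ℂ p) (h1 : χ1 ≠ 1) : ∃ χ3 : DirichletCharacter ℂ (p1 * p),
    χ3 ≠ 1 ∧ ∀ n : ℕ, χ3 n = χ1 n * χ2 n := by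
  have hcop : Nat.Coprime p1 p := (Nat.coprime_primes hp1 hp).2 hne
  have key : ∀ n : ℕ, (changeLevel (Dvd.intro p rfl) χ1 * changeLevel (Dvd.intro_left p1 rfl) χ2 :
      DirichletCharacter ℂ (p1 * p)) n = χ1 n * χ2 n := by
    intro n
    by_cases hn : n.Coprime (p1 * p)
    · have hu := (ZMod.isUnit_iff_coprime n (p1 * p)).2 hn
      obtain ⟨u, hu'⟩ := hu
      rw [MulChar.mul_apply, ← hu', changeLevel_eq_cast_of_dvd, changeLevel_eq_cast_of_dvd, hu',
        ZMod.cast_natCast (Dvd.intro p rfl), ZMod.cast_natCast (Dvd.intro_left p1 rfl)]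
    · have : ¬ IsUnit ((n : ℕ) : ZMod (p1 * p)) := by rwa [ZMod.isUnit_iff_coprime]
      rw [MulChar.map_nonunit _ this]
      rw [Nat.coprime_mul_iff_right, not_and_or] at hn
      rcases hn with hn | hn
      · rw [MulChar.map_nonunit χ1 (by rwa [ZMod.isUnit_iff_coprime]), zero_mul]
      · rw [MulChar.map_nonunit χ2 (by rwa [ZMod.isUnit_iff_coprime]), mul_zero]
  refine ⟨_, ?_, key⟩
  intro h
  obtain ⟨a, ha⟩ := (MulChar.ne_one_iff).1 h1
  have : NeZero p1 := ⟨hp1.pos.ne'⟩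
  obtain ⟨n, hn1, hn2⟩ := Nat.chineseRemainder hcop (a : ZMod p1).val 1
  have e1 : ((n : ℕ) : ZMod p1) = a := by
    rw [(ZMod.natCast_eq_natCast_iff _ _ _).2 hn1]; simp
  have e2 : ((n : ℕ) : ZMod p) = 1 := by
    have := (ZMod.natCast_eq_natCast_iff _ _ _).2 hn2
    simpa using this
  have hu : IsUnit ((n : ℕ) : ZMod (p1 * p)) := by
    rw [ZMod.isUnit_iff_coprime, Nat.coprime_mul_iff_right, ← ZMod.isUnit_iff_coprime,
      ← ZMod.isUnit_iff_coprime, e1, e2]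
    exact ⟨a.isUnit, isUnit_one⟩
  have := key n
  rw [h, MulChar.one_apply hu, e1, e2, map_one, mul_one] at this
  exact ha this.symm

lemma exists_min_L {q : ℕ} [NeZero q] : ∃ c : ℝ, 0 < c ∧ ∀ χ : DirichletCharacter ℂ q, χ ≠ 1 →
    c ≤ ‖LFunction χ 1‖ := by
  classical
  have hfin : (Set.univ : Set (DirichletCharacter ℂ q)).Finite := Set.toFinite _
  by_cases hex : ∃ χ : DirichletCharacter ℂ q, χ ≠ 1
  · obtain ⟨χ0, h0⟩ := hex
    obtain ⟨χ, hχ, hmin⟩ := Set.exists_min_image {χ : DirichletCharacter ℂ q | χ ≠ 1}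
      (fun χ => ‖LFunction χ 1‖) (Set.toFinite _) ⟨χ0, h0⟩
    exact ⟨_, norm_pos_iff.2 (LFunction_apply_one_ne_zero hχ), fun ψ hψ => hmin ψ hψ⟩
  · push Not at hex
    exact ⟨1, one_pos, fun χ hχ => absurd (hex χ) hχ⟩

theorem siegel (ε : ℝ) (hε : 0 < ε) : ∃ c : ℝ, 0 < c ∧ ∀ (p : ℕ) (hp : p.Prime),
    haveI : NeZero p := ⟨hp.pos.ne'⟩
    ∀ χ : DirichletCharacter ℂ p, χ ≠ 1 → χ ^ 2 = 1 →
    c * (p : ℝ) ^ (-ε) ≤ ‖LFunction χ 1‖ := by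
  obtain ⟨C, hC1, hC⟩ := Z1_bound
  have hev : ∀ᶠ β : ℝ in nhds 1, 0 < (Z1 β).re := by
    have hc : Continuous fun x : ℝ => (Z1 x).re :=
      Complex.continuous_re.comp (Z1_diff.continuous.comp Complex.continuous_ofReal)
    have := hc.tendsto 1
    simp only [ofReal_one, Z1_one, one_re] at this
    exact this.eventually (lt_mem_nhds one_pos)
  obtain ⟨η, hη, hev⟩ := Metric.eventually_nhds_iff.1 hev
  obtain ⟨δ, hδ0, hδ1, hδ2, hδ3⟩ : ∃ δ : ℝ, 0 < δ ∧ δ ≤ 1 / 10 ∧ δ ≤ ε / 24 ∧ δ < η :=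
    ⟨min (min (1/10) (ε/24)) (η/2), by positivity, (min_le_left _ _).trans (min_le_left _ _),
      (min_le_left _ _).trans (min_le_right _ _), (min_le_right _ _).trans_lt (by linarith)⟩
  set β0 := 1 - δ with hβ0
  by_cases hA : ∀ (p : ℕ) (hp : p.Prime), haveI : NeZero p := ⟨hp.pos.ne'⟩
      ∀ χ : DirichletCharacter ℂ p, χ ≠ 1 → χ ^ 2 = 1 → 0 ≤ (LFunction χ β0).re
  · refine ⟨(1 - β0) / (2 * Real.exp 1) * (72 * (C * 15)) ^ (-(6 * (1 - β0))), ?_, ?_⟩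
    · have : 0 < 1 - β0 := by rw [hβ0]; linarith
      positivity
    intro p hp χ h1 hχ
    have : NeZero p := ⟨hp.pos.ne'⟩
    have hp1 : (1:ℝ) ≤ p := by exact_mod_cast hp.one_le
    refine le_trans ?_ (caseA h1 hχ hC1 hC (β := β0) (by rw [hβ0]; linarith) (by rw [hβ0]; linarith) ?_
      (hA p hp χ h1 hχ))
    · have e : 72 * (C * (15 * (p:ℝ))) = (72 * (C * 15)) * p := by ring
      rw [e, Real.mul_rpow (x := 72 * (C * 15)) (y := (p:ℝ)) (by positivity) (by positivity),
        ← mul_assoc ((1 - β0) / (2 * Real.exp 1))]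
      have hb : 0 ≤ 1 - β0 := by rw [hβ0]; linarith
      gcongr
      rw [hβ0]; linarith
    · refine (hev ?_).le
      rw [Real.dist_eq, hβ0, abs_lt]; constructor <;> linarith
  · push Not at hA
    obtain ⟨p1, hp1, χ1, h1, hq1, hneg⟩ := hA
    have : NeZero p1 := ⟨hp1.pos.ne'⟩
    obtain ⟨β, hβ, hβ1, hz⟩ := exists_zero h1 hq1 (by rw [hβ0]; linarith) (by rw [hβ0]; linarith) hneg
    obtain ⟨c1, hc1, hmin⟩ := exists_min_L (q := p1)
    obtain ⟨B, hB, hup⟩ := upper 1 (ε / 2) (by linarith)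
    have hL1 : 0 < ‖LFunction χ1 1‖ := norm_pos_iff.2 (LFunction_apply_one_ne_zero h1)
    have hp1' : (1:ℝ) ≤ p1 := by exact_mod_cast hp1.one_le
    have hb : 0 < 1 - β := by linarith
    set c2 := (1 - β) / (2 * Real.exp 1) * (72 * (C * (15 * p1) * 15 * (15 * p1))) ^ (-(6 * (1 - β))) with hc2
    have hc2p : 0 < c2 := by positivity
    set c3 := c2 / (‖LFunction χ1 1‖ * (B * (p1:ℝ) ^ (ε / 2))) with hc3
    have hc3p : 0 < c3 := by positivity
    refine ⟨min c1 c3, by positivity, ?_⟩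
    intro p hp χ h2 hq2
    have : NeZero p := ⟨hp.pos.ne'⟩
    have hp' : (1:ℝ) ≤ p := by exact_mod_cast hp.one_le
    have hpe : (p:ℝ) ^ (-ε) ≤ 1 := Real.rpow_le_one_of_one_le_of_nonpos hp' (by linarith)
    rcases eq_or_ne p1 p with rfl | hne
    · calc min c1 c3 * (p1:ℝ) ^ (-ε) ≤ c1 * 1 := by gcongr; exact min_le_left _ _
        _ ≤ _ := by rw [mul_one]; exact hmin χ h2
    · obtain ⟨χ3, h3, h123⟩ := chi3 hp1 hp hne χ h1
      have : NeZero (p1 * p) := ⟨(Nat.mul_pos hp1.pos hp.pos).ne'⟩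
      have hB := caseB h1 h2 h3 hq1 hq2 h123 hC1 hC (β := β) (by rw [hβ0] at hβ; linarith) hβ1 hz
      have hu := (hup (p1 * p) χ3 h3 1 (by simp) (by simp)).1
      have e : 72 * (C * (15 * p1) * (15 * p) * (15 * ((p1 * p : ℕ) : ℝ))) =
        72 * (C * (15 * p1) * 15 * (15 * p1)) * (p:ℝ) ^ (2:ℝ) := by push_cast; rw [Real.rpow_two]; ring
      rw [e, Real.mul_rpow (by positivity) (by positivity), ← mul_assoc, ← hc2, ← Real.rpow_mul (by positivity)] at hB
      have h5 : (p:ℝ) ^ (-(ε / 2)) ≤ (p:ℝ) ^ (2 * -(6 * (1 - β))) := by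
        apply Real.rpow_le_rpow_of_exponent_le hp'
        rw [hβ0] at hβ; linarith
      have h6 : c2 * (p:ℝ) ^ (-(ε / 2)) ≤ ‖LFunction χ1 1‖ * ‖LFunction χ 1‖ * (B * ((p1:ℝ) ^ (ε / 2) * (p:ℝ) ^ (ε / 2))) := by
        rw [← Real.mul_rpow (by positivity) (by positivity)]
        refine (mul_le_mul_of_nonneg_left h5 hc2p.le).trans (hB.trans ?_)
        push_cast at hu
        gcongr
      have h7 : (p:ℝ) ^ (-ε) * (p:ℝ) ^ (ε / 2) = (p:ℝ) ^ (-(ε / 2)) := by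
        rw [← Real.rpow_add (by linarith)]; congr 1; ring
      have hpp : 0 < (p:ℝ) ^ (ε / 2) := by positivity
      calc min c1 c3 * (p:ℝ) ^ (-ε) ≤ c3 * (p:ℝ) ^ (-ε) := by gcongr; exact min_le_right _ _
        _ ≤ _ := by
          rw [hc3, div_mul_eq_mul_div, div_le_iff₀ (by positivity)]
          refine le_of_mul_le_mul_right ?_ hpp
          calc _ = c2 * (p:ℝ) ^ (-(ε / 2)) := by rw [mul_assoc, h7]
            _ ≤ _ := h6
            _ = _ := by ring

theorem lower (t : ℝ) (ε : ℝ) (hε : 0 < ε) : ∃ c : ℝ, 0 < c ∧ ∀ (p : ℕ) [NeZero p], p.Prime →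
    ∀ χ : DirichletCharacter ℂ p, χ ≠ 1 → c * (p : ℝ) ^ (-ε) ≤ ‖LFunction χ (1 + t * I)‖ := by
  obtain ⟨c1, hc1, h1⟩ := lower_nonexc t ε hε
  obtain ⟨c2, hc2, h2⟩ := siegel ε hε
  refine ⟨min c1 c2, by positivity, fun p _ hp χ hχ => ?_⟩
  by_cases h : t ≠ 0 ∨ χ ^ 2 ≠ 1
  · refine le_trans ?_ (h1 p hp χ hχ h)
    gcongr; exact min_le_left _ _
  · push Not at h
    have := h2 p hp χ hχ h.2
    rw [h.1]; simp only [ofReal_zero, zero_mul, add_zero]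
    refine le_trans ?_ this
    gcongr; exact min_le_right _ _

end LD


namespace LD

open DirichletCharacter

section Divisor

lemma prime_pow_aux {ε : ℝ} (hε : 0 < ε) {x : ℝ} (hx : 2 ≤ x) (a : ℕ) :
    ((a : ℝ) + 1) ≤ max 1 (1 / (ε * Real.log 2)) * (x ^ a) ^ ε := by
  have hl : 0 < Real.log 2 := Real.log_pos (by norm_num)
  have h1 : 1 + (a:ℝ) * (ε * Real.log 2) ≤ (x ^ a) ^ ε := by
    have h2 : ((2:ℝ) ^ a) ^ ε ≤ (x ^ a) ^ ε := by gcongr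
    refine le_trans ?_ h2
    have : ((2:ℝ) ^ a) ^ ε = Real.exp (a * (ε * Real.log 2)) := by
      rw [Real.rpow_def_of_pos (by positivity), Real.log_pow]; congr 1; ring
    rw [this]
    linarith [Real.add_one_le_exp (a * (ε * Real.log 2))]
  set M := max 1 (1 / (ε * Real.log 2))
  have hM1 : 1 ≤ M := le_max_left _ _
  have hM2 : 1 ≤ M * (ε * Real.log 2) := by
    rw [← div_le_iff₀ (by positivity)]; exact le_max_right _ _
  calc (a:ℝ) + 1 ≤ M + a * (M * (ε * Real.log 2)) := by
        have : (a:ℝ) * 1 ≤ a * (M * (ε * Real.log 2)) := by gcongr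
        linarith
    _ = M * (1 + a * (ε * Real.log 2)) := by ring
    _ ≤ _ := by gcongr

lemma prime_pow_aux2 {ε : ℝ} (hε : 0 < ε) {x : ℝ} (hx0 : 0 ≤ x) (hx : 2 ≤ x ^ ε) (a : ℕ) :
    ((a : ℝ) + 1) ≤ (x ^ a) ^ ε := by
  rw [← Real.rpow_natCast, ← Real.rpow_mul hx0, mul_comm, Real.rpow_mul hx0, Real.rpow_natCast]
  calc (a:ℝ) + 1 ≤ 2 ^ a := by exact_mod_cast Nat.lt_two_pow_self
    _ ≤ _ := by gcongr

theorem divisor_bound (ε : ℝ) (hε : 0 < ε) : ∃ C : ℝ, 1 ≤ C ∧ ∀ n : ℕ, n ≠ 0 →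
    (n.divisors.card : ℝ) ≤ C * (n : ℝ) ^ ε := by
  set M := max 1 (1 / (ε * Real.log 2)) with hM
  have hM1 : 1 ≤ M := le_max_left _ _
  obtain ⟨B, hB⟩ := exists_nat_ge ((2:ℝ) ^ (1 / ε))
  refine ⟨M ^ B, one_le_pow₀ hM1, fun n hn => ?_⟩
  have e2 : (n : ℝ) ^ ε = ∏ p ∈ n.primeFactors, ((p:ℝ) ^ (n.factorization p)) ^ ε := by
    rw [Real.finsetProd_rpow _ _ (fun i _ => by positivity)]
    congr 1
    conv_lhs => rw [← Nat.prod_factorization_pow_eq_self hn]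
    rw [Finsupp.prod]; push_cast; rfl
  rw [Nat.card_divisors hn, e2]
  push_cast
  have hle : ∀ p ∈ n.primeFactors, ((n.factorization p : ℝ) + 1) ≤
      (if p < B then M else 1) * ((p:ℝ) ^ (n.factorization p)) ^ ε := by
    intro p hp
    have hpp := Nat.prime_of_mem_primeFactors hp
    split_ifs with h
    · exact prime_pow_aux hε (by exact_mod_cast hpp.two_le) _
    · rw [one_mul]
      refine prime_pow_aux2 hε (by positivity) ?_ _
      push Not at h
      have h3 : (2:ℝ) ^ (1 / ε) ≤ p := hB.trans (by exact_mod_cast h)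
      calc (2:ℝ) = ((2:ℝ) ^ (1 / ε)) ^ ε := by
            rw [← Real.rpow_mul (by norm_num)]; field_simp; simp
        _ ≤ _ := by gcongr
  calc _ ≤ ∏ p ∈ n.primeFactors, ((if p < B then M else 1) * ((p:ℝ) ^ (n.factorization p)) ^ ε) :=
        Finset.prod_le_prod (fun i _ => by positivity) hle
    _ = (∏ p ∈ n.primeFactors, (if p < B then M else 1)) * _ := Finset.prod_mul_distrib
    _ ≤ _ := by
      gcongr
      rw [← Finset.prod_filter, Finset.prod_const]
      apply pow_le_pow_right₀ hM1
      calc _ ≤ (Finset.range B).card := Finset.card_le_card (fun x hx => by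
              simp at hx; simp [hx.2])
        _ = B := Finset.card_range B

lemma conv_bound {f g : ArithmeticFunction ℂ} {A B α β : ℝ} (hA : 0 ≤ A) (hB : 0 ≤ B)
    (hα : 0 ≤ α) (hβ : 0 ≤ β) (hf : ∀ n : ℕ, n ≠ 0 → ‖f n‖ ≤ A * (n:ℝ) ^ α)
    (hg : ∀ n : ℕ, n ≠ 0 → ‖g n‖ ≤ B * (n:ℝ) ^ β) {C ε : ℝ} 
    (hC : ∀ n : ℕ, n ≠ 0 → (n.divisors.card : ℝ) ≤ C * (n : ℝ) ^ ε) (n : ℕ) (hn : n ≠ 0) :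
    ‖(f * g) n‖ ≤ A * B * C * (n:ℝ) ^ (α + β + ε) := by
  have hn' : (0:ℝ) < n := by exact_mod_cast Nat.pos_of_ne_zero hn
  rw [ArithmeticFunction.mul_apply]
  calc _ ≤ ∑ x ∈ n.divisorsAntidiagonal, ‖f x.1 * g x.2‖ := norm_sum_le _ _
    _ ≤ ∑ x ∈ n.divisorsAntidiagonal, A * B * (n:ℝ) ^ (α + β) := by
      refine Finset.sum_le_sum fun x hx => ?_
      have h := Nat.mem_divisorsAntidiagonal.1 hx
      have hx1 : x.1 ≠ 0 := by rintro h0; rw [h0, zero_mul] at h; exact h.2 h.1.symm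
      have hx2 : x.2 ≠ 0 := by rintro h0; rw [h0, mul_zero] at h; exact h.2 h.1.symm
      have l1 : (x.1:ℝ) ≤ n := by exact_mod_cast Nat.le_of_dvd (Nat.pos_of_ne_zero hn) ⟨x.2, h.1.symm⟩
      have l2 : (x.2:ℝ) ≤ n := by exact_mod_cast Nat.le_of_dvd (Nat.pos_of_ne_zero hn) ⟨x.1, by rw [← h.1, mul_comm]⟩
      rw [norm_mul, Real.rpow_add hn']
      calc ‖f x.1‖ * ‖g x.2‖ ≤ (A * (x.1:ℝ) ^ α) * (B * (x.2:ℝ) ^ β) := by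
            gcongr
            · exact hf _ hx1
            · exact hg _ hx2
        _ ≤ (A * (n:ℝ) ^ α) * (B * (n:ℝ) ^ β) := by gcongr
        _ = _ := by ring
    _ = n.divisors.card * (A * B * (n:ℝ) ^ (α + β)) := by
      rw [Finset.sum_const, nsmul_eq_mul, ← Nat.map_div_right_divisors, Finset.card_map]
    _ ≤ (C * (n:ℝ) ^ ε) * (A * B * (n:ℝ) ^ (α + β)) := by gcongr; exact hC n hn
    _ = _ := by rw [Real.rpow_add hn' (α + β) ε]; ring

lemma pow_bound {f : ArithmeticFunction ℂ} {A C ε : ℝ} (hA : 0 ≤ A) (hε : 0 < ε) (hC1 : 1 ≤ C)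
    (hf : ∀ n : ℕ, n ≠ 0 → ‖f n‖ ≤ A * (n:ℝ) ^ ε)
    (hC : ∀ n : ℕ, n ≠ 0 → (n.divisors.card : ℝ) ≤ C * (n : ℝ) ^ ε) (k : ℕ) :
    ∀ n : ℕ, n ≠ 0 → ‖(f ^ k) n‖ ≤ A ^ k * C ^ k * (n:ℝ) ^ (2 * k * ε) := by
  induction k with
  | zero =>
    intro n hn
    simp only [pow_zero, CharP.cast_eq_zero, mul_zero, zero_mul, Real.rpow_zero, mul_one]
    rw [ArithmeticFunction.one_apply]; split_ifs <;> simp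
  | succ k ih =>
    intro n hn
    have := conv_bound (by positivity) hA (by positivity) hε.le ih hf hC n hn
    rw [pow_succ f]
    refine this.trans (le_of_eq ?_)
    rw [pow_succ, pow_succ]; push_cast
    have e : 2 * k * ε + ε + ε = 2 * (k + 1) * ε := by ring
    rw [e]; ring

end Divisor

section Agree

/-- agreement of arithmetic functions up to N -/
def Agree (N : ℕ) (f g : ArithmeticFunction ℂ) : Prop := ∀ n ≤ N, f n = g n

lemma Agree.mul {N : ℕ} {f g f' g' : ArithmeticFunction ℂ} (h : Agree N f g) (h' : Agree N f' g') :
    Agree N (f * f') (g * g') := by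
  intro n hn
  rw [ArithmeticFunction.mul_apply, ArithmeticFunction.mul_apply]
  refine Finset.sum_congr rfl fun x hx => ?_
  have hx' := Nat.mem_divisorsAntidiagonal.1 hx
  have l1 := Nat.le_of_dvd (Nat.pos_of_ne_zero hx'.2) ⟨x.2, hx'.1.symm⟩
  have l2 := Nat.le_of_dvd (Nat.pos_of_ne_zero hx'.2) ⟨x.1, by rw [← hx'.1, mul_comm]⟩
  rw [h _ (l1.trans hn), h' _ (l2.trans hn)]

lemma Agree.pow {N : ℕ} {f g : ArithmeticFunction ℂ} (h : Agree N f g) (k : ℕ) :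
    Agree N (f ^ k) (g ^ k) := by
  induction k with
  | zero => intro n _; rfl
  | succ k ih => rw [pow_succ, pow_succ]; exact ih.mul h

/-- support bound -/
def Supp (Y : ℕ) (f : ArithmeticFunction ℂ) : Prop := ∀ n, Y < n → f n = 0

lemma Supp.mul {Y Y' : ℕ} {f g : ArithmeticFunction ℂ} (h : Supp Y f) (h' : Supp Y' g) :
    Supp (Y * Y') (f * g) := by
  intro n hn
  rw [ArithmeticFunction.mul_apply]
  refine Finset.sum_eq_zero fun x hx => ?_
  have hx' := Nat.mem_divisorsAntidiagonal.1 hx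
  rcases le_or_gt x.1 Y with h1 | h1
  · rcases le_or_gt x.2 Y' with h2 | h2
    · have := Nat.mul_le_mul h1 h2
      omega
    · rw [h' _ h2, mul_zero]
  · rw [h _ h1, zero_mul]

lemma Supp.pow {Y : ℕ} {f : ArithmeticFunction ℂ} (h : Supp Y f) (k : ℕ) : Supp (Y ^ k) (f ^ k) := by
  induction k with
  | zero =>
    intro n hn
    simp at hn
    rw [pow_zero, ArithmeticFunction.one_apply_ne (by omega)]
  | succ k ih => rw [pow_succ, pow_succ]; exact ih.mul h

/-- Dirichlet polynomial -/
noncomputable def DP {q : ℕ} (χ : DirichletCharacter ℂ q) (f : ArithmeticFunction ℂ) (s : ℂ) : ℂ :=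
  LSeries (fun n => χ n * f n) s

lemma DP_summable {q : ℕ} (χ : DirichletCharacter ℂ q) {f : ArithmeticFunction ℂ} {Y : ℕ} (h : Supp Y f)
    (s : ℂ) : LSeriesSummable (fun n => χ n * f n) s := by
  refine summable_of_ne_finset_zero (s := Finset.range (Y + 1)) fun n hn => ?_
  have : Y < n := by simpa using hn
  rw [LSeries.term_of_ne_zero (by omega), h n this]; simp

lemma DP_eq {q : ℕ} (χ : DirichletCharacter ℂ q) {f : ArithmeticFunction ℂ} {Y : ℕ} (h : Supp Y f)
    (s : ℂ) : DP χ f s = ∑ n ∈ Finset.Icc 1 Y, χ n * f n * (n:ℂ) ^ (-s) := by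
  rw [DP, LSeries, tsum_eq_sum (s := Finset.Icc 1 Y)]
  · refine Finset.sum_congr rfl fun n hn => ?_
    rw [LSeries.term_of_ne_zero (by have := (Finset.mem_Icc.1 hn).1; omega), cpow_neg, div_eq_mul_inv]
  · intro n hn
    rcases eq_or_ne n 0 with rfl | h0
    · simp
    have : Y < n := by
      by_contra hc
      exact hn (Finset.mem_Icc.2 ⟨by omega, by omega⟩)
    rw [LSeries.term_of_ne_zero h0, h n this]; simp

lemma DP_mul {q : ℕ} (χ : DirichletCharacter ℂ q) {f g : ArithmeticFunction ℂ} {Y Y' : ℕ} (h : Supp Y f)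
    (h' : Supp Y' g) (s : ℂ) : DP χ (f * g) s = DP χ f s * DP χ g s := by
  rw [DP, DP, DP, ← LSeries_convolution' (DP_summable χ h s) (DP_summable χ h' s)]
  have := χ.mul_convolution_distrib f g
  congr 1
  rw [ArithmeticFunction.coe_mul] at this
  exact this.symm

lemma DP_one {q : ℕ} (χ : DirichletCharacter ℂ q) (s : ℂ) : DP χ 1 s = 1 := by
  have : Supp 1 (1 : ArithmeticFunction ℂ) := fun n hn => ArithmeticFunction.one_apply_ne (by omega)
  rw [DP_eq χ this]; simp

lemma af_sub_apply (f g : ArithmeticFunction ℂ) (n : ℕ) : (f - g) n = f n - g n := by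
  have h : f - g + g = f := sub_add_cancel f g
  have := congrArg (fun F : ArithmeticFunction ℂ => F n) h
  simp only [ArithmeticFunction.add_apply] at this
  rw [← this]; ring

lemma DP_sub {q : ℕ} (χ : DirichletCharacter ℂ q) {f g : ArithmeticFunction ℂ} {Y : ℕ} (h : Supp Y f)
    (h' : Supp Y g) (s : ℂ) : DP χ (f - g) s = DP χ f s - DP χ g s := by
  have h3 : Supp Y (f - g) := fun n hn => by
    rw [af_sub_apply, h n hn, h' n hn, sub_zero]
  rw [DP_eq χ h, DP_eq χ h', DP_eq χ h3, ← Finset.sum_sub_distrib]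
  refine Finset.sum_congr rfl fun n _ => ?_
  rw [af_sub_apply]; ring

lemma DP_pow {q : ℕ} (χ : DirichletCharacter ℂ q) {f : ArithmeticFunction ℂ} {Y : ℕ} (h : Supp Y f)
    (s : ℂ) (k : ℕ) : DP χ (f ^ k) s = (DP χ f s) ^ k := by
  induction k with
  | zero => rw [pow_zero, pow_zero, DP_one]
  | succ k ih => rw [pow_succ, pow_succ, DP_mul χ (h.pow k) h, ih]

end Agree
end LD


namespace LD

open DirichletCharacter

lemma conj_char {p : ℕ} [NeZero p] (hp : p.Prime) (χ : DirichletCharacter ℂ p) (b : ZMod p) :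
    (starRingEnd ℂ) (χ b) = χ b⁻¹ := by
  haveI := Fact.mk hp
  have : (starRingEnd ℂ) (χ b) = χ⁻¹ b := MulChar.star_apply' χ b
  rw [this, MulChar.inv_apply_eq_inv']
  by_cases hb : b = 0
  · subst hb; rw [inv_zero, MulChar.map_nonunit χ not_isUnit_zero, inv_zero]
  · have : χ b * χ b⁻¹ = 1 := by rw [← map_mul, mul_inv_cancel₀ hb, map_one]
    exact inv_eq_of_mul_eq_one_right this

lemma parseval {p : ℕ} [NeZero p] (hp : p.Prime) (F : ZMod p → ℂ) :
    ∑ χ : DirichletCharacter ℂ p, ‖∑ a, χ a * F a‖ ^ 2 =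
      ((p : ℝ) - 1) * ∑ a ∈ Finset.univ.erase (0 : ZMod p), ‖F a‖ ^ 2 := by
  haveI := Fact.mk hp
  apply Complex.ofReal_injective
  push_cast
  have e1 : ∀ χ : DirichletCharacter ℂ p, ((‖∑ a, χ a * F a‖ : ℝ) : ℂ) ^ 2 =
      ∑ b, ∑ a, (χ b⁻¹ * χ a) * (F a * (starRingEnd ℂ) (F b)) := by
    intro χ
    rw [← Complex.mul_conj', map_sum, Finset.mul_sum]
    refine Finset.sum_congr rfl fun b _ => ?_
    rw [Finset.sum_mul]
    refine Finset.sum_congr rfl fun a _ => ?_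
    rw [map_mul, conj_char hp]; ring
  simp_rw [e1]
  rw [Finset.sum_comm]
  rw [← Finset.sum_erase (s := Finset.univ) (a := (0 : ZMod p))]
  · rw [Finset.mul_sum]
    refine Finset.sum_congr rfl fun b hb => ?_
    have hb0 : b ≠ 0 := (Finset.mem_erase.1 hb).1
    rw [Finset.sum_comm]
    simp_rw [← Finset.sum_mul]
    simp_rw [DirichletCharacter.sum_char_inv_mul_char_eq ℂ (isUnit_iff_ne_zero.2 hb0)]
    simp only [ite_mul, zero_mul, Finset.sum_ite_eq, Finset.mem_univ, if_true]
    rw [Complex.mul_conj', Nat.totient_prime hp, Nat.cast_sub hp.one_le]; simp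
  · refine Finset.sum_eq_zero fun χ _ => Finset.sum_eq_zero fun a _ => ?_
    rw [inv_zero, MulChar.map_nonunit χ not_isUnit_zero, zero_mul, zero_mul]

lemma sum_nonzero {p : ℕ} [NeZero p] (hp : p.Prime) (G : ZMod p → ℝ) :
    ∑ a ∈ Finset.univ.erase (0 : ZMod p), G a = ∑ m ∈ Finset.Icc 1 (p - 1), G (m : ZMod p) := by
  symm
  have hp1 := hp.one_lt
  refine Finset.sum_nbij (fun n : ℕ => (n : ZMod p)) ?_ ?_ ?_ ?_
  · intro m hm
    have hm := Finset.mem_Icc.1 hm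
    simp only [Finset.mem_erase, Finset.mem_univ, and_true]
    rw [ne_eq, ZMod.natCast_eq_zero_iff]
    intro hd
    have := Nat.le_of_dvd (by omega) hd
    omega
  · intro a ha b hb hab
    have ha := Finset.mem_Icc.1 ha
    have hb := Finset.mem_Icc.1 hb
    have := (ZMod.natCast_eq_natCast_iff a b p).1 hab
    exact Nat.ModEq.eq_of_lt_of_lt this (by omega) (by omega)
  · intro x hx
    have hx0 : x ≠ 0 := by simpa using hx
    refine ⟨x.val, ?_, by simp⟩
    have h1 := ZMod.val_lt x
    have h2 : x.val ≠ 0 := by rwa [ne_eq, ZMod.val_eq_zero]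
    simp only [Finset.coe_Icc, Set.mem_Icc]
    omega
  · intro a _; rfl

lemma progression {p : ℕ} (hp : 0 < p) {m : ℕ} (hm : m < p) (Y : ℕ) :
    ∑ n ∈ (Finset.Icc 1 Y).filter (fun n => n % p = m ∧ n ≠ m), (n:ℝ)⁻¹ ≤ (1 + Real.log Y) / p := by
  have hp' : (0:ℝ) < p := by exact_mod_cast hp
  have hj : ∀ n ∈ (Finset.Icc 1 Y).filter (fun n => n % p = m ∧ n ≠ m), n / p ∈ Finset.Icc 1 Y := by
    intro n hn
    simp only [Finset.mem_filter, Finset.mem_Icc] at hn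
    have h1 := Nat.div_add_mod n p
    have h3 : n / p ≤ n := Nat.div_le_self _ _
    rw [Finset.mem_Icc]
    refine ⟨?_, by omega⟩
    rcases Nat.eq_zero_or_pos (n / p) with h | h
    · rw [h] at h1; omega
    · exact h
  calc _ ≤ ∑ n ∈ (Finset.Icc 1 Y).filter (fun n => n % p = m ∧ n ≠ m), (p:ℝ)⁻¹ * ((n / p : ℕ):ℝ)⁻¹ := by
        refine Finset.sum_le_sum fun n hn => ?_
        have h1 := (Finset.mem_Icc.1 (hj n hn)).1
        have h1' : (0:ℝ) < ((n / p : ℕ) : ℝ) := by exact_mod_cast h1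
        rw [← mul_inv]
        apply inv_anti₀ (by positivity)
        exact_mod_cast Nat.mul_div_le n p
    _ = (p:ℝ)⁻¹ * ∑ j ∈ ((Finset.Icc 1 Y).filter (fun n => n % p = m ∧ n ≠ m)).image (· / p), (j:ℝ)⁻¹ := by
        rw [← Finset.mul_sum, Finset.sum_image]
        intro a ha b hb hab
        simp only [Finset.coe_filter, Set.mem_setOf_eq] at ha hb
        simp only at hab
        rw [← Nat.div_add_mod a p, ← Nat.div_add_mod b p, hab, ha.2.1, hb.2.1]
    _ ≤ (p:ℝ)⁻¹ * ∑ j ∈ Finset.Icc 1 Y, (j:ℝ)⁻¹ := by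
        gcongr
        intro j hjm
        obtain ⟨n, hn, rfl⟩ := Finset.mem_image.1 hjm
        exact hj n hn
    _ ≤ (p:ℝ)⁻¹ * (1 + Real.log Y) := by gcongr; exact sum_inv_le Y
    _ = _ := by rw [mul_comm, div_eq_mul_inv]

theorem mean_square {p : ℕ} [NeZero p] (hp : p.Prime) {f : ArithmeticFunction ℂ} {Y : ℕ} (hf : Supp Y f)
    (hY : p ≤ Y) {K : ℝ} (hK : ∀ n, 1 ≤ n → n ≤ Y → ‖f n‖ ≤ K) {s : ℂ} (hs : 1 ≤ s.re) :
    ∃ R : ℕ → ℂ, (∀ m ∈ Finset.Icc 1 (p - 1), ‖R m‖ ≤ K * (1 + Real.log Y) / p) ∧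
    ∑ χ : DirichletCharacter ℂ p, ‖DP χ f s‖ ^ 2 =
      ((p:ℝ) - 1) * ∑ m ∈ Finset.Icc 1 (p - 1), ‖f m * (m:ℂ) ^ (-s) + R m‖ ^ 2 := by
  classical
  have hp1 := hp.one_lt
  have hK0 : 0 ≤ K := (norm_nonneg _).trans (hK 1 le_rfl (by omega))
  set c : ℕ → ℂ := fun n => f n * (n:ℂ) ^ (-s) with hc
  set F : ZMod p → ℂ := fun a => ∑ n ∈ (Finset.Icc 1 Y).filter (fun n : ℕ => (n : ZMod p) = a), c n with hF
  refine ⟨fun m => ∑ n ∈ (Finset.Icc 1 Y).filter (fun n => n % p = m ∧ n ≠ m), c n, ?_, ?_⟩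
  · intro m hm
    have hm := Finset.mem_Icc.1 hm
    refine (norm_sum_le _ _).trans ?_
    calc _ ≤ ∑ n ∈ (Finset.Icc 1 Y).filter (fun n => n % p = m ∧ n ≠ m), K * (n:ℝ)⁻¹ := by
          refine Finset.sum_le_sum fun n hn => ?_
          have hn := Finset.mem_Icc.1 (Finset.mem_filter.1 hn).1
          rw [hc, norm_mul]
          gcongr
          · exact hK n hn.1 hn.2
          · exact norm_cpow_le hn.1 hs
      _ ≤ K * ((1 + Real.log Y) / p) := by
          rw [← Finset.mul_sum]
          gcongr
          exact progression hp.pos (by omega) Y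
      _ = _ := by ring
  · have e : ∀ χ : DirichletCharacter ℂ p, DP χ f s = ∑ a, χ a * F a := by
      intro χ
      rw [DP_eq χ hf, ← Finset.sum_fiberwise (s := Finset.Icc 1 Y) (g := fun n : ℕ => (n : ZMod p))]
      refine Finset.sum_congr rfl fun a _ => ?_
      rw [hF, Finset.mul_sum]
      refine Finset.sum_congr rfl fun n hn => ?_
      rw [(Finset.mem_filter.1 hn).2, hc]; ring
    simp_rw [e]
    rw [parseval hp, sum_nonzero hp]
    congr 1
    refine Finset.sum_congr rfl fun m hm => ?_
    have hm := Finset.mem_Icc.1 hm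
    congr 2
    rw [hF]
    have hset : (Finset.Icc 1 Y).filter (fun n : ℕ => (n : ZMod p) = (m : ZMod p)) =
        insert m ((Finset.Icc 1 Y).filter (fun n => n % p = m ∧ n ≠ m)) := by
      ext n
      simp only [Finset.mem_filter, Finset.mem_Icc, Finset.mem_insert]
      rw [ZMod.natCast_eq_natCast_iff']
      rw [Nat.mod_eq_of_lt (by omega : m < p)]
      constructor
      · rintro ⟨h1, h2⟩
        by_cases h : n = m
        · exact Or.inl h
        · exact Or.inr ⟨h1, h2, h⟩
      · rintro (rfl | ⟨h1, h2, h3⟩)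
        · exact ⟨⟨hm.1, by omega⟩, Nat.mod_eq_of_lt (by omega)⟩
        · exact ⟨h1, h2⟩
    simp only
    rw [hset, Finset.sum_insert (by simp)]

end LD


namespace LD

open DirichletCharacter

section coefs

noncomputable def uF (X : ℕ) : ArithmeticFunction ℂ := ⟨fun n => if 1 ≤ n ∧ n ≤ X then 1 else 0, by simp⟩
noncomputable def gF (X : ℕ) : ArithmeticFunction ℂ :=
  ⟨fun n => if n ≤ X then -(Real.log n : ℂ) else 0, by simp⟩
noncomputable def mF (N : ℕ) : ArithmeticFunction ℂ :=
  ⟨fun n => if n ≤ N then ((ArithmeticFunction.moebius n : ℤ) : ℂ) else 0, by simp⟩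
noncomputable def nL : ArithmeticFunction ℂ :=
  ⟨fun n => -((ArithmeticFunction.vonMangoldt n : ℝ) : ℂ), by simp⟩

lemma uF_apply (X n : ℕ) : uF X n = if 1 ≤ n ∧ n ≤ X then 1 else 0 := rfl
lemma gF_apply (X n : ℕ) : gF X n = if n ≤ X then -(Real.log n : ℂ) else 0 := rfl
lemma mF_apply (X n : ℕ) : mF X n = if n ≤ X then ((ArithmeticFunction.moebius n : ℤ) : ℂ) else 0 := rfl
lemma nL_apply (n : ℕ) : nL n = -((ArithmeticFunction.vonMangoldt n : ℝ) : ℂ) := rfl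

lemma supp_uF (X : ℕ) : Supp X (uF X) := fun n hn => by rw [uF_apply, if_neg (by omega)]
lemma supp_gF (X : ℕ) : Supp X (gF X) := fun n hn => by rw [gF_apply, if_neg (by omega)]
lemma supp_mF (X : ℕ) : Supp X (mF X) := fun n hn => by rw [mF_apply, if_neg (by omega)]

lemma P_eq_DP {q : ℕ} [NeZero q] (χ : DirichletCharacter ℂ q) (X : ℕ) (s : ℂ) :
    P χ X s = DP χ (uF X) s := by
  rw [DP_eq χ (supp_uF X), P]
  refine Finset.sum_congr rfl fun n hn => ?_
  rw [uF_apply, if_pos (Finset.mem_Icc.1 hn), mul_one]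

lemma deriv_P_eq_DP {q : ℕ} [NeZero q] (χ : DirichletCharacter ℂ q) (X : ℕ) (s : ℂ) :
    deriv (P χ X) s = DP χ (gF X) s := by
  rw [DP_eq χ (supp_gF X), deriv_P]
  refine Finset.sum_congr rfl fun n hn => ?_
  rw [gF_apply, if_pos (Finset.mem_Icc.1 hn).2]; ring

lemma norm_uF (X n : ℕ) : ‖uF X n‖ ≤ 1 := by rw [uF_apply]; split_ifs <;> simp
lemma norm_mF (X n : ℕ) : ‖mF X n‖ ≤ 1 := by
  rw [mF_apply]; split_ifs
  · rw [Complex.norm_intCast]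
    exact_mod_cast ArithmeticFunction.abs_moebius_le_one
  · simp
lemma norm_gF (X n : ℕ) (hn : n ≠ 0) {η : ℝ} (hη : 0 < η) : ‖gF X n‖ ≤ η⁻¹ * (n:ℝ) ^ η := by
  have h1 : (1:ℝ) ≤ n := by exact_mod_cast Nat.pos_of_ne_zero hn
  rw [gF_apply]; split_ifs
  · rw [norm_neg, Complex.norm_real, Real.norm_of_nonneg (Real.log_nonneg h1)]
    have := Real.log_le_rpow_div (by positivity : (0:ℝ) ≤ n) hη
    rwa [div_eq_inv_mul] at this
  · simp; positivity

lemma norm_DP_mF {q : ℕ} [NeZero q] (χ : DirichletCharacter ℂ q) (X : ℕ) {s : ℂ} (hs : 1 ≤ s.re) :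
    ‖DP χ (mF X) s‖ ≤ 1 + Real.log X := by
  rw [DP_eq χ (supp_mF X)]
  refine (norm_sum_le _ _).trans (le_trans (Finset.sum_le_sum fun n hn => ?_) (sum_inv_le X))
  rw [norm_mul, norm_mul]
  have h1 := χ.norm_le_one n
  have h2 := norm_mF X n
  have h3 := norm_cpow_le (Finset.mem_Icc.1 hn).1 hs
  calc _ ≤ 1 * 1 * (n:ℝ)⁻¹ := by gcongr
    _ = _ := by ring

lemma agree_um {p : ℕ} (hp : 1 ≤ p) : Agree p (uF (p ^ 4) * mF p) 1 := by
  have h1 : Agree p (uF (p ^ 4)) ((ArithmeticFunction.zeta : ArithmeticFunction ℕ) : ArithmeticFunction ℂ) := by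
    intro n hn
    have : n ≤ p ^ 4 := hn.trans (Nat.le_self_pow (by norm_num) p)
    rw [uF_apply, ArithmeticFunction.natCoe_apply, ArithmeticFunction.zeta_apply]
    rcases Nat.eq_zero_or_pos n with rfl | h
    · simp
    · rw [if_pos ⟨h, this⟩, if_neg (by omega)]; simp
  have h2 : Agree p (mF p) ((ArithmeticFunction.moebius : ArithmeticFunction ℤ) : ArithmeticFunction ℂ) := by
    intro n hn
    rw [mF_apply, if_pos hn, ArithmeticFunction.intCoe_apply]
  have := h1.mul h2
  rwa [ArithmeticFunction.coe_zeta_mul_coe_moebius] at this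

lemma agree_gm {p : ℕ} (hp : 1 ≤ p) : Agree p (gF (p ^ 4) * mF p) nL := by
  intro n hn
  rw [ArithmeticFunction.mul_apply, nL_apply, ← ArithmeticFunction.log_mul_moebius_eq_vonMangoldt,
    ArithmeticFunction.mul_apply]
  push_cast
  rw [← Finset.sum_neg_distrib]
  refine Finset.sum_congr rfl fun x hx => ?_
  have h := Nat.mem_divisorsAntidiagonal.1 hx
  have l1 : x.1 ≤ n := Nat.le_of_dvd (Nat.pos_of_ne_zero h.2) ⟨x.2, h.1.symm⟩
  have l2 : x.2 ≤ n := Nat.le_of_dvd (Nat.pos_of_ne_zero h.2) ⟨x.1, by rw [← h.1, mul_comm]⟩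
  have : p ≤ p ^ 4 := Nat.le_self_pow (by norm_num) p
  rw [gF_apply, if_pos (by omega), mF_apply, if_pos (by omega), ArithmeticFunction.log_apply,
    ArithmeticFunction.intCoe_apply]
  push_cast; ring

lemma pow_rpow_le {p J n : ℕ} (hp : 1 ≤ p) (hn : n ≤ p ^ J) {η : ℝ} (hη : 0 ≤ η) :
    (n:ℝ) ^ η ≤ (p:ℝ) ^ (J * η) := by
  rw [Real.rpow_mul (by positivity), Real.rpow_natCast]
  apply Real.rpow_le_rpow (by positivity) _ hη
  exact_mod_cast hn

lemma coef_gm (k : ℕ) (ε : ℝ) (hε : 0 < ε) : ∃ C : ℝ, 1 ≤ C ∧ ∀ p : ℕ, 1 ≤ p → ∀ n : ℕ, 1 ≤ n →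
    n ≤ (p ^ 4 * p) ^ k → ‖((gF (p ^ 4) * mF p) ^ k) n‖ ≤ C * (p:ℝ) ^ ε := by
  set η : ℝ := ε / (20 * k ^ 2 + 1) with hη
  have hη0 : 0 < η := by positivity
  obtain ⟨C, hC1, hC⟩ := divisor_bound η hη0
  obtain ⟨D, hD1, hD⟩ := divisor_bound (η + 0 + η) (by positivity)
  refine ⟨max 1 ((η⁻¹ * 1 * C) ^ k * D ^ k), le_max_left _ _, fun p hp n hn hnp => ?_⟩
  have h1 := conv_bound (f := gF (p ^ 4)) (g := mF p) (by positivity) zero_le_one hη0.le le_rfl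
    (fun n hn => norm_gF _ n hn hη0) (fun n hn => by simpa using norm_mF p n) hC
  have h2 := pow_bound (by positivity) (by positivity) hD1 h1 hD k n (by omega)
  have hp1 : (1:ℝ) ≤ p := by exact_mod_cast hp
  calc _ ≤ _ := h2
    _ ≤ max 1 ((η⁻¹ * 1 * C) ^ k * D ^ k) * (p:ℝ) ^ ε := by
      gcongr
      · exact le_max_right _ _
      · rw [← pow_succ, ← pow_mul] at hnp
        refine (pow_rpow_le hp hnp (by positivity)).trans ?_
        apply Real.rpow_le_rpow_of_exponent_le hp1
        have : ε = η * (20 * k ^ 2 + 1) := by rw [hη]; field_simp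
        push_cast
        nlinarith

lemma coef_um (ε : ℝ) (hε : 0 < ε) : ∃ C : ℝ, 1 ≤ C ∧ ∀ p : ℕ, 1 ≤ p → ∀ n : ℕ, 1 ≤ n →
    n ≤ (p ^ 4 * p) → ‖(uF (p ^ 4) * mF p - 1) n‖ ≤ C * (p:ℝ) ^ ε := by
  set η : ℝ := ε / 5 with hη
  have hη0 : 0 < η := by positivity
  obtain ⟨C, hC1, hC⟩ := divisor_bound η hη0
  refine ⟨C + 1, by linarith, fun p hp n hn hnp => ?_⟩
  have h1 := conv_bound (f := uF (p ^ 4)) (g := mF p) zero_le_one zero_le_one le_rfl le_rfl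
    (fun n hn => by simpa using norm_uF _ n) (fun n hn => by simpa using norm_mF p n) hC n (by omega)
  have hp1 : (1:ℝ) ≤ p := by exact_mod_cast hp
  have h3 : ‖(1 : ArithmeticFunction ℂ) n‖ ≤ 1 := by
    rw [ArithmeticFunction.one_apply]; split_ifs <;> simp
  rw [af_sub_apply]
  have h4 : (n:ℝ) ^ (0 + 0 + η) ≤ (p:ℝ) ^ ε := by
    rw [← pow_succ] at hnp
    refine (pow_rpow_le hp hnp (by positivity)).trans ?_
    apply Real.rpow_le_rpow_of_exponent_le hp1
    rw [hη]; push_cast; linarith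
  have h5 : 1 ≤ (p:ℝ) ^ ε := Real.one_le_rpow hp1 hε.le
  calc _ ≤ _ := norm_sub_le _ _
    _ ≤ C * (p:ℝ) ^ ε + 1 := by
      refine add_le_add (h1.trans ?_) h3
      rw [one_mul, one_mul]; gcongr
    _ ≤ _ := by linarith

end coefs

section means

lemma R_bound (J : ℕ) {C : ℝ} (hC : 1 ≤ C) : ∃ D : ℝ, 1 ≤ D ∧ ∀ p : ℕ, 1 ≤ p →
    (C * (p:ℝ) ^ (1/16 : ℝ)) * (1 + Real.log ((p ^ J : ℕ) : ℝ)) / p ≤ D * (p:ℝ) ^ (-(7/8) : ℝ) := by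
  obtain ⟨B, hB1, hB⟩ := log_eps (1/16) (by norm_num)
  refine ⟨C * (B * (J + 1)), ?_, fun p hp => ?_⟩
  · have : (1:ℝ) ≤ J + 1 := by have : (0:ℝ) ≤ J := by positivity
                               linarith
    have : 1 ≤ B * (J + 1) := by nlinarith
    nlinarith
  have hp0 : (0:ℝ) < p := by exact_mod_cast hp
  have hl : 0 ≤ Real.log p := Real.log_natCast_nonneg p
  have h1 : 1 + Real.log ((p ^ J : ℕ) : ℝ) ≤ (B * (J + 1)) * (p:ℝ) ^ (1/16 : ℝ) := by
    push_cast
    rw [Real.log_pow]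
    have := hB p hp
    have hJ : (0:ℝ) ≤ J := by positivity
    calc _ ≤ (1 + 4 * Real.log p) * (J + 1) := by nlinarith
      _ ≤ (B * (p:ℝ) ^ (1/16 : ℝ)) * (J + 1) := by gcongr
      _ = _ := by ring
  rw [div_le_iff₀ hp0]
  have e : (p:ℝ) ^ (-(7/8) : ℝ) * p = (p:ℝ) ^ (1/16 : ℝ) * (p:ℝ) ^ (1/16 : ℝ) := by
    rw [← Real.rpow_add_one hp0.ne', ← Real.rpow_add hp0]; norm_num
  rw [mul_assoc _ _ (p:ℝ), e]
  calc _ ≤ (C * (p:ℝ) ^ (1/16 : ℝ)) * ((B * (J + 1)) * (p:ℝ) ^ (1/16 : ℝ)) := by gcongr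
    _ = _ := by ring

lemma mean_gm (k : ℕ) (hk : 0 < k) {s : ℂ} (hs : 1 ≤ s.re) : ∃ D : ℝ, 1 ≤ D ∧ ∀ (p : ℕ) [NeZero p], p.Prime →
    ∃ R : ℕ → ℂ, (∀ m ∈ Finset.Icc 1 (p - 1), ‖R m‖ ≤ D * (p:ℝ) ^ (-(7/8) : ℝ)) ∧
    ∑ χ : DirichletCharacter ℂ p, ‖deriv (P χ (p ^ 4)) s * DP χ (mF p) s‖ ^ (2 * k) =
      ((p:ℝ) - 1) * ∑ m ∈ Finset.Icc 1 (p - 1), ‖(nL ^ k) m * (m:ℂ) ^ (-s) + R m‖ ^ 2 := by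
  obtain ⟨C, hC1, hC⟩ := coef_gm k (1/16) (by norm_num)
  obtain ⟨D, hD1, hD⟩ := R_bound (5 * k) hC1
  refine ⟨D, hD1, fun p _ hp => ?_⟩
  have hsupp : Supp (p ^ 4 * p) (gF (p ^ 4) * mF p) := (supp_gF _).mul (supp_mF _)
  obtain ⟨R, hR, hsum⟩ := mean_square hp (hsupp.pow k)
    (by rw [← pow_succ, ← pow_mul]; exact Nat.le_self_pow (by omega) p)
    (hC p hp.one_le) hs
  refine ⟨R, fun m hm => (hR m hm).trans ?_, ?_⟩
  · have := hD p hp.one_le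
    rwa [← pow_succ, ← pow_mul]
  · rw [show (∑ m ∈ Finset.Icc 1 (p - 1), ‖(nL ^ k) m * (m:ℂ) ^ (-s) + R m‖ ^ 2) =
      ∑ m ∈ Finset.Icc 1 (p - 1), ‖((gF (p ^ 4) * mF p) ^ k) m * (m:ℂ) ^ (-s) + R m‖ ^ 2 from ?_, ← hsum]
    · refine Finset.sum_congr rfl fun χ _ => ?_
      rw [DP_pow χ hsupp, DP_mul χ (supp_gF _) (supp_mF _), deriv_P_eq_DP, norm_pow, ← pow_mul, mul_comm k]
    · refine Finset.sum_congr rfl fun m hm => ?_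
      rw [((agree_gm hp.one_le).pow k) m (by have := (Finset.mem_Icc.1 hm).2; omega)]

lemma mean_um {s : ℂ} (hs : 1 ≤ s.re) : ∃ D : ℝ, 1 ≤ D ∧ ∀ (p : ℕ) [NeZero p], p.Prime →
    ∑ χ : DirichletCharacter ℂ p, ‖P χ (p ^ 4) s * DP χ (mF p) s - 1‖ ^ 2 ≤
      D * (p:ℝ) ^ (1/4 : ℝ) := by
  obtain ⟨C, hC1, hC⟩ := coef_um (1/16) (by norm_num)
  obtain ⟨D, hD1, hD⟩ := R_bound 5 hC1
  refine ⟨D ^ 2, one_le_pow₀ hD1, fun p _ hp => ?_⟩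
  have hp0 : (0:ℝ) < p := by exact_mod_cast hp.pos
  have hp1 : (1:ℝ) ≤ p := by exact_mod_cast hp.one_le
  have hsupp : Supp (p ^ 4 * p) (uF (p ^ 4) * mF p) := (supp_uF _).mul (supp_mF _)
  have hs1 : Supp (p ^ 4 * p) (1 : ArithmeticFunction ℂ) := fun n hn => by
    refine ArithmeticFunction.one_apply_ne ?_
    have : 0 < p ^ 4 * p := by have := hp.pos; positivity
    omega
  have hss : Supp (p ^ 4 * p) (uF (p ^ 4) * mF p - 1) := fun n hn => by
    rw [af_sub_apply, hsupp n hn, hs1 n hn, sub_zero]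
  obtain ⟨R, hR, hsum⟩ := mean_square hp hss
    (by rw [← pow_succ]; exact Nat.le_self_pow (by omega) p)
    (hC p hp.one_le) hs
  have e : ∑ χ : DirichletCharacter ℂ p, ‖P χ (p ^ 4) s * DP χ (mF p) s - 1‖ ^ 2 =
      ∑ χ : DirichletCharacter ℂ p, ‖DP χ (uF (p ^ 4) * mF p - 1) s‖ ^ 2 := by
    refine Finset.sum_congr rfl fun χ _ => ?_
    rw [DP_sub χ hsupp hs1, DP_mul χ (supp_uF _) (supp_mF _), P_eq_DP, DP_one]
  rw [e, hsum]
  have b : ∑ m ∈ Finset.Icc 1 (p - 1), ‖(uF (p ^ 4) * mF p - 1) m * (m:ℂ) ^ (-s) + R m‖ ^ 2 ≤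
      ∑ m ∈ Finset.Icc 1 (p - 1), (D * (p:ℝ) ^ (-(7/8) : ℝ)) ^ 2 := by
    refine Finset.sum_le_sum fun m hm => ?_
    rw [af_sub_apply, agree_um hp.one_le m (by have := (Finset.mem_Icc.1 hm).2; omega), sub_self,
      zero_mul, zero_add]
    gcongr
    have h := hD p hp.one_le
    refine (hR m hm).trans ?_
    rwa [← pow_succ]
  rw [Finset.sum_const, Nat.card_Icc, nsmul_eq_mul] at b
  have hcard : ((p - 1 + 1 - 1 : ℕ) : ℝ) ≤ p := by exact_mod_cast (by omega : p - 1 + 1 - 1 ≤ p)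
  calc _ ≤ (p:ℝ) * ((p:ℝ) * (D * (p:ℝ) ^ (-(7/8) : ℝ)) ^ 2) := by
        refine mul_le_mul (by linarith) (b.trans ?_) (Finset.sum_nonneg fun _ _ => by positivity) (by positivity)
        gcongr
    _ = D ^ 2 * ((p:ℝ) ^ (1:ℝ) * ((p:ℝ) ^ (1:ℝ) * ((p:ℝ) ^ (-(7/8) : ℝ) * (p:ℝ) ^ (-(7/8) : ℝ)))) := by
        rw [Real.rpow_one]; ring
    _ = _ := by
        rw [← Real.rpow_add hp0, ← Real.rpow_add hp0, ← Real.rpow_add hp0]; norm_num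

end means

end LD


namespace LD

open DirichletCharacter

section pointwise

lemma Lam_nonneg (k n : ℕ) : 0 ≤ (ArithmeticFunction.vonMangoldt ^ k) n := by
  induction k generalizing n with
  | zero => rw [pow_zero, ArithmeticFunction.one_apply]; split_ifs <;> simp
  | succ k ih =>
    rw [pow_succ, ArithmeticFunction.mul_apply]
    exact Finset.sum_nonneg fun x _ => mul_nonneg (ih _) ArithmeticFunction.vonMangoldt_nonneg

lemma Lam_le (k n : ℕ) : (ArithmeticFunction.vonMangoldt ^ k) n ≤ Real.log n ^ k := by
  induction k generalizing n with
  | zero => rw [pow_zero, ArithmeticFunction.one_apply]; split_ifs <;> simp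
  | succ k ih =>
    rw [pow_succ, ArithmeticFunction.mul_apply, pow_succ, ← ArithmeticFunction.vonMangoldt_sum,
      Finset.mul_sum, ← Nat.sum_divisorsAntidiagonal' (f := fun _ b =>
        (∑ i ∈ n.divisors, ArithmeticFunction.vonMangoldt i) ^ k * ArithmeticFunction.vonMangoldt b)]
    refine Finset.sum_le_sum fun x hx => ?_
    have h := Nat.mem_divisorsAntidiagonal.1 hx
    have l1 : x.1 ≤ n := Nat.le_of_dvd (Nat.pos_of_ne_zero h.2) ⟨x.2, h.1.symm⟩
    have hx1 : x.1 ≠ 0 := by rintro h0; rw [h0, zero_mul] at h; exact h.2 h.1.symm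
    have : (0:ℝ) < x.1 := by exact_mod_cast Nat.pos_of_ne_zero hx1
    refine mul_le_mul_of_nonneg_right ((ih _).trans ?_) ArithmeticFunction.vonMangoldt_nonneg
    rw [ArithmeticFunction.vonMangoldt_sum]
    have := Real.log_natCast_nonneg x.1
    gcongr

lemma nL_pow (k n : ℕ) : (nL ^ k) n = (-1) ^ k * (((ArithmeticFunction.vonMangoldt ^ k) n : ℝ) : ℂ) := by
  induction k generalizing n with
  | zero => 
    simp only [pow_zero, ArithmeticFunction.one_apply]; split_ifs <;> simp
  | succ k ih =>
    rw [pow_succ, ArithmeticFunction.mul_apply, pow_succ ArithmeticFunction.vonMangoldt,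
      ArithmeticFunction.mul_apply]
    push_cast
    rw [Finset.mul_sum]
    refine Finset.sum_congr rfl fun x _ => ?_
    rw [ih, nL_apply]; ring

lemma norm_nL_pow (k n : ℕ) : ‖(nL ^ k) n‖ = (ArithmeticFunction.vonMangoldt ^ k) n := by
  rw [nL_pow, norm_mul, norm_pow, norm_neg, norm_one, one_pow, one_mul, Complex.norm_real,
    Real.norm_of_nonneg (Lam_nonneg k n)]

/-- the limiting moment -/
noncomputable def mom (k : ℕ) : ℝ := ∑' n : ℕ, ((ArithmeticFunction.vonMangoldt ^ k) n / n) ^ 2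

lemma mom_term_le (k n : ℕ) : ((ArithmeticFunction.vonMangoldt ^ k) n / n) ^ 2 ≤
    (4 ^ k * (2 * k).factorial) * (1 / (n:ℝ) ^ (3/2 : ℝ)) := by
  rcases Nat.eq_zero_or_pos n with rfl | hn
  · simp
  have hn0 : (0:ℝ) < n := by exact_mod_cast hn
  have hl : 0 ≤ Real.log n := Real.log_natCast_nonneg n
  have h1 := Lam_le k n
  have h0 := Lam_nonneg k n
  have h2 := Real.pow_div_factorial_le_exp (Real.log n / 2) (by positivity) (2 * k)
  have h3 : Real.exp (Real.log n / 2) = (n:ℝ) ^ (1/2 : ℝ) := by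
    rw [Real.rpow_def_of_pos hn0]; congr 1; ring
  rw [h3, div_le_iff₀ (by positivity)] at h2
  have h4 : Real.log n ^ (2 * k) ≤ 4 ^ k * (2 * k).factorial * (n:ℝ) ^ (1/2 : ℝ) := by
    have : Real.log n ^ (2 * k) = 4 ^ k * (Real.log n / 2) ^ (2 * k) := by
      rw [div_pow, pow_mul 2 2 k]; norm_num; field_simp
    rw [this]
    calc _ ≤ 4 ^ k * ((n:ℝ) ^ (1/2 : ℝ) * ((2 * k).factorial : ℝ)) := by gcongr
      _ = _ := by ring
  have h5 : (n:ℝ) ^ (1/2 : ℝ) * (n:ℝ) ^ (3/2 : ℝ) = (n:ℝ) ^ 2 := by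
    rw [← Real.rpow_add hn0, ← Real.rpow_natCast]; norm_num
  rw [div_pow, mul_one_div, div_le_div_iff₀ (by positivity) (by positivity), ← h5, ← mul_assoc]
  gcongr
  calc _ ≤ (Real.log n ^ k) ^ 2 := by gcongr
    _ = Real.log n ^ (2 * k) := by rw [← pow_mul, mul_comm]
    _ ≤ _ := h4

lemma mom_summable (k : ℕ) : Summable (fun n : ℕ => ((ArithmeticFunction.vonMangoldt ^ k) n / n) ^ 2) := by
  refine Summable.of_nonneg_of_le (fun _ => by positivity) (mom_term_le k) ?_
  exact (Real.summable_one_div_nat_rpow.2 (by norm_num)).mul_left _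

lemma mom_bound : ∃ B : ℝ, 0 < B ∧ ∀ k, mom k ≤ B * (4 ^ k * (2 * k).factorial) := by
  have hs := Real.summable_one_div_nat_rpow.2 (by norm_num : (1:ℝ) < 3/2)
  refine ⟨(∑' n : ℕ, 1 / (n:ℝ) ^ (3/2 : ℝ)) + 1, by positivity, fun k => ?_⟩
  have := (mom_summable k).tsum_le_tsum (mom_term_le k) (hs.mul_left _)
  rw [tsum_mul_left] at this
  rw [mom]
  have h : (0:ℝ) < (4 ^ k * (2 * k).factorial) := by positivity
  nlinarith

lemma mom_pos (k : ℕ) : 0 < mom k := by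
  have h2 : 0 < (ArithmeticFunction.vonMangoldt ^ k) (2 ^ k) := by
    induction k with
    | zero => simp
    | succ k ih =>
      rw [pow_succ ArithmeticFunction.vonMangoldt, ArithmeticFunction.mul_apply]
      have hm : (2 ^ k, 2) ∈ (2 ^ (k + 1)).divisorsAntidiagonal := by
        rw [Nat.mem_divisorsAntidiagonal]; exact ⟨by ring, by positivity⟩
      refine lt_of_lt_of_le ?_ (Finset.single_le_sum
        (f := fun x : ℕ × ℕ => (ArithmeticFunction.vonMangoldt ^ k) x.1 * ArithmeticFunction.vonMangoldt x.2)
        (fun x _ => mul_nonneg (Lam_nonneg _ _) ArithmeticFunction.vonMangoldt_nonneg) hm)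
      refine mul_pos ih ?_
      rw [ArithmeticFunction.vonMangoldt_apply_prime Nat.prime_two]
      exact Real.log_pos (by norm_num)
  refine (mom_summable k).tsum_pos (fun _ => by positivity) (2 ^ k) ?_
  positivity

lemma pow_sub_pow_abs {a b M : ℝ} (ha : 0 ≤ a) (hb : 0 ≤ b) (haM : a ≤ M) (hbM : b ≤ M) (k : ℕ) :
    |a ^ k - b ^ k| ≤ k * M ^ (k - 1) * |a - b| := by
  have := abs_pow_sub_pow_le a b k
  refine this.trans ?_
  rw [abs_of_nonneg ha, abs_of_nonneg hb]
  have h : max a b ≤ M := max_le haM hbM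
  have h0 : 0 ≤ max a b := ha.trans (le_max_left _ _)
  calc |a - b| * k * max a b ^ (k - 1) ≤ |a - b| * k * M ^ (k - 1) := by gcongr
    _ = _ := by ring

lemma pt_bounds (t δ : ℝ) (hδ : 0 < δ) : ∃ C : ℝ, 1 ≤ C ∧ ∀ (p : ℕ) [NeZero p], p.Prime →
    ∀ χ : DirichletCharacter ℂ p,
    ‖DP χ (mF p) (1 + t * I)‖ ≤ C * (p:ℝ) ^ δ ∧
    ‖deriv (P χ (p ^ 4)) (1 + t * I) * DP χ (mF p) (1 + t * I)‖ ≤ C * (p:ℝ) ^ δ ∧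
    (χ ≠ 1 → ‖deriv (LFunction χ) (1 + t * I) / LFunction χ (1 + t * I)‖ ≤ C * (p:ℝ) ^ δ) := by
  obtain ⟨B, hB1, hB⟩ := log_eps (δ / 3) (by positivity)
  obtain ⟨c, hc, hlow⟩ := lower t (δ / 2) (by positivity)
  obtain ⟨U, hU1, hup⟩ := upper ‖(1 + t * I : ℂ)‖ (δ / 2) (by positivity)
  have hre : (1:ℝ) ≤ (1 + t * I : ℂ).re := by simp
  have hB3 : B ≤ B ^ 3 := le_self_pow₀ hB1 (by norm_num)
  have hUc : 0 < U / c := by positivity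
  refine ⟨B ^ 3 + U / c, by linarith, fun p _ hp χ => ?_⟩
  have hp1 : (1:ℝ) ≤ p := by exact_mod_cast hp.one_le
  have hp0 : (0:ℝ) < p := by linarith
  have hl : 0 ≤ Real.log p := Real.log_natCast_nonneg p
  have hb := hB p hp.one_le
  have hM : ‖DP χ (mF p) (1 + t * I)‖ ≤ B * (p:ℝ) ^ (δ/3) := by
    refine (norm_DP_mF χ p hre).trans (le_trans ?_ hb); linarith
  have hd : ‖deriv (P χ (p ^ 4)) (1 + t * I)‖ ≤ (B * (p:ℝ) ^ (δ/3)) * (B * (p:ℝ) ^ (δ/3)) := by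
    refine (norm_deriv_P_le χ (p ^ 4) hre).trans ?_
    push_cast
    rw [Real.log_pow]
    push_cast
    refine mul_le_mul (by linarith) hb (by positivity) (by positivity)
  have e3 : ((B * (p:ℝ) ^ (δ/3)) * (B * (p:ℝ) ^ (δ/3))) * (B * (p:ℝ) ^ (δ/3)) = B ^ 3 * (p:ℝ) ^ δ := by
    have : (p:ℝ) ^ δ = (p:ℝ) ^ (δ/3) * (p:ℝ) ^ (δ/3) * (p:ℝ) ^ (δ/3) := by
      rw [← Real.rpow_add hp0, ← Real.rpow_add hp0]; congr 1; ring
    rw [this]; ring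
  have hpd : 0 < (p:ℝ) ^ δ := by positivity
  refine ⟨?_, ?_, fun hχ => ?_⟩
  · refine hM.trans (mul_le_mul (by linarith) ?_ (by positivity) (by positivity))
    exact Real.rpow_le_rpow_of_exponent_le hp1 (by linarith)
  · rw [norm_mul]
    calc _ ≤ ((B * (p:ℝ) ^ (δ/3)) * (B * (p:ℝ) ^ (δ/3))) * (B * (p:ℝ) ^ (δ/3)) := by gcongr
      _ ≤ _ := by rw [e3]; gcongr; linarith
  · have h1 := hlow p hp χ hχ
    have h2 := (hup p χ hχ (1 + t * I) hre le_rfl).2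
    rw [norm_div]
    calc _ ≤ (U * (p:ℝ) ^ (δ/2)) / (c * (p:ℝ) ^ (-(δ/2))) := by gcongr
      _ = U / c * (p:ℝ) ^ δ := by
        rw [Real.rpow_neg hp0.le]
        have : (p:ℝ) ^ δ = (p:ℝ) ^ (δ/2) * (p:ℝ) ^ (δ/2) := by
          rw [← Real.rpow_add hp0]; congr 1; ring
        rw [this]; field_simp
      _ ≤ _ := by gcongr; linarith [pow_pos (by linarith : 0 < B) 3]

lemma pt_diff (t : ℝ) (k : ℕ) : ∃ C : ℝ, 1 ≤ C ∧ ∀ (p : ℕ) [NeZero p], p.Prime →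
    ∀ χ : DirichletCharacter ℂ p,
    ‖deriv (P χ (p ^ 4)) (1 + t * I) * DP χ (mF p) (1 + t * I)‖ ^ (2 * k) ≤ C * (p:ℝ) ^ (1/8 : ℝ) ∧
    (χ ≠ 1 → |‖deriv (LFunction χ) (1 + t * I) / LFunction χ (1 + t * I)‖ ^ (2 * k) -
      ‖deriv (P χ (p ^ 4)) (1 + t * I) * DP χ (mF p) (1 + t * I)‖ ^ (2 * k)| ≤
        C * (p:ℝ) ^ (1/8 : ℝ) * (‖P χ (p ^ 4) (1 + t * I) * DP χ (mF p) (1 + t * I) - 1‖ + 1 / p)) := by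
  set δ : ℝ := 1 / (8 * (2 * k + 2)) with hδ
  have hδ0 : 0 < δ := by positivity
  obtain ⟨C, hC1, hC⟩ := pt_bounds t δ hδ0
  set T : ℝ := 12 * (‖(1 + t * I : ℂ)‖ + 1) with hT
  have hT0 : 0 < T := by positivity
  refine ⟨C ^ (2 * k) + (2 * k : ℕ) * C ^ (2 * k - 1) * (C ^ 2 * (1 + 2 * T)), ?_, fun p _ hp χ => ?_⟩
  · have : 1 ≤ C ^ (2 * k) := one_le_pow₀ hC1
    have : 0 ≤ (2 * k : ℕ) * C ^ (2 * k - 1) * (C ^ 2 * (1 + 2 * T)) := by positivity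
    linarith
  have hp1 : (1:ℝ) ≤ p := by exact_mod_cast hp.one_le
  have hp0 : (0:ℝ) < p := by linarith
  obtain ⟨hM, hW, hZ⟩ := hC p hp χ
  set s : ℂ := 1 + t * I with hs
  have hre : (1:ℝ) ≤ s.re := by simp [hs]
  set x : ℝ := (p:ℝ) ^ δ with hx
  have hx1 : 1 ≤ x := Real.one_le_rpow hp1 hδ0.le
  have hxk : ∀ j : ℕ, j ≤ 2 * k + 2 → x ^ j ≤ (p:ℝ) ^ (1/8:ℝ) := by
    intro j hj
    calc x ^ j ≤ x ^ (2 * k + 2) := pow_le_pow_right₀ hx1 hj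
      _ = (p:ℝ) ^ (1/8:ℝ) := by
        rw [hx, ← Real.rpow_natCast, ← Real.rpow_mul hp0.le, hδ]; congr 1; push_cast; field_simp
  have hCnn : (0:ℝ) ≤ (2 * k : ℕ) * C ^ (2 * k - 1) * (C ^ 2 * (1 + 2 * T)) := by positivity
  refine ⟨?_, fun hχ => ?_⟩
  · calc _ ≤ (C * x) ^ (2 * k) := by gcongr
      _ = C ^ (2 * k) * x ^ (2 * k) := mul_pow _ _ _
      _ ≤ C ^ (2 * k) * (p:ℝ) ^ (1/8:ℝ) := by gcongr; exact hxk _ (by omega)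
      _ ≤ _ := by gcongr; linarith
  specialize hZ hχ
  rcases Nat.eq_zero_or_pos k with rfl | hk
  · simp; positivity
  set M := DP χ (mF p) s
  set l := P χ (p ^ 4) s
  set l' := deriv (P χ (p ^ 4)) s
  set L := LFunction χ s
  set L' := deriv (LFunction χ) s
  have hL0 : L ≠ 0 := by
    obtain ⟨c, hc, hlow⟩ := lower t 1 one_pos
    have := hlow p hp χ hχ
    have h2 : 0 < c * (p:ℝ) ^ (-1 : ℝ) := by positivity
    exact norm_pos_iff.1 (h2.trans_le this)
  have a1 : ‖L - l‖ ≤ T / p := by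
    refine (approx4 χ hχ (by linarith)).trans ?_
    gcongr; linarith [norm_nonneg s]
  have a2 : ‖L' - l'‖ ≤ T / p := approx4' χ hχ hre
  have key : L' / L - l' * M = -(L' / L) * (l * M - 1) + (L' - l') * M - (L' / L) * (L - l) * M := by
    field_simp; ring
  have hD : ‖L' / L - l' * M‖ ≤ C ^ 2 * (1 + 2 * T) * x ^ 2 * (‖l * M - 1‖ + 1 / p) := by
    rw [key]
    refine (norm_sub_le _ _).trans ((add_le_add_left (norm_add_le _ _) _).trans ?_)
    rw [norm_mul, norm_mul, norm_mul, norm_mul, norm_neg]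
    set E := ‖l * M - 1‖
    have hE : 0 ≤ E := norm_nonneg _
    calc _ ≤ (C * x) * E + (T / p) * (C * x) + (C * x) * (T / p) * (C * x) := by gcongr
      _ ≤ (C ^ 2 * x ^ 2) * E + (T / p) * (C ^ 2 * x ^ 2) + (C ^ 2 * x ^ 2) * (T / p) := by
        have : C * x ≤ C ^ 2 * x ^ 2 := by
          have : 1 ≤ C * x := by nlinarith
          nlinarith
        have h2 : (C * x) * (T / p) * (C * x) = (C ^ 2 * x ^ 2) * (T / p) := by ring
        rw [h2]; gcongr
      _ = C ^ 2 * x ^ 2 * (E + 2 * T * (1 / p)) := by ring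
      _ ≤ C ^ 2 * x ^ 2 * ((1 + 2 * T) * (E + 1 / p)) := by
        gcongr
        have : (0:ℝ) < 1 / p := by positivity
        nlinarith
      _ = _ := by ring
  have h1 := pow_sub_pow_abs (norm_nonneg (L' / L)) (norm_nonneg (l' * M)) hZ hW (2 * k)
  refine h1.trans ?_
  have h2 : |‖L' / L‖ - ‖l' * M‖| ≤ ‖L' / L - l' * M‖ := abs_norm_sub_norm_le _ _
  calc _ ≤ (2 * k : ℕ) * (C * x) ^ (2 * k - 1) * (C ^ 2 * (1 + 2 * T) * x ^ 2 * (‖l * M - 1‖ + 1 / p)) := by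
        gcongr; exact h2.trans hD
    _ = (2 * k : ℕ) * C ^ (2 * k - 1) * (C ^ 2 * (1 + 2 * T)) * x ^ (2 * k - 1 + 2) * (‖l * M - 1‖ + 1 / p) := by
        rw [mul_pow, pow_add]; ring
    _ ≤ _ := by
        gcongr
        · linarith [pow_pos (by linarith : 0 < C) (2 * k)]
        · exact hxk _ (by omega)

end pointwise

end LD


namespace LD

open DirichletCharacter

section final

lemma triv_bound (t : ℝ) (ht : t ≠ 0) : ∃ C : ℝ, 1 ≤ C ∧ ∀ (p : ℕ) [NeZero p], p.Prime →
    ‖deriv (LFunction (1 : DirichletCharacter ℂ p)) (1 + t * I) /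
      LFunction (1 : DirichletCharacter ℂ p) (1 + t * I)‖ ≤ C := by
  set s : ℂ := 1 + t * I with hs
  have hs1 : s ≠ 1 := by simp [hs, ht]
  have hre : s.re = 1 := by simp [hs]
  have hz : riemannZeta s ≠ 0 := riemannZeta_ne_zero_of_one_le_re hre.ge
  refine ⟨‖logDeriv riemannZeta s‖ + 2, by linarith [norm_nonneg (logDeriv riemannZeta s)], fun p _ hp => ?_⟩
  have hp0 : (0:ℝ) < p := by exact_mod_cast hp.pos
  have hp2 : (2:ℝ) ≤ p := by exact_mod_cast hp.two_le
  have hpc : (p:ℂ) ≠ 0 := by exact_mod_cast hp.pos.ne'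
  have hev : LFunction (1 : DirichletCharacter ℂ p) =ᶠ[nhds s]
      fun z => (1 - (p:ℂ) ^ (-z)) * riemannZeta z := by
    filter_upwards [isOpen_ne.mem_nhds hs1] with z hz
    have := LFunctionTrivChar_eq_mul_riemannZeta (N := p) hz
    rw [LFunctionTrivChar, hp.primeFactors, Finset.prod_singleton] at this
    exact this
  rw [hev.deriv_eq, hev.eq_of_nhds]
  have hn : ‖(p:ℂ) ^ (-s)‖ = (p:ℝ)⁻¹ := by
    rw [Complex.norm_natCast_cpow_of_pos hp.pos, neg_re, hre, Real.rpow_neg_one]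
  have hhalf : (p:ℝ)⁻¹ ≤ 1/2 := by rw [inv_le_comm₀ hp0 (by norm_num)]; linarith
  have hlow : 1/2 ≤ ‖1 - (p:ℂ) ^ (-s)‖ := by
    have := norm_sub_norm_le (1:ℂ) ((p:ℂ) ^ (-s))
    rw [norm_one, hn] at this; linarith
  have hne : 1 - (p:ℂ) ^ (-s) ≠ 0 := norm_pos_iff.1 (by linarith)
  have hder : HasDerivAt (fun z : ℂ => 1 - (p:ℂ) ^ (-z)) (-((p:ℂ) ^ (-s) * Complex.log p * (-1))) s := by
    have := ((hasDerivAt_neg s).const_cpow (c := (p:ℂ)) (Or.inl hpc)).const_sub 1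
    exact this
  have h := logDeriv_mul (f := fun z : ℂ => 1 - (p:ℂ) ^ (-z)) (g := riemannZeta) s hne hz
    hder.differentiableAt (differentiableAt_riemannZeta hs1)
  have h' : deriv (fun z => (1 - (p:ℂ) ^ (-z)) * riemannZeta z) s / ((1 - (p:ℂ) ^ (-s)) * riemannZeta s)
    = logDeriv (fun z => (1 - (p:ℂ) ^ (-z)) * riemannZeta z) s := rfl
  have h2 : logDeriv (fun z : ℂ => 1 - (p:ℂ) ^ (-z)) s =
    (-((p:ℂ) ^ (-s) * Complex.log p * (-1))) / (1 - (p:ℂ) ^ (-s)) := by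
    rw [logDeriv_apply, hder.deriv]
  rw [h']
  have h3 : ‖logDeriv (fun z : ℂ => 1 - (p:ℂ) ^ (-z)) s‖ ≤ 2 := by
    rw [h2, norm_div, div_le_iff₀ (by linarith), norm_neg, norm_mul, norm_mul, hn, norm_neg, norm_one,
      ← Complex.natCast_log, Complex.norm_real, Real.norm_of_nonneg (Real.log_natCast_nonneg p)]
    have : (p:ℝ)⁻¹ * Real.log p ≤ 1 := by
      rw [inv_mul_le_iff₀ hp0, mul_one]
      exact (Real.log_le_sub_one_of_pos hp0).trans (by linarith)
    linarith
  calc _ ≤ ‖logDeriv (fun z : ℂ => 1 - (p:ℂ) ^ (-z)) s‖ + ‖logDeriv riemannZeta s‖ := by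
        rw [h]; exact norm_add_le _ _
    _ ≤ _ := by linarith

/-- The values averaged in the statement. -/
noncomputable def val (t : ℝ) {p : ℕ} [NeZero p] (χ : DirichletCharacter ℂ p) : ℝ :=
  open Classical in
  if t = 0 ∧ χ = 1 then 0 else ‖deriv (LFunction χ) (1 + t * I) / LFunction χ (1 + t * I)‖

lemma card_char {p : ℕ} [NeZero p] (hp : p.Prime) :
    ((Finset.univ : Finset (DirichletCharacter ℂ p)).card : ℝ) = (p:ℝ) - 1 := by
  have h : Nat.card (DirichletCharacter ℂ p) = p.totient := DirichletCharacter.card_eq_totient_of_hasEnoughRootsOfUnity ℂ p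
  rw [Finset.card_univ, ← Nat.card_eq_fintype_card, h, Nat.totient_prime hp, Nat.cast_sub hp.one_le]
  simp

/-- total error bound -/
lemma total_diff (t : ℝ) (k : ℕ) (hk : 0 < k) : ∃ C : ℝ, 1 ≤ C ∧ ∀ (p : ℕ) [NeZero p], p.Prime →
    |∑ χ : DirichletCharacter ℂ p, val t χ ^ (2 * k) -
     ∑ χ : DirichletCharacter ℂ p, ‖deriv (P χ (p ^ 4)) (1 + t * I) * DP χ (mF p) (1 + t * I)‖ ^ (2 * k)|
      ≤ C * (p:ℝ) ^ (3/4 : ℝ) := by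
  classical
  obtain ⟨C, hC1, hC⟩ := pt_diff t k
  obtain ⟨D, hD1, hD⟩ := mean_um (s := 1 + t * I) (by simp)
  obtain ⟨T, hT1, hT⟩ : ∃ T : ℝ, 1 ≤ T ∧ ∀ (p : ℕ) [NeZero p], p.Prime →
      val t (1 : DirichletCharacter ℂ p) ≤ T := by
    by_cases ht : t = 0
    · exact ⟨1, le_rfl, fun p _ hp => by simp [val, ht]⟩
    · obtain ⟨T, hT1, hT⟩ := triv_bound t ht
      refine ⟨T, hT1, fun p _ hp => ?_⟩
      rw [val, if_neg (by tauto)]; exact hT p hp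
  refine ⟨C * (D + 1) + C + T ^ (2 * k), by nlinarith [one_le_pow₀ (n := 2 * k) hT1], fun p _ hp => ?_⟩
  have hp1 : (1:ℝ) ≤ p := by exact_mod_cast hp.one_le
  have hp0 : (0:ℝ) < p := by linarith
  set s : ℂ := 1 + t * I
  set W : DirichletCharacter ℂ p → ℝ := fun χ => ‖deriv (P χ (p ^ 4)) s * DP χ (mF p) s‖ ^ (2 * k) with hW
  set E : DirichletCharacter ℂ p → ℝ := fun χ => ‖P χ (p ^ 4) s * DP χ (mF p) s - 1‖ with hE
  set x : ℝ := (p:ℝ) ^ (1/8 : ℝ) with hx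
  have hx1 : 1 ≤ x := Real.one_le_rpow hp1 (by norm_num)
  have hvn : ∀ χ : DirichletCharacter ℂ p, 0 ≤ val t χ := by
    intro χ; rw [val]; split_ifs <;> positivity
  have hpt : ∀ χ : DirichletCharacter ℂ p, |val t χ ^ (2 * k) - W χ| ≤
      C * x * (E χ + 1 / p) + (if χ = 1 then C * x + T ^ (2 * k) else 0) := by
    intro χ
    by_cases hχ : χ = 1
    · rw [if_pos hχ]
      have h1 := (hC p hp χ).1
      have h2 : val t χ ^ (2 * k) ≤ T ^ (2 * k) := by
        have := hvn χ; have := hT p hp; rw [← hχ] at this; gcongr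
      have h3 : 0 ≤ W χ := by positivity
      have h4 : 0 ≤ C * x * (E χ + 1 / p) := by positivity
      have h5 : 0 ≤ val t χ ^ (2 * k) := pow_nonneg (hvn χ) _
      rw [abs_le]; constructor
      · have : W χ ≤ C * x := h1
        have : 0 ≤ T ^ (2 * k) := by positivity
        linarith
      · have : 0 ≤ C * x := by positivity
        linarith
    · rw [if_neg hχ, add_zero, val, if_neg (by tauto)]
      exact (hC p hp χ).2 hχ
  rw [← Finset.sum_sub_distrib]
  refine (Finset.abs_sum_le_sum_abs _ _).trans ((Finset.sum_le_sum fun χ _ => hpt χ).trans ?_)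
  rw [Finset.sum_add_distrib, Finset.sum_ite_eq' Finset.univ, if_pos (Finset.mem_univ _), ← Finset.mul_sum,
    Finset.sum_add_distrib, Finset.sum_const, nsmul_eq_mul, card_char hp]
  have hcs : (∑ χ, E χ) ^ 2 ≤ (p:ℝ) * (D * (p:ℝ) ^ (1/4 : ℝ)) := by
    have := sq_sum_le_card_mul_sum_sq (s := (Finset.univ : Finset (DirichletCharacter ℂ p))) (f := E)
    rw [card_char hp] at this
    refine this.trans (mul_le_mul (by linarith) (hD p hp) (Finset.sum_nonneg fun _ _ => by positivity) hp0.le)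
  have hsE : ∑ χ, E χ ≤ D * (p:ℝ) ^ (5/8 : ℝ) := by
    refine (sq_le_sq₀ (Finset.sum_nonneg fun _ _ => by positivity) (by positivity)).1 ?_
    refine hcs.trans ?_
    have e : (p:ℝ) * (p:ℝ) ^ (1/4 : ℝ) = ((p:ℝ) ^ (5/8 : ℝ)) ^ 2 := by
      rw [← Real.rpow_natCast, ← Real.rpow_mul hp0.le, ← Real.rpow_one_add' hp0.le (by norm_num)]; norm_num
    rw [mul_pow, ← e]
    have : D ≤ D ^ 2 := le_self_pow₀ hD1 (by norm_num)
    calc _ = D * ((p:ℝ) * (p:ℝ) ^ (1/4 : ℝ)) := by ring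
      _ ≤ _ := by gcongr
  have h6 : ((p:ℝ) - 1) * (1 / p) ≤ (p:ℝ) ^ (5/8 : ℝ) := by
    refine le_trans ?_ (Real.one_le_rpow hp1 (by norm_num))
    rw [mul_one_div, div_le_one hp0]; linarith
  have h7 : x * (p:ℝ) ^ (5/8 : ℝ) = (p:ℝ) ^ (3/4 : ℝ) := by
    rw [hx, ← Real.rpow_add hp0]; norm_num
  have h8 : x ≤ (p:ℝ) ^ (3/4 : ℝ) := Real.rpow_le_rpow_of_exponent_le hp1 (by norm_num)
  have h9 : 1 ≤ (p:ℝ) ^ (3/4 : ℝ) := Real.one_le_rpow hp1 (by norm_num)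
  calc _ ≤ C * x * (D * (p:ℝ) ^ (5/8 : ℝ) + (p:ℝ) ^ (5/8 : ℝ)) + (C * (p:ℝ) ^ (3/4 : ℝ) + T ^ (2 * k) * (p:ℝ) ^ (3/4 : ℝ)) := by
        gcongr
        exact le_mul_of_one_le_right (by positivity) h9
    _ = C * (D + 1) * (x * (p:ℝ) ^ (5/8 : ℝ)) + (C * (p:ℝ) ^ (3/4 : ℝ) + T ^ (2 * k) * (p:ℝ) ^ (3/4 : ℝ)) := by ring
    _ = _ := by rw [h7]; ring

/-- ℓ² perturbation -/
lemma sq_pert (a r : ℂ) {η : ℝ} (hη : 0 < η) : |‖a + r‖ ^ 2 - ‖a‖ ^ 2| ≤ η * ‖a‖ ^ 2 + (1 + η⁻¹) * ‖r‖ ^ 2 := by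
  have h1 := norm_add_le a r
  have h2 : ‖a‖ ≤ ‖a + r‖ + ‖r‖ := by simpa using norm_sub_le (a + r) r
  have h3 := norm_nonneg a
  have h4 := norm_nonneg r
  have h5 := norm_nonneg (a + r)
  have hk : 2 * ‖a‖ * ‖r‖ ≤ η * ‖a‖ ^ 2 + η⁻¹ * ‖r‖ ^ 2 := by
    have : 0 ≤ η⁻¹ * (η * ‖a‖ - ‖r‖) ^ 2 := by positivity
    have e : η⁻¹ * (η * ‖a‖ - ‖r‖) ^ 2 = η * ‖a‖ ^ 2 + η⁻¹ * ‖r‖ ^ 2 - 2 * ‖a‖ * ‖r‖ := by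
      field_simp; ring
    linarith
  have h6 : |‖a + r‖ - ‖a‖| ≤ ‖r‖ := by rw [abs_le]; constructor <;> linarith
  have h7 : |‖a + r‖ ^ 2 - ‖a‖ ^ 2| = |‖a + r‖ - ‖a‖| * (‖a + r‖ + ‖a‖) := by
    rw [sq_sub_sq, abs_mul, abs_of_nonneg (add_nonneg h5 h3), mul_comm]
  rw [h7]
  calc _ ≤ ‖r‖ * ((‖a‖ + ‖r‖) + ‖a‖) := by gcongr
    _ ≤ _ := by linarith

lemma rpow_neg_tendsto {a : ℝ} (ha : 0 < a) : Tendsto (fun p : ℕ => (p:ℝ) ^ (-a)) atTop (nhds 0) :=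
  (tendsto_rpow_neg_atTop ha).comp tendsto_natCast_atTop_atTop

theorem main_limit (t : ℝ) (k : ℕ) (hk : 0 < k) : Tendsto (fun p : ℕ =>
      if h : p.Prime then
        letI : NeZero p := ⟨h.pos.ne'⟩
        (1 / ((p : ℝ) - 1)) * ∑ χ : DirichletCharacter ℂ p, val t χ ^ (2 * k)
      else 0) (atTop ⊓ Filter.principal {p : ℕ | p.Prime}) (nhds (mom k)) := by
  obtain ⟨C, hC1, hC⟩ := total_diff t k hk
  set s : ℂ := 1 + t * I with hs
  obtain ⟨D, hD1, hD⟩ := mean_gm k hk (s := s) (by simp [hs])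
  set b : ℕ → ℝ := fun n => ((ArithmeticFunction.vonMangoldt ^ k) n / n) ^ 2 with hb
  have hpart : Tendsto (fun p : ℕ => ∑ m ∈ Finset.range p, b m) atTop (nhds (mom k)) :=
    (mom_summable k).hasSum.tendsto_sum_nat
  -- error function
  set err : ℕ → ℝ := fun p => (p:ℝ) ^ (-(1/8) : ℝ) * mom k + 2 * D ^ 2 * (p:ℝ) ^ (-(5/8) : ℝ) +
    2 * C * (p:ℝ) ^ (-(1/4) : ℝ) with herr
  have herr0 : Tendsto err atTop (nhds 0) := by
    have := (((rpow_neg_tendsto (a := 1/8) (by norm_num)).mul_const (mom k)).add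
      ((rpow_neg_tendsto (a := 5/8) (by norm_num)).const_mul (2 * D ^ 2))).add
      ((rpow_neg_tendsto (a := 1/4) (by norm_num)).const_mul (2 * C))
    simpa [herr] using this
  have hbound : ∀ (p : ℕ) [NeZero p], p.Prime → |(1 / ((p : ℝ) - 1)) *
      ∑ χ : DirichletCharacter ℂ p, val t χ ^ (2 * k) - ∑ m ∈ Finset.range p, b m| ≤ err p := by
    intro p _ hp
    have hp1 : (1:ℝ) ≤ p := by exact_mod_cast hp.one_le
    have hp2 : (2:ℝ) ≤ p := by exact_mod_cast hp.two_le
    have hp0 : (0:ℝ) < p := by linarith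
    have hpm : (0:ℝ) < (p:ℝ) - 1 := by linarith
    obtain ⟨R, hR, hsum⟩ := hD p hp
    have h1 := hC p hp
    rw [hsum] at h1
    set V := ∑ χ : DirichletCharacter ℂ p, val t χ ^ (2 * k)
    set S := ∑ m ∈ Finset.Icc 1 (p - 1), ‖(nL ^ k) m * (m:ℂ) ^ (-s) + R m‖ ^ 2
    have h2 : |1 / ((p:ℝ) - 1) * V - S| ≤ 2 * C * (p:ℝ) ^ (-(1/4) : ℝ) := by
      have : 1 / ((p:ℝ) - 1) * V - S = (1 / ((p:ℝ) - 1)) * (V - ((p:ℝ) - 1) * S) := by field_simp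
      rw [this, abs_mul, abs_of_pos (by positivity)]
      calc _ ≤ (2 / p) * (C * (p:ℝ) ^ (3/4 : ℝ)) := by
            have : 1 / ((p:ℝ) - 1) ≤ 2 / p := by rw [div_le_div_iff₀ hpm hp0]; linarith
            exact mul_le_mul this h1 (abs_nonneg _) (by positivity)
        _ = 2 * C * ((p:ℝ) ^ (3/4 : ℝ) / p) := by ring
        _ = _ := by rw [← Real.rpow_sub_one hp0.ne']; norm_num
    have hrange : ∑ m ∈ Finset.range p, b m = ∑ m ∈ Finset.Icc 1 (p - 1), ‖(nL ^ k) m * (m:ℂ) ^ (-s)‖ ^ 2 := by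
      have e : Finset.range p = insert 0 (Finset.Icc 1 (p - 1)) := by
        ext m; have := hp.pos; simp; omega
      rw [e, Finset.sum_insert (by simp)]
      have : b 0 = 0 := by simp [hb]
      rw [this, zero_add]
      refine Finset.sum_congr rfl fun m hm => ?_
      have hm1 := (Finset.mem_Icc.1 hm).1
      rw [norm_mul, norm_nL_pow, Complex.norm_natCast_cpow_of_pos hm1, neg_re]
      simp [hs, hb, Real.rpow_neg_one, div_eq_mul_inv]
    have hmom : ∑ m ∈ Finset.range p, b m ≤ mom k :=
      (mom_summable k).sum_le_tsum _ (fun _ _ => by positivity)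
    have h3 : |S - ∑ m ∈ Finset.range p, b m| ≤ (p:ℝ) ^ (-(1/8) : ℝ) * mom k + 2 * D ^ 2 * (p:ℝ) ^ (-(5/8) : ℝ) := by
      set η : ℝ := (p:ℝ) ^ (-(1/8) : ℝ) with hη
      have hη0 : 0 < η := by positivity
      have hηi : η⁻¹ = (p:ℝ) ^ (1/8 : ℝ) := by rw [hη, ← Real.rpow_neg hp0.le]; norm_num
      have hηi1 : 1 ≤ η⁻¹ := by rw [hηi]; exact Real.one_le_rpow hp1 (by norm_num)
      rw [hrange, ← Finset.sum_sub_distrib]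
      refine (Finset.abs_sum_le_sum_abs _ _).trans ((Finset.sum_le_sum fun m _ => sq_pert _ _ hη0).trans ?_)
      rw [Finset.sum_add_distrib, ← Finset.mul_sum, ← hrange, ← Finset.mul_sum]
      have hRs : ∑ m ∈ Finset.Icc 1 (p - 1), ‖R m‖ ^ 2 ≤ p * (D * (p:ℝ) ^ (-(7/8) : ℝ)) ^ 2 := by
        calc _ ≤ ∑ m ∈ Finset.Icc 1 (p - 1), (D * (p:ℝ) ^ (-(7/8) : ℝ)) ^ 2 := by
              refine Finset.sum_le_sum fun m hm => ?_
              have := hR m hm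
              gcongr
          _ = ((p - 1 + 1 - 1 : ℕ) : ℝ) * (D * (p:ℝ) ^ (-(7/8) : ℝ)) ^ 2 := by
              rw [Finset.sum_const, Nat.card_Icc, nsmul_eq_mul]
          _ ≤ _ := by
              gcongr; omega
      calc _ ≤ η * mom k + (2 * η⁻¹) * (p * (D * (p:ℝ) ^ (-(7/8) : ℝ)) ^ 2) := by
            gcongr; linarith
        _ = η * mom k + 2 * D ^ 2 * ((p:ℝ) ^ (1/8 : ℝ) * ((p:ℝ) ^ (1 : ℝ) * ((p:ℝ) ^ (-(7/8) : ℝ) * (p:ℝ) ^ (-(7/8) : ℝ)))) := by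
            rw [hηi, Real.rpow_one]; ring
        _ = _ := by
            rw [← Real.rpow_add hp0, ← Real.rpow_add hp0, ← Real.rpow_add hp0]; norm_num
    have h4 : 1 / ((p:ℝ) - 1) * V - ∑ m ∈ Finset.range p, b m =
      (1 / ((p:ℝ) - 1) * V - S) + (S - ∑ m ∈ Finset.range p, b m) := by ring
    rw [h4]
    refine (abs_add_le _ _).trans ?_
    rw [herr]; simp only; linarith
  have hle : (atTop ⊓ Filter.principal {p : ℕ | p.Prime}) ≤ (atTop : Filter ℕ) := inf_le_left
  have key : Tendsto (fun p : ℕ => (if h : p.Prime then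
        letI : NeZero p := ⟨h.pos.ne'⟩
        (1 / ((p : ℝ) - 1)) * ∑ χ : DirichletCharacter ℂ p, val t χ ^ (2 * k)
      else 0) - ∑ m ∈ Finset.range p, b m) (atTop ⊓ Filter.principal {p : ℕ | p.Prime}) (nhds 0) := by
    refine squeeze_zero_norm' ?_ (herr0.mono_left hle)
    have hmem : {p : ℕ | p.Prime} ∈ (atTop ⊓ Filter.principal {p : ℕ | p.Prime} : Filter ℕ) :=
      mem_inf_of_right (mem_principal_self _)
    filter_upwards [hmem] with p hp
    have hp : p.Prime := hp
    have : NeZero p := ⟨hp.pos.ne'⟩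
    rw [dif_pos hp, Real.norm_eq_abs]
    exact hbound p hp
  have := key.add (hpart.mono_left hle)
  simpa using this

end final

end LD


namespace LD

section existence

/-- truncated power -/
noncomputable def trunc (k R : ℕ) : BoundedContinuousFunction ℝ ℝ :=
  BoundedContinuousFunction.ofNormedAddCommGroup (fun v : ℝ => min ((max v 0) ^ k) (R:ℝ))
    (by fun_prop) R (fun v => by
      rw [Real.norm_of_nonneg (by positivity)]; exact min_le_right _ _)

lemma trunc_apply (k R : ℕ) (v : ℝ) : trunc k R v = min ((max v 0) ^ k) (R:ℝ) := rfl

lemma exists_limit {F : Filter ℕ} [NeBot F] (ν : ℕ → ProbabilityMeasure ℝ) (m : ℕ → ℝ)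
    (h0 : ∀ i, (ν i : Measure ℝ) (Set.Iio 0) = 0)
    (hIntg : ∀ i k, Integrable (fun v : ℝ => v ^ k) (ν i : Measure ℝ))
    (hlim : ∀ k, 0 < k → Tendsto (fun i => ∫ v, v ^ k ∂(ν i : Measure ℝ)) F (nhds (m k))) :
    ∃ μ : Measure ℝ, IsProbabilityMeasure μ ∧ μ (Set.Iio 0) = 0 ∧
      ∀ k, 0 < k → ∫ v in Set.Ici (0:ℝ), v ^ k ∂μ = m k := by
  have hpos : ∀ i, ∀ᵐ v ∂(ν i : Measure ℝ), 0 ≤ v := by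
    intro i
    rw [ae_iff]; convert h0 i using 2; ext v; simp
  have hm0 : ∀ k, 0 < k → 0 ≤ m k := by
    intro k hk
    refine ge_of_tendsto' (hlim k hk) fun i => integral_nonneg_of_ae ?_
    filter_upwards [hpos i] with v hv using pow_nonneg hv k
  set B : ℝ := m 1 + 1 with hB
  have hB0 : 0 < B := by linarith [hm0 1 one_pos]
  set u : ℕ → NNReal := fun n => Real.toNNReal (B / (n + 1)) with hu
  have hu0 : Tendsto u atTop (nhds 0) := by
    have h1 : Tendsto (fun n : ℕ => B / ((n:ℝ) + 1)) atTop (nhds 0) := by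
      have := (tendsto_one_div_add_atTop_nhds_zero_nat (𝕜 := ℝ)).const_mul B
      simpa [div_eq_mul_inv] using this
    have := (continuous_real_toNNReal.tendsto 0).comp h1
    rw [Real.toNNReal_zero] at this
    exact this
  have hcomp := isCompact_setOfPred_probabilityMeasure_mass_eq_compl_isCompact_le (E := ℝ) (u := u)
    (K := fun n => Set.Icc (0:ℝ) (n + 1)) hu0 (fun n => isCompact_Icc) (Or.inl inferInstance)
  have hev : ∀ᶠ i in F, ν i ∈ {μ : ProbabilityMeasure ℝ | ∀ n : ℕ, μ (Set.Icc (0:ℝ) (n + 1))ᶜ ≤ u n} := by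
    have h1 := (hlim 1 one_pos).eventually (gt_mem_nhds (show m 1 < B by linarith))
    filter_upwards [h1] with i hi n
    have hn : (0:ℝ) < n + 1 := by positivity
    have hmk := mul_meas_ge_le_integral_of_nonneg (μ := (ν i : Measure ℝ)) (f := fun v : ℝ => v ^ 1)
      (by filter_upwards [hpos i] with v hv using pow_nonneg hv 1) (hIntg i 1) ((n:ℝ) + 1)
    have h2 : (ν i : Measure ℝ) (Set.Icc (0:ℝ) (n + 1))ᶜ ≤ (ν i : Measure ℝ) {x | (n:ℝ) + 1 ≤ x ^ 1} := by
      refine measure_mono_ae ?_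
      filter_upwards [hpos i] with v hv hv2
      have hv2 : ¬ (0 ≤ v ∧ v ≤ n + 1) := hv2
      show (n:ℝ) + 1 ≤ v ^ 1
      rw [pow_one]
      by_contra hc
      exact hv2 ⟨hv, by linarith⟩
    have h3 : (ν i : Measure ℝ).real {x | (n:ℝ) + 1 ≤ x ^ 1} ≤ B / (n + 1) := by
      rw [le_div_iff₀ hn, mul_comm]; linarith
    have h4 : (ν i : Measure ℝ).real (Set.Icc (0:ℝ) (n + 1))ᶜ ≤ B / (n + 1) :=
      le_trans (ENNReal.toReal_mono (measure_ne_top _ _) h2) h3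
    rw [hu, ← NNReal.coe_le_coe, Real.coe_toNNReal _ (by positivity)]
    exact h4
  set U : Ultrafilter ℕ := Ultrafilter.of F with hU
  have hUF : (U : Filter ℕ) ≤ F := Ultrafilter.of_le F
  obtain ⟨μ, -, hμ⟩ := hcomp.ultrafilter_le_nhds (U.map ν) (by
    rw [le_principal_iff]; exact hUF hev)
  have hT : Tendsto ν U (nhds μ) := hμ
  have hTi : ∀ g : BoundedContinuousFunction ℝ ℝ, Tendsto (fun i => ∫ v, g v ∂(ν i : Measure ℝ)) U
      (nhds (∫ v, g v ∂(μ : Measure ℝ))) := fun g =>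
    (ProbabilityMeasure.tendsto_iff_forall_integral_tendsto.1 hT) g
  have hμ0 : (μ : Measure ℝ) (Set.Iio 0) = 0 := by
    have := ProbabilityMeasure.le_liminf_measure_open_of_tendsto hT (isOpen_Iio (a := (0:ℝ)))
    simp only [h0] at this
    simpa using this
  have hμpos : ∀ᵐ v ∂(μ : Measure ℝ), 0 ≤ v := by
    rw [ae_iff]; convert hμ0 using 2; ext v; simp
  refine ⟨μ, inferInstance, hμ0, fun k hk => ?_⟩
  -- truncated bounds
  have hb : ∀ R : ℕ, 0 < R → m k - m (2 * k) / R ≤ ∫ v, trunc k R v ∂(μ : Measure ℝ) ∧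
      ∫ v, trunc k R v ∂(μ : Measure ℝ) ≤ m k := by
    intro R hR
    have hR0 : (0:ℝ) < R := by exact_mod_cast hR
    constructor
    · refine le_of_tendsto_of_tendsto' (((hlim k hk).mono_left hUF).sub
        (((hlim (2 * k) (by omega)).mono_left hUF).div_const (R:ℝ))) (hTi (trunc k R)) fun i => ?_
      rw [← integral_div, ← integral_sub (hIntg i k) ((hIntg i (2 * k)).div_const _)]
      refine integral_mono_ae ((hIntg i k).sub ((hIntg i (2 * k)).div_const _)) ((trunc k R).integrable _) ?_
      filter_upwards [hpos i] with v hv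
      simp only [trunc_apply, max_eq_left hv]
      rw [le_min_iff]
      have hvk : 0 ≤ v ^ k := pow_nonneg hv k
      have e : v ^ (2 * k) = v ^ k * v ^ k := by rw [← pow_add]; congr 1; omega
      rw [e]
      constructor
      · have : 0 ≤ v ^ k * v ^ k / R := by positivity
        linarith
      · rw [sub_le_iff_le_add, ← sub_le_iff_le_add', le_div_iff₀ hR0]
        nlinarith [sq_nonneg (v ^ k - R)]
    · refine le_of_tendsto_of_tendsto' (hTi (trunc k R)) ((hlim k hk).mono_left hUF) fun i => ?_
      refine integral_mono_ae ((trunc k R).integrable _) (hIntg i k) ?_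
      filter_upwards [hpos i] with v hv
      simp only [trunc_apply, max_eq_left hv]
      exact min_le_left _ _
  have hlimR : Tendsto (fun R : ℕ => ∫ v, trunc k R v ∂(μ : Measure ℝ)) atTop (nhds (m k)) := by
    have h1 : Tendsto (fun R : ℕ => m k - m (2 * k) / R) atTop (nhds (m k)) := by
      have := (tendsto_const_div_atTop_nhds_zero_nat (m (2 * k))).const_sub (m k)
      simpa using this
    refine tendsto_of_tendsto_of_tendsto_of_le_of_le' h1 tendsto_const_nhds ?_ ?_
    · filter_upwards [eventually_gt_atTop 0] with R hR using (hb R hR).1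
    · filter_upwards [eventually_gt_atTop 0] with R hR using (hb R hR).2
  have hmct := lintegral_tendsto_of_tendsto_of_monotone (μ := (μ : Measure ℝ))
    (f := fun R v => ENNReal.ofReal (trunc k R v)) (F := fun v => ENNReal.ofReal ((max v 0) ^ k))
    (fun R => ((trunc k R).continuous.measurable.ennreal_ofReal).aemeasurable)
    (ae_of_all _ fun v R R' hRR => by
      apply ENNReal.ofReal_le_ofReal
      rw [trunc_apply, trunc_apply]
      gcongr)
    (ae_of_all _ fun v => by
      refine tendsto_const_nhds.congr' ?_
      obtain ⟨R0, hR0⟩ := exists_nat_ge ((max v 0) ^ k)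
      filter_upwards [eventually_ge_atTop R0] with R hR
      rw [trunc_apply, min_eq_left]
      exact hR0.trans (by exact_mod_cast hR))
  have hmct2 : Tendsto (fun R : ℕ => ∫⁻ v, ENNReal.ofReal (trunc k R v) ∂(μ : Measure ℝ)) atTop
      (nhds (ENNReal.ofReal (m k))) := by
    refine (ENNReal.tendsto_ofReal hlimR).congr fun R => ?_
    rw [ofReal_integral_eq_lintegral_ofReal ((trunc k R).integrable _)]
    exact ae_of_all _ fun v => by
      show 0 ≤ trunc k R v
      rw [trunc_apply]; positivity
  have heq := tendsto_nhds_unique hmct hmct2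
  have hres : (μ : Measure ℝ).restrict (Set.Ici 0) = (μ : Measure ℝ) :=
    Measure.restrict_eq_self_of_ae_mem hμpos
  rw [hres]
  have : ∫ v, v ^ k ∂(μ : Measure ℝ) = ∫ v, (max v 0) ^ k ∂(μ : Measure ℝ) := by
    refine integral_congr_ae ?_
    filter_upwards [hμpos] with v hv
    rw [max_eq_left hv]
  rw [this, integral_eq_lintegral_of_nonneg_ae (ae_of_all _ fun v => by positivity)
    (by fun_prop), heq, ENNReal.toReal_ofReal (hm0 k hk)]

end existence

section uniqueness

/-- symmetrised measure -/
noncomputable def symMeas (μ : Measure ℝ) : Measure ℝ :=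
  μ.map (fun v => Real.sqrt v) + μ.map (fun v => -Real.sqrt v)

lemma ae_nonneg_of {μ : Measure ℝ} (h0 : μ (Set.Iio 0) = 0) : ∀ᵐ v ∂μ, 0 ≤ v := by
  rw [ae_iff]; convert h0 using 2; ext v; simp

lemma exp_integrable {μ : Measure ℝ} [IsProbabilityMeasure μ] (h0 : μ (Set.Iio 0) = 0) {m : ℕ → ℝ} {B : ℝ}
    (hB : ∀ k, m k ≤ B * (4 ^ k * (2 * k).factorial))
    (hIntg : ∀ k, Integrable (fun v : ℝ => v ^ k) μ) (hm : ∀ k, ∫ v, v ^ k ∂μ = m k) :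
    Integrable (fun v => Real.cosh (1/4 * Real.sqrt v)) μ := by
  have hpos := ae_nonneg_of h0
  have hc : ∀ᵐ v ∂μ, ENNReal.ofReal (Real.cosh (1/4 * Real.sqrt v)) =
      ∑' k : ℕ, ENNReal.ofReal ((1/16) ^ k / (2 * k).factorial * v ^ k) := by
    filter_upwards [hpos] with v hv
    have hs := Real.hasSum_cosh (1/4 * Real.sqrt v)
    have e : (fun n : ℕ => (1/4 * Real.sqrt v) ^ (2 * n) / ((2 * n).factorial : ℝ)) =
      fun k : ℕ => (1/16) ^ k / (2 * k).factorial * v ^ k := by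
      ext k
      rw [pow_mul, mul_pow, Real.sq_sqrt hv, mul_pow]; ring
    rw [e] at hs
    rw [← hs.tsum_eq, ENNReal.ofReal_tsum_of_nonneg _ hs.summable]
    intro k; positivity
  refine ⟨by fun_prop, ?_⟩
  rw [hasFiniteIntegral_iff_ofReal (ae_of_all _ fun v => (Real.cosh_pos _).le), lintegral_congr_ae hc,
    lintegral_tsum (fun k => by fun_prop)]
  have hk : ∀ k, ∫⁻ v, ENNReal.ofReal ((1/16) ^ k / (2 * k).factorial * v ^ k) ∂μ ≤
      ENNReal.ofReal (B * (1/4) ^ k) := by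
    intro k
    rw [← ofReal_integral_eq_lintegral_ofReal ((hIntg k).const_mul _)
      (by filter_upwards [hpos] with v hv using by positivity), integral_const_mul, hm]
    apply ENNReal.ofReal_le_ofReal
    have hf : (0:ℝ) < (2 * k).factorial := by positivity
    calc _ ≤ (1/16) ^ k / (2 * k).factorial * (B * (4 ^ k * (2 * k).factorial)) := by
          gcongr; exact hB k
      _ = B * ((1/16) ^ k * 4 ^ k) := by field_simp
      _ = _ := by rw [← mul_pow]; norm_num
  have hB0 : 0 ≤ B := by
    have h1 := hB 0
    have h2 := hm 0
    simp at h1 h2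
    linarith
  refine lt_of_le_of_lt (ENNReal.tsum_le_tsum hk) ?_
  rw [← ENNReal.ofReal_tsum_of_nonneg (fun k => by positivity)
    ((summable_geometric_of_lt_one (by norm_num) (by norm_num)).mul_left B)]
  exact ENNReal.ofReal_lt_top

end uniqueness

end LD


namespace LD

lemma sym_exp {μ : Measure ℝ} (hc : Integrable (fun v => Real.cosh (1/4 * √v)) μ) {t : ℝ}
    (ht : |t| ≤ 1/4) : t ∈ ProbabilityTheory.integrableExpSet id (symMeas μ) := by
  show Integrable (fun x : ℝ => Real.exp (t * id x)) (symMeas μ)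
  have key : ∀ s : ℝ, |s| ≤ 1/4 → Integrable (fun v => Real.exp (s * √v)) μ := by
    intro s hs
    refine (hc.const_mul 2).mono' (by fun_prop) (ae_of_all _ fun v => ?_)
    rw [Real.norm_of_nonneg (Real.exp_pos _).le, Real.cosh_eq]
    have h1 : s * √v ≤ 1/4 * √v :=
      mul_le_mul_of_nonneg_right ((le_abs_self s).trans hs) (Real.sqrt_nonneg v)
    have h2 := Real.exp_le_exp.2 h1
    have h3 := Real.exp_pos (-(1/4 * √v))
    linarith
  unfold symMeas
  rw [integrable_add_measure]
  constructor
  · rw [integrable_map_measure (by fun_prop) (by fun_prop)]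
    exact key t ht
  · rw [integrable_map_measure (by fun_prop) (by fun_prop)]
    refine (key (-t) (by simpa using ht)).congr (ae_of_all _ fun v => ?_)
    simp

lemma sym_interior {μ : Measure ℝ} (hc : Integrable (fun v => Real.cosh (1/4 * √v)) μ) {t : ℝ}
    (ht : |t| < 1/4) : t ∈ interior (ProbabilityTheory.integrableExpSet id (symMeas μ)) := by
  rw [mem_interior]
  refine ⟨{t | |t| < 1/4}, fun s hs => sym_exp hc (le_of_lt hs),
    isOpen_lt continuous_abs continuous_const, ht⟩

lemma sym_mom {μ : Measure ℝ} (h0 : μ (Set.Iio 0) = 0)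
    (hc : Integrable (fun v => Real.cosh (1/4 * √v)) μ) (n : ℕ) :
    iteratedDeriv n (ProbabilityTheory.complexMGF id (symMeas μ)) 0 =
      if Even n then ((2 * ∫ v, v ^ (n/2) ∂μ : ℝ) : ℂ) else 0 := by
  have hz : (0:ℂ).re ∈ interior (ProbabilityTheory.integrableExpSet id (symMeas μ)) :=
    sym_interior hc (by norm_num)
  rw [ProbabilityTheory.iteratedDeriv_complexMGF hz]
  have hI : Integrable (fun x : ℝ => (id x) ^ n) (symMeas μ) :=
    ProbabilityTheory.integrable_pow_of_mem_interior_integrableExpSet (X := id) hz n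
  have h1 : ∫ x, ((id x : ℝ) : ℂ) ^ n * cexp (0 * ((id x : ℝ) : ℂ)) ∂(symMeas μ)
      = ((∫ x, x ^ n ∂(symMeas μ) : ℝ) : ℂ) := by
    rw [← integral_complex_ofReal]
    congr 1; ext x; simp
  rw [h1]
  have h2 := hI
  unfold symMeas at h2 ⊢
  rw [integrable_add_measure] at h2
  simp only [id] at h2
  rw [integral_add_measure h2.1 h2.2, integral_map (by fun_prop) (by fun_prop),
    integral_map (by fun_prop) (by fun_prop)]
  split_ifs with hn
  · obtain ⟨j, rfl⟩ := hn
    have hj : (j + j) / 2 = j := by omega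
    have e1 : ∫ v, √v ^ (j + j) ∂μ = ∫ v, v ^ j ∂μ := by
      refine integral_congr_ae ?_
      filter_upwards [ae_nonneg_of h0] with v hv
      rw [← two_mul, pow_mul, Real.sq_sqrt hv]
    have e2 : ∫ v, (-√v) ^ (j + j) ∂μ = ∫ v, v ^ j ∂μ := by
      rw [← e1]; congr 1; ext v; exact Even.neg_pow ⟨j, rfl⟩ _
    rw [e1, e2, hj, two_mul]
  · have hn := Nat.not_even_iff_odd.1 hn
    have e2 : ∫ v, (-√v) ^ n ∂μ = - ∫ v, √v ^ n ∂μ := by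
      rw [← integral_neg]; congr 1; ext v; exact hn.neg_pow _
    rw [e2]; simp

lemma sym_sq {μ : Measure ℝ} (h0 : μ (Set.Iio 0) = 0) :
    (symMeas μ).map (fun x => x ^ 2) = (2:ENNReal) • μ := by
  unfold symMeas
  rw [Measure.map_add _ _ (by fun_prop), Measure.map_map (by fun_prop) (by fun_prop),
    Measure.map_map (by fun_prop) (by fun_prop)]
  have e1 : μ.map ((fun x : ℝ => x ^ 2) ∘ fun v => √v) = μ := by
    conv_rhs => rw [← Measure.map_id (μ := μ)]
    refine Measure.map_congr ?_
    filter_upwards [ae_nonneg_of h0] with v hv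
    simp [Real.sq_sqrt hv]
  have e2 : μ.map ((fun x : ℝ => x ^ 2) ∘ fun v => -√v) = μ := by
    conv_rhs => rw [← Measure.map_id (μ := μ)]
    refine Measure.map_congr ?_
    filter_upwards [ae_nonneg_of h0] with v hv
    simp [Real.sq_sqrt hv]
  rw [e1, e2, two_smul]

lemma unique_aux {μ μ' : Measure ℝ} [IsProbabilityMeasure μ] [IsProbabilityMeasure μ']
    (h0 : μ (Set.Iio 0) = 0) (h0' : μ' (Set.Iio 0) = 0)
    (hc : Integrable (fun v => Real.cosh (1/4 * √v)) μ)
    (hc' : Integrable (fun v => Real.cosh (1/4 * √v)) μ')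
    (hm : ∀ k : ℕ, ∫ v, v ^ k ∂μ = ∫ v, v ^ k ∂μ') : μ = μ' := by
  haveI : IsFiniteMeasure (symMeas μ) := by unfold symMeas; infer_instance
  haveI : IsFiniteMeasure (symMeas μ') := by unfold symMeas; infer_instance
  set f := ProbabilityTheory.complexMGF id (symMeas μ) with hf
  set g := ProbabilityTheory.complexMGF id (symMeas μ') with hg
  set U : Set ℂ := {z | |z.re| < 1/4} with hU
  have hfa : AnalyticOnNhd ℂ f U := fun z hz =>
    ProbabilityTheory.analyticAt_complexMGF (sym_interior hc hz)
  have hga : AnalyticOnNhd ℂ g U := fun z hz =>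
    ProbabilityTheory.analyticAt_complexMGF (sym_interior hc' hz)
  have h0U : (0:ℂ) ∈ U := by simp [hU]
  have hconv : Convex ℝ U := by
    have : U = Complex.reLm ⁻¹' Set.Ioo (-(1/4)) (1/4) := by
      ext z; simp [hU, abs_lt]
    rw [this]
    exact (convex_Ioo _ _).linear_preimage _
  have hev : f =ᶠ[nhds 0] g := by
    have han : AnalyticAt ℂ (f - g) 0 := (hfa 0 h0U).sub (hga 0 h0U)
    have htop : analyticOrderAt (f - g) 0 = ⊤ := by
      rw [ENat.eq_top_iff_forall_ge]
      intro n
      rw [natCast_le_analyticOrderAt_iff_iteratedDeriv_eq_zero han]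
      intro i _
      rw [iteratedDeriv_sub (hfa 0 h0U).contDiffAt (hga 0 h0U).contDiffAt, hf, hg,
        sym_mom h0 hc, sym_mom h0' hc', hm, sub_self]
    rw [analyticOrderAt_eq_top] at htop
    filter_upwards [htop] with z hz
    exact sub_eq_zero.1 hz
  have heq := hfa.eqOn_of_preconnected_of_eventuallyEq hga hconv.isPreconnected h0U hev
  have hs : symMeas μ = symMeas μ' := by
    refine Measure.ext_of_charFun ?_
    ext t
    rw [← ProbabilityTheory.complexMGF_id_mul_I, ← ProbabilityTheory.complexMGF_id_mul_I]
    exact heq (by simp [hU])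
  have h2 : (2:ENNReal) • μ = (2:ENNReal) • μ' := by
    rw [← sym_sq h0, ← sym_sq h0', hs]
  ext s hsm
  have := congrArg (fun ν : Measure ℝ => ν s) h2
  simp only [Measure.smul_apply, smul_eq_mul] at this
  exact (ENNReal.mul_right_inj (by norm_num) (by norm_num)).1 this

lemma mom_data {μ : Measure ℝ} [IsProbabilityMeasure μ] (h0 : μ (Set.Iio 0) = 0)
    (h : ∀ k, 0 < k → ∫ v in Set.Ici (0:ℝ), v ^ k ∂μ = mom k) :
    Integrable (fun v => Real.cosh (1/4 * √v)) μ ∧ ∀ k, 0 < k → ∫ v, v ^ k ∂μ = mom k := by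
  have hr : μ.restrict (Set.Ici 0) = μ := Measure.restrict_eq_self_of_ae_mem (ae_nonneg_of h0)
  rw [hr] at h
  refine ⟨?_, h⟩
  obtain ⟨B, hB0, hB⟩ := mom_bound
  refine exp_integrable h0 (m := fun k => ∫ v, v ^ k ∂μ) (B := max B 1) ?_ ?_ (fun k => rfl)
  · intro k
    rcases Nat.eq_zero_or_pos k with rfl | hk
    · simp
    · simp only [h k hk]
      exact (hB k).trans (mul_le_mul_of_nonneg_right (le_max_left _ _) (by positivity))
  · intro k
    rcases Nat.eq_zero_or_pos k with rfl | hk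
    · simp
    · exact Integrable.of_integral_ne_zero (by rw [h k hk]; exact (mom_pos k).ne')

lemma unique_meas {μ μ' : Measure ℝ} [IsProbabilityMeasure μ] [IsProbabilityMeasure μ']
    (h0 : μ (Set.Iio 0) = 0) (h0' : μ' (Set.Iio 0) = 0)
    (h : ∀ k, 0 < k → ∫ v in Set.Ici (0:ℝ), v ^ k ∂μ = mom k)
    (h' : ∀ k, 0 < k → ∫ v in Set.Ici (0:ℝ), v ^ k ∂μ' = mom k) : μ = μ' := by
  obtain ⟨a, b⟩ := mom_data h0 h
  obtain ⟨a', b'⟩ := mom_data h0' h'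
  refine unique_aux h0 h0' a a' fun k => ?_
  rcases Nat.eq_zero_or_pos k with rfl | hk
  · simp
  · rw [b k hk, b' k hk]

/-- empirical measure -/
noncomputable def emp {α : Type} [Fintype α] (f : α → ℝ) : Measure ℝ :=
  (Fintype.card α : ENNReal)⁻¹ • ∑ a, Measure.dirac (f a)

lemma emp_prob {α : Type} [Fintype α] [Nonempty α] (f : α → ℝ) : IsProbabilityMeasure (emp f) := by
  constructor
  simp only [emp, Measure.smul_apply, Measure.finsetSum_apply, measure_univ, Finset.sum_const,
    Finset.card_univ, nsmul_eq_mul, mul_one, smul_eq_mul]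
  exact ENNReal.inv_mul_cancel (by simp) (by simp)

lemma emp_neg {α : Type} [Fintype α] (f : α → ℝ) (hf : ∀ a, 0 ≤ f a) : emp f (Set.Iio 0) = 0 := by
  simp [emp, Measure.finsetSum_apply, hf]

lemma emp_int {α : Type} [Fintype α] [Nonempty α] (f : α → ℝ) (k : ℕ) :
    Integrable (fun v : ℝ => v ^ k) (emp f) := by
  refine Integrable.smul_measure ?_ (by simp)
  rw [integrable_finsetSum_measure]
  intro a _
  exact integrable_dirac (by simp)

lemma emp_integral {α : Type} [Fintype α] (f : α → ℝ) (k : ℕ) :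
    ∫ v, v ^ k ∂(emp f) = 1 / (Fintype.card α : ℝ) * ∑ a, f a ^ k := by
  rw [emp, integral_smul_measure, integral_finsetSum_measure]
  · simp
  · intro a _
    exact integrable_dirac (by simp)

/-- the empirical measures of the squared logarithmic derivatives -/
noncomputable def empP (t : ℝ) (p : ℕ) : Measure ℝ :=
  if h : p.Prime then
    letI : NeZero p := ⟨h.pos.ne'⟩
    emp (fun χ : DirichletCharacter ℂ p => val t χ ^ 2)
  else Measure.dirac 0

lemma empP_prob (t : ℝ) (p : ℕ) : IsProbabilityMeasure (empP t p) := by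
  unfold empP
  split_ifs with h
  · letI : NeZero p := ⟨h.pos.ne'⟩
    exact emp_prob _
  · infer_instance

lemma primes_neBot : NeBot (atTop ⊓ Filter.principal {p : ℕ | p.Prime}) := by
  rw [← frequently_mem_iff_neBot]
  exact Nat.frequently_atTop_iff_infinite.2 Nat.infinite_setOf_prime

lemma exists_meas (t : ℝ) : ∃ μ : Measure ℝ, IsProbabilityMeasure μ ∧ μ (Set.Iio 0) = 0 ∧
      ∀ k, 0 < k → ∫ v in Set.Ici (0:ℝ), v ^ k ∂μ = mom k := by
  haveI := primes_neBot
  refine exists_limit (F := atTop ⊓ Filter.principal {p : ℕ | p.Prime})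
    (fun p => ⟨empP t p, empP_prob t p⟩) mom ?_ ?_ ?_
  · intro p
    show empP t p (Set.Iio 0) = 0
    unfold empP
    split_ifs with h
    · letI : NeZero p := ⟨h.pos.ne'⟩
      exact emp_neg _ fun χ => sq_nonneg _
    · simp
  · intro p k
    show Integrable _ (empP t p)
    unfold empP
    split_ifs with h
    · letI : NeZero p := ⟨h.pos.ne'⟩
      exact emp_int _ k
    · exact integrable_dirac (by simp)
  · intro k hk
    refine (main_limit t k hk).congr fun p => ?_
    show _ = ∫ v, v ^ k ∂(empP t p)
    unfold empP
    split_ifs with h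
    · letI : NeZero p := ⟨h.pos.ne'⟩
      rw [emp_integral, ← card_char h, Finset.card_univ]
      congr 1
      refine Finset.sum_congr rfl fun χ _ => ?_
      rw [← pow_mul]
    · simp [hk.ne']

end LD

/-- There is a unique probability measure `μ = μ(t₀)` on `[0,∞)` such that for every positive
integer `k`, the averages `(1/(p−1)) Σ'_{χ mod p} |L'(1+it₀,χ)/L(1+it₀,χ)|^{2k}` converge, as
`p → ∞` through primes, to `∫_0^∞ v^k dμ(v)`; the sum runs over all Dirichlet characters
`χ` modulo the prime `p`, omitting the principal character when `t₀ = 0`. -/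
theorem stmt_2 (t₀ : ℝ) :
    ∃! μ : Measure ℝ,
      IsProbabilityMeasure μ ∧ μ (Set.Iio 0) = 0 ∧
      ∀ k : ℕ, 0 < k →
        Tendsto
          (fun p : ℕ =>
            if h : p.Prime then
              letI : NeZero p := ⟨h.pos.ne'⟩
              (1 / ((p : ℝ) - 1)) *
                ∑ χ : DirichletCharacter ℂ p,
                  if t₀ = 0 ∧ χ = 1 then 0 else
                    ‖deriv (DirichletCharacter.LFunction χ) (1 + t₀ * I) /
                        DirichletCharacter.LFunction χ (1 + t₀ * I)‖ ^ (2 * k)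
            else 0)
          (atTop ⊓ Filter.principal {p : ℕ | p.Prime})
          (nhds (∫ v in Set.Ici (0 : ℝ), v ^ k ∂μ)) := by
  haveI := LD.primes_neBot
  have hL : ∀ k : ℕ, 0 < k →
        Tendsto
          (fun p : ℕ =>
            if h : p.Prime then
              letI : NeZero p := ⟨h.pos.ne'⟩
              (1 / ((p : ℝ) - 1)) *
                ∑ χ : DirichletCharacter ℂ p,
                  if t₀ = 0 ∧ χ = 1 then 0 else
                    ‖deriv (DirichletCharacter.LFunction χ) (1 + t₀ * I) /
                        DirichletCharacter.LFunction χ (1 + t₀ * I)‖ ^ (2 * k)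
            else 0)
          (atTop ⊓ Filter.principal {p : ℕ | p.Prime})
          (nhds (LD.mom k)) := by
    intro k hk
    refine (LD.main_limit t₀ k hk).congr fun p => ?_
    by_cases h : p.Prime
    · simp only [dif_pos h]
      congr 1
      refine Finset.sum_congr rfl fun χ _ => ?_
      unfold LD.val
      by_cases hc : t₀ = 0 ∧ χ = 1
      · rw [if_pos hc, if_pos hc, zero_pow (by omega)]
      · rw [if_neg hc, if_neg hc]
    · simp only [dif_neg h]
  obtain ⟨μ, hμ, hμ0, hμk⟩ := LD.exists_meas t₀
  refine ⟨μ, ⟨hμ, hμ0, fun k hk => ?_⟩, ?_⟩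
  · rw [hμk k hk]; exact hL k hk
  · rintro μ' ⟨hμ', hμ0', hk'⟩
    exact LD.unique_meas hμ0' hμ0 (fun k hk => tendsto_nhds_unique (hk' k hk) (hL k hk)) hμk
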